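/- There exists ε₀ > 0 such that for every 0 < ε ≤ ε₀ the following holds. Let X̃_ε = {(x, ℓ) ∈ B̄(0,ε) × ℝP¹ : f(x) ∈ ℓ} (the real blow-up of V inside the closed ball), topologized as a subspace of the product. Then the second projection Ψ̃ : X̃_ε → ℝP¹ is a locally trivial fibration, and for every θ ∈ ℝ its fibre over the line L_θ equals (X_θ ∩ B̄(0,ε)) × {L_θ}. -/

import Mathlib

open scoped LinearAlgebra.Projectivization

/-- `p : Z → B` is a locally trivial fibration (with some fibre `F`). -/
def IsLocTrivFib {Z B : Type} [TopologicalSpace Z] [TopologicalSpace B] (p : Z → B) : Prop :=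
  ∃ (F : Type) (_ : TopologicalSpace F), Continuous p ∧
    ∀ b : B, ∃ W : Set B, IsOpen W ∧ b ∈ W ∧
      ∃ e : (p ⁻¹' W) ≃ₜ (W × F), ∀ z : (p ⁻¹' W), ((e z).1 : B) = p (z : Z)

/-- The member `X_θ` of the canonical pencil of `f`. -/
def Xset {α : Type} (U : Set α) (f : α → ℂ) (θ : ℝ) : Set α :=
  {x ∈ U | ∃ t : ℝ, f x = t * Complex.exp (θ * Complex.I)}

/-- The real projective line `ℝP¹ = ℙ ℝ ℂ` carries the quotient topology. -/
noncomputable instance : TopologicalSpace (ℙ ℝ ℂ) :=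
  inferInstanceAs (TopologicalSpace (Quotient _))

/-!
The fibration is trivialized over small arcs of `ℝP¹` by the flow of a vector field `v` on a small
ball which is tangent to the spheres around `0`, turns the argument of `f` at unit speed, and tends
to `0` at the zero set `V` of `f`. Its flow preserves the ball, carries the points where `f` lies on
the line `ℓ` to those where `f` lies on the rotated line, and extends continuously to `V` by the
identity. As the blow-up maps homeomorphically onto the ball off `V` and is `V × ℝP¹` over `V`,
this is all that is needed.

The field is obtained by projecting the gradient of `arg f` to the tangent spaces of the spheres and
rescaling it. This requires two facts about the analytic germ `f`: near `0` the gradient of `arg f`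
is nearly orthogonal to the radius, so that the projection loses only a bounded factor; and
`|f| / ‖df‖` tends to `0` at every point of `V`, so that the rescaled field, of size at most
`2 |f| / ‖df‖`, does too.

Both follow from an approximate Euler identity: along any ultrafilter of points `x` tending to a
zero `p` of `f` there are vectors `w = (x - p) + o(‖x - p‖)` and a number `q > 0` with
`df_x(w) = (q + o(1)) f(x)`. For a monomial times a unit this is Euler's identity in the
coordinates. The general case is reduced to that one by local uniformization: any family `x → 0`
along an ultrafilter lifts, through an analytic map germ `φ`, to a family `y → 0`, such that `f ∘ φ`
is a monomial times a unit. As only one ultrafilter has to be lifted, no global resolution is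
needed, and an elementary induction on the dimension suffices. In dimension `n + 1` the germ is
brought to the form `z ^ m u + ∑ c_k(x') z ^ k`, `k < m - 1`. By induction, toric blow-ups and
ramification, the coefficients become `c_k = t ^ (γ (m - k)) C_k`, with some `C_k` a unit.
If `z` is `O(t ^ γ)` along the ultrafilter, the substitution `z = t ^ γ (z' + ζ)` lowers the order
`m`, since the term of degree `m - 1` is missing; otherwise toric blow-ups turn `t ^ γ / z` into an
analytic function vanishing at `0`, and `f` into `z ^ m` times a unit.
-/

open scoped Matrix
open Filter Topology Metric Set

/-! ### Holomorphic maps of several variables are analytic -/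

section Osgood

variable {E G : Type*} [NormedAddCommGroup E] [NormedSpace ℂ E]
  [NormedAddCommGroup G] [NormedSpace ℂ G]

theorem norm_fderiv_le_div_of_forall_mem_closedBall {g : E → G} {x : E} {r M : ℝ} (hr : 0 < r)
    (hd : ∀ y ∈ closedBall x r, DifferentiableAt ℂ g y) (hM : ∀ y ∈ closedBall x r, ‖g y‖ ≤ M) :
    ‖fderiv ℂ g x‖ ≤ M / r := by
  have hM0 : 0 ≤ M := (norm_nonneg _).trans (hM x (mem_closedBall_self hr.le))
  refine ContinuousLinearMap.opNorm_le_bound _ (by positivity) fun v => ?_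
  rcases eq_or_ne v 0 with rfl | hv
  · simp
  have hv0 : 0 < ‖v‖ := norm_pos_iff.2 hv
  have hρ : 0 < r / ‖v‖ := by positivity
  have hmem : ∀ t ∈ closedBall (0 : ℂ) (r / ‖v‖), x + t • v ∈ closedBall x r := fun t ht => by
    rw [mem_closedBall_zero_iff, le_div_iff₀ hv0] at ht
    simpa [norm_smul] using ht
  have hline : ∀ t ∈ closedBall (0 : ℂ) (r / ‖v‖),
      HasDerivAt (fun t : ℂ => g (x + t • v)) (fderiv ℂ g (x + t • v) v) t := fun t ht =>
    (hd _ (hmem t ht)).hasFDerivAt.comp_hasDerivAt t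
      (by simpa using ((hasDerivAt_id t).smul_const v).const_add x)
  have hcauchy := Complex.norm_deriv_le_of_forall_mem_sphere_norm_le (C := M) hρ
    (DifferentiableOn.diffContOnCl fun t ht => (hline t (by
      rwa [closure_ball _ hρ.ne'] at ht)).differentiableAt.differentiableWithinAt)
    fun t ht => hM _ (hmem t (sphere_subset_closedBall ht))
  rw [(hline 0 (mem_closedBall_self hρ.le)).deriv, zero_smul, add_zero] at hcauchy
  exact hcauchy.trans_eq (by field_simp)

-- The Cauchy estimate, applied to `z ↦ g (z + (y - x)) - g z`.
theorem norm_fderiv_sub_fderiv_le {g : E → G} {x y : E} {r M : ℝ} (hr : 0 < r)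
    (hd : ∀ z ∈ closedBall x (3 * r), DifferentiableAt ℂ g z)
    (hM : ∀ z ∈ closedBall x (3 * r), ‖g z‖ ≤ M) (hy : y ∈ closedBall x r) :
    ‖fderiv ℂ g y - fderiv ℂ g x‖ ≤ M / r ^ 2 * ‖y - x‖ := by
  have hsub : closedBall x (2 * r) ⊆ closedBall x (3 * r) :=
    closedBall_subset_closedBall (by linarith)
  have hball : closedBall x r ⊆ closedBall x (2 * r) := closedBall_subset_closedBall (by linarith)
  have hshift : ∀ z ∈ closedBall x r, z + (y - x) ∈ closedBall x (2 * r) := fun z hz => by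
    rw [mem_closedBall_iff_norm] at hz hy ⊢
    calc ‖z + (y - x) - x‖ = ‖(z - x) + (y - x)‖ := by congr 1; abel
      _ ≤ 2 * r := by linarith [norm_add_le (z - x) (y - x)]
  have hderiv : ∀ w ∈ closedBall x (2 * r), ‖fderiv ℂ g w‖ ≤ M / r := fun w hw => by
    have hw3 : closedBall w r ⊆ closedBall x (3 * r) :=
      closedBall_subset_closedBall' (by linarith [mem_closedBall.1 hw])
    exact norm_fderiv_le_div_of_forall_mem_closedBall hr (fun z hz => hd z (hw3 hz))
      fun z hz => hM z (hw3 hz)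
  let : NormedSpace ℝ E := NormedSpace.restrictScalars ℝ ℂ E
  have hdiff : ∀ z ∈ closedBall x r, ‖g (z + (y - x)) - g z‖ ≤ M / r * ‖y - x‖ := fun z hz => by
    simpa using (convex_closedBall x (2 * r)).norm_image_sub_le_of_norm_fderiv_le (𝕜 := ℂ)
      (fun w hw => hd w (hsub hw)) hderiv (hball hz) (hshift z hz)
  have hfderiv : ∀ z ∈ closedBall x r, HasFDerivAt (fun z => g (z + (y - x)) - g z)
      (fderiv ℂ g (z + (y - x)) - fderiv ℂ g z) z := fun z hz =>
    ((hasFDerivAt_comp_add_right (y - x)).2 (hd _ (hsub (hshift z hz))).hasFDerivAt).sub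
      (hd _ (hsub (hball hz))).hasFDerivAt
  have hcauchy := norm_fderiv_le_div_of_forall_mem_closedBall hr
    (fun z hz => (hfderiv z hz).differentiableAt) hdiff
  rw [(hfderiv x (mem_closedBall_self hr.le)).fderiv, add_sub_cancel] at hcauchy
  exact hcauchy.trans_eq (by field_simp)

theorem continuousAt_fderiv_of_eventually_differentiableAt {g : E → G} {x : E}
    (hg : ∀ᶠ y in 𝓝 x, DifferentiableAt ℂ g y) : ContinuousAt (fderiv ℂ g) x := by
  have hbound : ∀ᶠ y in 𝓝 x, ‖g y‖ ≤ ‖g x‖ + 1 :=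
    (hg.self_of_nhds.continuousAt.norm.eventually_lt continuousAt_const (lt_add_one _)).mono
      fun _ h => h.le
  obtain ⟨R, hR, hball⟩ := Metric.nhds_basis_closedBall.eventually_iff.1 (hg.and hbound)
  have hR3 : 3 * (R / 3) = R := by ring
  refine tendsto_iff_norm_sub_tendsto_zero.2 (squeeze_zero' (.of_forall fun _ => norm_nonneg _)
    (g := fun y => (‖g x‖ + 1) / (R / 3) ^ 2 * ‖y - x‖) ?_ ?_)
  · filter_upwards [closedBall_mem_nhds x (show 0 < R / 3 by positivity)] with y hy
    exact norm_fderiv_sub_fderiv_le (by positivity) (fun z hz => (hball (hR3 ▸ hz)).1)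
      (fun z hz => (hball (hR3 ▸ hz)).2) hy
  · exact (Continuous.tendsto' (by fun_prop) x 0 (by simp))

theorem hasFDerivAt_intervalIntegral_of_continuousAt {𝕜 H V : Type*} [RCLike 𝕜]
    [NormedAddCommGroup H] [NormedSpace 𝕜 H] [NormedAddCommGroup V] [NormedSpace ℝ V]
    [NormedSpace 𝕜 V] {F : H → ℝ → V} {F' : H → ℝ → H →L[𝕜] V} {x₀ : H} {a b : ℝ}
    (hF : ∀ t ∈ uIcc a b, ∀ᶠ q : H × ℝ in 𝓝 (x₀, t), ContinuousAt (F q.1) q.2 ∧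
      HasFDerivAt (fun x => F x q.2) (F' q.1 q.2) q.1)
    (hF' : ∀ t ∈ uIcc a b, ContinuousAt (fun q : H × ℝ => F' q.1 q.2) (x₀, t)) :
    HasFDerivAt (fun x => ∫ t in a..b, F x t) (∫ t in a..b, F' x₀ t) x₀ := by
  have hF'x₀ : ContinuousOn (F' x₀) (uIcc a b) := fun t ht =>
    (ContinuousAt.comp (f := fun t => (x₀, t)) (hF' t ht) (by fun_prop)).continuousWithinAt
  obtain ⟨M, hM⟩ := isCompact_uIcc.exists_bound_of_continuousOn hF'x₀
  have hbound : ∀ᶠ x in 𝓝 x₀, ∀ t ∈ uIcc a b, ‖F' x t‖ ≤ M + 1 :=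
    isCompact_uIcc.eventually_forall_of_forall_eventually (P := fun x t => ‖F' x t‖ ≤ M + 1)
      fun t ht => ((hF' t ht).norm.eventually_lt continuousAt_const
        ((hM t ht).trans_lt (lt_add_one M))).mono fun _ h => h.le
  have hdiff := isCompact_uIcc.eventually_forall_of_forall_eventually (P := fun x t =>
    ContinuousAt (F x) t ∧ HasFDerivAt (fun x => F x t) (F' x t) x) hF
  have hcont : ∀ᶠ x in 𝓝 x₀, ContinuousOn (F x) (uIcc a b) :=
    hdiff.mono fun x hx t ht => (hx t ht).1.continuousWithinAt
  refine intervalIntegral.hasFDerivAt_integral_of_dominated_of_fderiv_le (bound := fun _ => M + 1)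
    (hbound.and hdiff) ?_ hcont.self_of_nhds.intervalIntegrable
    ((hF'x₀.mono uIoc_subset_uIcc).aestronglyMeasurable measurableSet_uIoc) ?_
    intervalIntegrable_const ?_
  · exact hcont.mono fun x hx =>
      (hx.mono uIoc_subset_uIcc).aestronglyMeasurable measurableSet_uIoc
  · exact .of_forall fun t ht x hx => hx.1 t (uIoc_subset_uIcc ht)
  · exact .of_forall fun t ht x hx => (hx.2 t (uIoc_subset_uIcc ht)).2

theorem exists_eventually_fderiv_apply_eq_circleIntegral [CompleteSpace G] {g : E → G} {x : E}
    (hg : ∀ᶠ y in 𝓝 x, DifferentiableAt ℂ g y) (v : E) :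
    ∃ r > 0, ∀ᶠ y in 𝓝 x,
      (∀ z ∈ closedBall (0 : ℂ) r, ∀ᶠ w in 𝓝 (y + z • v), DifferentiableAt ℂ g w) ∧
      fderiv ℂ g y v = (2 * Real.pi * Complex.I : ℂ)⁻¹ •
        ∮ z in C(0, r), (z ^ 2)⁻¹ • g (y + z • v) := by
  obtain ⟨R, hR, hball⟩ := Metric.eventually_nhds_iff_ball.1 hg
  obtain ⟨r, hr, hrv⟩ : ∃ r > 0, r * ‖v‖ < R / 2 :=
    ⟨R / 2 / (‖v‖ + 1), by positivity, by
      rw [div_mul_eq_mul_div, div_lt_iff₀ (by positivity)]; gcongr; linarith⟩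
  have hmem : ∀ y ∈ ball x (R / 2), ∀ z ∈ closedBall (0 : ℂ) r, y + z • v ∈ ball x R :=
    fun y hy z hz => by
      rw [mem_ball_iff_norm] at hy ⊢
      rw [mem_closedBall_zero_iff] at hz
      calc ‖y + z • v - x‖ = ‖(y - x) + z • v‖ := by congr 1; abel
        _ ≤ ‖y - x‖ + ‖z‖ * ‖v‖ := (norm_add_le _ _).trans_eq (by rw [norm_smul])
        _ ≤ ‖y - x‖ + r * ‖v‖ := by gcongr
        _ < R := by linarith
  refine ⟨r, hr, ?_⟩
  filter_upwards [ball_mem_nhds x (half_pos hR)] with y hy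
  refine ⟨fun z hz => mem_of_superset (isOpen_ball.mem_nhds (hmem y hy z hz)) hball, ?_⟩
  have hline : ∀ z ∈ {z : ℂ | y + z • v ∈ ball x R},
      HasDerivAt (fun z : ℂ => g (y + z • v)) (fderiv ℂ g (y + z • v) v) z := fun z hz =>
    (hball _ hz).hasFDerivAt.comp_hasDerivAt z
      (by simpa using ((hasDerivAt_id z).smul_const v).const_add y)
  have hcauchy := Complex.two_pi_I_inv_smul_circleIntegral_sub_sq_inv_smul_of_differentiable
    (isOpen_ball.preimage (show Continuous fun z : ℂ => y + z • v by fun_prop)) (hmem y hy)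
    (fun z hz => (hline z hz).differentiableAt.differentiableWithinAt) (mem_ball_self hr)
  rw [(hline 0 (hmem y hy 0 (mem_closedBall_self hr.le))).deriv, zero_smul, add_zero] at hcauchy
  simp only [← hcauchy, sub_zero]

theorem differentiableAt_fderiv_apply_of_eventually_differentiableAt [CompleteSpace G]
    {g : E → G} {x : E} (hg : ∀ᶠ y in 𝓝 x, DifferentiableAt ℂ g y) (v : E) :
    DifferentiableAt ℂ (fun y => fderiv ℂ g y v) x := by
  obtain ⟨r, hr, hr'⟩ := exists_eventually_fderiv_apply_eq_circleIntegral hg v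
  have hdiff : ∀ t : ℝ, ∀ᶠ q : E × ℝ in 𝓝 (x, t),
      ∀ᶠ y in 𝓝 (q.1 + circleMap 0 r q.2 • v), DifferentiableAt ℂ g y := fun t =>
    ((continuous_fst.tendsto (x, t)).eventually hr').mono fun q hq =>
      hq.1 _ (by simp [abs_of_pos hr])
  have hc : Continuous fun θ => (circleMap 0 r θ ^ 2)⁻¹ :=
    ((continuous_circleMap 0 r).pow 2).inv₀ fun θ => pow_ne_zero 2 (circleMap_ne_center hr.ne')
  have hc' : Continuous (deriv (circleMap 0 r)) := by
    simp only [funext (deriv_circleMap 0 r)]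
    fun_prop
  have hshift : Continuous fun q : E × ℝ => q.1 + circleMap 0 r q.2 • v := by fun_prop
  refine DifferentiableAt.congr_of_eventuallyEq (DifferentiableAt.const_smul ?_ _)
    (hr'.mono fun y hy => hy.2)
  refine (hasFDerivAt_intervalIntegral_of_continuousAt (F' := fun y θ => deriv (circleMap 0 r) θ •
    (circleMap 0 r θ ^ 2)⁻¹ • fderiv ℂ g (y + circleMap 0 r θ • v)) (fun t _ => ?_)
    fun t _ => ?_).differentiableAt
  · filter_upwards [hdiff t] with q hq
    refine ⟨hc'.continuousAt.smul (hc.continuousAt.smul (ContinuousAt.comp (g := g)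
      hq.self_of_nhds.continuousAt (by fun_prop))), (HasFDerivAt.const_smul ?_ _).const_smul _⟩
    exact (hasFDerivAt_comp_add_right _).2 hq.self_of_nhds.hasFDerivAt
  · exact (hc'.comp continuous_snd).continuousAt.smul ((hc.comp continuous_snd).continuousAt.smul
      (ContinuousAt.comp (g := fderiv ℂ g)
        (continuousAt_fderiv_of_eventually_differentiableAt (hdiff t).self_of_nhds)
        hshift.continuousAt))

theorem differentiableAt_fderiv_of_eventually_differentiableAt [FiniteDimensional ℂ E]
    [CompleteSpace G] {g : E → G} {x : E} (hg : ∀ᶠ y in 𝓝 x, DifferentiableAt ℂ g y) :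
    DifferentiableAt ℂ (fderiv ℂ g) x := by
  let e := ContinuousLinearEquiv.ofFinrankEq
    (Module.finrank_fin_fun ℂ (n := Module.finrank ℂ E)).symm
  let e' := (e.arrowCongr (1 : G ≃L[ℂ] G)).trans
    (ContinuousLinearEquiv.piRing (Fin (Module.finrank ℂ E)))
  rw [← e'.comp_differentiableAt_iff, differentiableAt_pi]
  exact fun i => differentiableAt_fderiv_apply_of_eventually_differentiableAt hg _

theorem eventually_differentiableAt_iteratedFDeriv [FiniteDimensional ℂ E] [CompleteSpace G]
    {g : E → G} {x : E} (hg : ∀ᶠ y in 𝓝 x, DifferentiableAt ℂ g y) (k : ℕ) :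
    ∀ᶠ y in 𝓝 x, DifferentiableAt ℂ (iteratedFDeriv ℂ k g) y := by
  induction k with
  | zero =>
    simpa only [iteratedFDeriv_zero_eq_comp, LinearIsometryEquiv.comp_differentiableAt_iff]
      using hg
  | succ k ih =>
    rw [iteratedFDeriv_succ_eq_comp_left]
    exact (eventually_eventually_nhds.2 ih).mono fun y hy =>
      (LinearIsometryEquiv.comp_differentiableAt_iff _).2
        (differentiableAt_fderiv_of_eventually_differentiableAt hy)

theorem norm_iteratedFDeriv_le_div_pow [FiniteDimensional ℂ E] [CompleteSpace G]
    {g : E → G} {x : E} {r M : ℝ} (hr : 0 < r) (k : ℕ)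
    (hd : ∀ y ∈ closedBall x (k * r), ∀ᶠ z in 𝓝 y, DifferentiableAt ℂ g z)
    (hM : ∀ y ∈ closedBall x (k * r), ‖g y‖ ≤ M) :
    ‖iteratedFDeriv ℂ k g x‖ ≤ M / r ^ k := by
  induction k generalizing x with
  | zero => simpa using hM x (by simp)
  | succ k ih =>
    have hsub : ∀ y ∈ closedBall x r, closedBall y (k * r) ⊆ closedBall x ((k + 1 : ℕ) * r) :=
      fun y hy => closedBall_subset_closedBall' (by push_cast; linarith [mem_closedBall.1 hy])
    rw [← norm_fderiv_iteratedFDeriv, pow_succ, ← div_div]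
    refine norm_fderiv_le_div_of_forall_mem_closedBall hr (fun y hy => ?_) fun y hy =>
      ih (fun z hz => hd z (hsub y hy hz)) fun z hz => hM z (hsub y hy hz)
    exact (eventually_differentiableAt_iteratedFDeriv
      (hd y (hsub y hy (mem_closedBall_self (by positivity)))) k).self_of_nhds

theorem norm_inv_factorial_smul_iteratedFDeriv_le [FiniteDimensional ℂ E] [CompleteSpace G]
    {g : E → G} {x : E} {R M : ℝ} (hR : 0 < R)
    (hd : ∀ y ∈ closedBall x R, ∀ᶠ z in 𝓝 y, DifferentiableAt ℂ g z)
    (hM : ∀ y ∈ closedBall x R, ‖g y‖ ≤ M) (k : ℕ) :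
    ‖(k.factorial : ℂ)⁻¹ • iteratedFDeriv ℂ k g x‖ ≤ M * (Real.exp 1 / R) ^ k := by
  have hM0 : 0 ≤ M := (norm_nonneg _).trans (hM x (mem_closedBall_self hR.le))
  rcases k.eq_zero_or_pos with rfl | hk
  · simpa using hM x (mem_closedBall_self hR.le)
  have hkR : (k : ℝ) * (R / k) = R := by field_simp
  have hderiv := norm_iteratedFDeriv_le_div_pow (r := R / k) (by positivity) k
    (by rwa [hkR]) (by rwa [hkR])
  have hexp : (k : ℝ) ^ k / k.factorial ≤ Real.exp 1 ^ k := by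
    simpa [← Real.exp_nat_mul] using Real.pow_div_factorial_le_exp (k : ℝ) k.cast_nonneg k
  calc ‖(k.factorial : ℂ)⁻¹ • iteratedFDeriv ℂ k g x‖
      ≤ (k.factorial : ℝ)⁻¹ * (M / (R / k) ^ k) := by
        rw [norm_smul, norm_inv, Complex.norm_natCast]; gcongr
    _ = M / R ^ k * (k ^ k / k.factorial) := by rw [div_pow]; field_simp
    _ ≤ M / R ^ k * Real.exp 1 ^ k := by gcongr
    _ = M * (Real.exp 1 / R) ^ k := by rw [div_pow]; ring

theorem iteratedDeriv_comp_add_smul [FiniteDimensional ℂ E] [CompleteSpace G] {g : E → G}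
    {x v : E} (k : ℕ) {s : ℂ} (hg : ∀ᶠ y in 𝓝 (x + s • v), DifferentiableAt ℂ g y) :
    iteratedDeriv k (fun t : ℂ => g (x + t • v)) s =
      iteratedFDeriv ℂ k g (x + s • v) fun _ => v := by
  induction k generalizing s with
  | zero => simp
  | succ k ih =>
    have hline : HasDerivAt (fun t : ℂ => x + t • v) v s := by
      simpa using ((hasDerivAt_id s).smul_const v).const_add x
    have hnear : iteratedDeriv k (fun t : ℂ => g (x + t • v)) =ᶠ[𝓝 s]
        fun t => iteratedFDeriv ℂ k g (x + t • v) fun _ => v :=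
      (hline.continuousAt.eventually (eventually_eventually_nhds.2 hg)).mono fun t ht => ih ht
    have hderiv := (eventually_differentiableAt_iteratedFDeriv hg k).self_of_nhds.hasFDerivAt
      |>.comp_hasDerivAt s hline
    rw [iteratedDeriv_succ, hnear.deriv_eq, iteratedFDeriv_succ_apply_left]
    exact ((ContinuousMultilinearMap.apply ℂ (fun _ : Fin k => E) G fun _ => v).hasFDerivAt
      |>.comp_hasDerivAt s hderiv).deriv

theorem hasFPowerSeriesOnBall_iteratedFDeriv [FiniteDimensional ℂ E] [CompleteSpace G]
    {g : E → G} {x : E} {R M : ℝ} (hR : 0 < R)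
    (hd : ∀ y ∈ closedBall x R, ∀ᶠ z in 𝓝 y, DifferentiableAt ℂ g z)
    (hM : ∀ y ∈ closedBall x R, ‖g y‖ ≤ M) :
    HasFPowerSeriesOnBall g (fun k => (k.factorial : ℂ)⁻¹ • iteratedFDeriv ℂ k g x) x
      (ENNReal.ofReal (R / Real.exp 1)) where
  r_le := FormalMultilinearSeries.le_radius_of_bound _ M fun k => by
    rw [Real.coe_toNNReal _ (by positivity), ← le_div_iff₀ (by positivity)]
    refine (norm_inv_factorial_smul_iteratedFDeriv_le hR hd hM k).trans_eq ?_
    rw [div_pow, div_pow]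
    field_simp
  r_pos := by simpa using by positivity
  hasSum := fun {y} hy => by
    have hyR : 2 * ‖y‖ ≤ R := by
      rw [mem_eball_zero_iff, ← ofReal_norm, ENNReal.ofReal_lt_ofReal_iff (by positivity),
        lt_div_iff₀ (by positivity)] at hy
      nlinarith [Real.add_one_le_exp (1 : ℝ), norm_nonneg y]
    have hmem : ∀ t ∈ ball (0 : ℂ) 2, x + t • y ∈ closedBall x R := fun t ht => by
      have := mul_le_mul_of_nonneg_right (mem_ball_zero_iff.1 ht).le (norm_nonneg y)
      simpa [norm_smul] using this.trans hyR
    have hline : DifferentiableOn ℂ (fun t : ℂ => g (x + t • y)) (ball 0 2) := fun t ht =>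
      ((hd _ (hmem t ht)).self_of_nhds.comp t (by fun_prop)).differentiableWithinAt
    convert Complex.hasSum_taylorSeries_on_ball hline (z := 1) (by simp) using 2 with k
    · rw [iteratedDeriv_comp_add_smul k (by simpa using hd x (mem_closedBall_self hR.le))]
      simp
    · simp

theorem analyticAt_of_eventually_differentiableAt [FiniteDimensional ℂ E] [CompleteSpace G]
    {g : E → G} {x : E} (hg : ∀ᶠ y in 𝓝 x, DifferentiableAt ℂ g y) : AnalyticAt ℂ g x := by
  have hbound : ∀ᶠ y in 𝓝 x, ‖g y‖ ≤ ‖g x‖ + 1 :=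
    (hg.self_of_nhds.continuousAt.norm.eventually_lt continuousAt_const (lt_add_one _)).mono
      fun _ h => h.le
  obtain ⟨R, hR, hball⟩ := Metric.nhds_basis_closedBall.eventually_iff.1
    ((eventually_eventually_nhds.2 hg).and hbound)
  exact (hasFPowerSeriesOnBall_iteratedFDeriv hR (fun y hy => (hball hy).1)
    fun y hy => (hball hy).2).analyticAt

theorem eventually_forall_mem_uIcc_analyticAt [CompleteSpace G] {f : E → G} {p : E}
    (hf : AnalyticAt ℂ f p) (v : E) :
    ∀ᶠ q : E × ℂ in 𝓝 (p, 0), ∀ t ∈ uIcc (0 : ℝ) 1, AnalyticAt ℂ f (q.1 + (t : ℂ) • q.2 • v) := by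
  refine isCompact_uIcc.eventually_forall_of_forall_eventually
    (P := fun (q : E × ℂ) (t : ℝ) => AnalyticAt ℂ f (q.1 + (t : ℂ) • q.2 • v)) fun t _ => ?_
  have hcont : Continuous fun z : (E × ℂ) × ℝ => z.1.1 + (z.2 : ℂ) • z.1.2 • v := by fun_prop
  exact hcont.continuousAt.eventually (by simpa using hf.eventually_analyticAt)

theorem differentiableAt_intervalIntegral_comp_add_smul [CompleteSpace G] {g : E → G} {v : E}
    {q : E × ℂ} (hg : ∀ t ∈ uIcc (0 : ℝ) 1, AnalyticAt ℂ g (q.1 + (t : ℂ) • q.2 • v)) :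
    DifferentiableAt ℂ
      (fun q : E × ℂ => ∫ t in (0 : ℝ)..1, g (q.1 + (t : ℂ) • q.2 • v)) q := by
  have hderiv : ∀ z : (E × ℂ) × ℝ, HasFDerivAt (fun q : E × ℂ => q.1 + (z.2 : ℂ) • q.2 • v)
      (ContinuousLinearMap.fst ℂ E ℂ +
        (z.2 : ℂ) • (ContinuousLinearMap.snd ℂ E ℂ).smulRight v) z.1 := fun z =>
    hasFDerivAt_fst.add ((hasFDerivAt_snd.smul_const v).const_smul (z.2 : ℂ))
  have hcont : Continuous fun z : (E × ℂ) × ℝ => z.1.1 + (z.2 : ℂ) • z.1.2 • v := by fun_prop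
  refine (hasFDerivAt_intervalIntegral_of_continuousAt (F' := fun (q : E × ℂ) (t : ℝ) =>
    (fderiv ℂ g (q.1 + (t : ℂ) • q.2 • v)).comp
      (ContinuousLinearMap.fst ℂ E ℂ + (t : ℂ) • (ContinuousLinearMap.snd ℂ E ℂ).smulRight v))
    (fun t ht => ?_) fun t ht => ?_).differentiableAt
  · filter_upwards [hcont.continuousAt.eventually (hg t ht).eventually_analyticAt] with z hz
    exact ⟨ContinuousAt.comp (g := g) hz.continuousAt (by fun_prop),
      HasFDerivAt.comp (g := g) z.1 hz.differentiableAt.hasFDerivAt (hderiv z)⟩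
  · exact ContinuousAt.clm_comp (ContinuousAt.comp (g := fderiv ℂ g) (hg t ht).fderiv.continuousAt
      hcont.continuousAt) (by fun_prop)

theorem exists_analyticAt_add_smul_sub_eq_smul [FiniteDimensional ℂ E] [CompleteSpace G] {f : E → G}
    {p : E} (hf : AnalyticAt ℂ f p) (v : E) :
    ∃ H : E × ℂ → G, AnalyticAt ℂ H (p, 0) ∧
      ∀ᶠ q : E × ℂ in 𝓝 (p, 0), f (q.1 + q.2 • v) - f q.1 = q.2 • H q := by
  have hana := eventually_forall_mem_uIcc_analyticAt hf v
  have hfderiv : ∀ y, AnalyticAt ℂ f y → AnalyticAt ℂ (fun y => fderiv ℂ f y v) y := fun y hy =>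
    ((ContinuousLinearMap.apply ℂ G v).analyticAt _).comp hy.fderiv
  refine ⟨fun q => ∫ t in (0 : ℝ)..1, fderiv ℂ f (q.1 + (t : ℂ) • q.2 • v) v,
    analyticAt_of_eventually_differentiableAt (hana.mono fun q hq =>
      differentiableAt_intervalIntegral_comp_add_smul fun t ht => hfderiv _ (hq t ht)),
    hana.mono fun q hq => ?_⟩
  have hline : ∀ t ∈ uIcc (0 : ℝ) 1, HasDerivAt (fun t : ℝ => f (q.1 + (t : ℂ) • q.2 • v))
      (q.2 • fderiv ℂ f (q.1 + (t : ℂ) • q.2 • v) v) t := fun t ht => by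
    have hsegment : HasDerivAt (fun t : ℝ => q.1 + (t : ℂ) • q.2 • v) (q.2 • v) t := by
      simpa using ((Complex.ofRealCLM.hasDerivAt (x := t)).smul_const (q.2 • v)).const_add q.1
    simpa [Function.comp_def] using
      ((hq t ht).differentiableAt.hasFDerivAt.restrictScalars ℝ).comp_hasDerivAt t hsegment
  have hcont : ContinuousOn (fun t : ℝ => q.2 • fderiv ℂ f (q.1 + (t : ℂ) • q.2 • v) v)
      (uIcc 0 1) := fun t ht => (continuousAt_const.smul (ContinuousAt.comp
    (g := fun y => fderiv ℂ f y v) (f := fun t : ℝ => q.1 + (t : ℂ) • q.2 • v)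
    (hfderiv _ (hq t ht)).continuousAt (by fun_prop))).continuousWithinAt
  rw [← intervalIntegral.integral_smul, intervalIntegral.integral_eq_sub_of_hasDerivAt hline
    hcont.intervalIntegrable]
  simp

end Osgood

/-! ### Monomial germs and lifting families of points -/

section MonomialGerms

variable {ι κ : Type*} [Fintype ι] [Fintype κ]

/-- The germ of `f` at `0` is the product of the monomial `y ^ a` and a unit. In these terms local
uniformization makes a function a normal crossing. -/
def HasMonomialGerm (f : (ι → ℂ) → ℂ) (a : ι → ℕ) : Prop :=
  ∃ u : (ι → ℂ) → ℂ, AnalyticAt ℂ u 0 ∧ u 0 ≠ 0 ∧ ∀ᶠ y in 𝓝 0, f y = (∏ i, y i ^ a i) * u y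

theorem analyticAt_eval (i : ι) (p : ι → ℂ) : AnalyticAt ℂ (fun y : ι → ℂ => y i) p :=
  (ContinuousLinearMap.proj (R := ℂ) (φ := fun _ : ι => ℂ) i).analyticAt p

theorem analyticAt_monomial (a : ι → ℕ) (p : ι → ℂ) :
    AnalyticAt ℂ (fun y : ι → ℂ => ∏ i, y i ^ a i) p :=
  Finset.univ.analyticAt_fun_prod fun i _ => (analyticAt_eval i p).fun_pow (a i)

namespace HasMonomialGerm

variable {f g : (ι → ℂ) → ℂ} {a b : ι → ℕ}

theorem analyticAt (h : HasMonomialGerm f a) : AnalyticAt ℂ f 0 := by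
  obtain ⟨u, hu, -, he⟩ := h
  exact ((analyticAt_monomial a 0).fun_mul hu).congr (he.mono fun _ h => h.symm)

theorem congr (h : HasMonomialGerm f a) (hfg : g =ᶠ[𝓝 0] f) : HasMonomialGerm g a := by
  obtain ⟨u, hu, h0, he⟩ := h
  exact ⟨u, hu, h0, hfg.trans he⟩

theorem of_ne_zero (h : AnalyticAt ℂ f 0) (h0 : f 0 ≠ 0) : HasMonomialGerm f 0 :=
  ⟨f, h, h0, by simp⟩

theorem eval [DecidableEq ι] (i : ι) : HasMonomialGerm (fun y : ι → ℂ => y i) (Pi.single i 1) := by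
  refine ⟨fun _ => 1, analyticAt_const, one_ne_zero, .of_forall fun y => ?_⟩
  simp [Pi.single_apply, pow_ite]

theorem mul (hf : HasMonomialGerm f a) (hg : HasMonomialGerm g b) :
    HasMonomialGerm (fun y => f y * g y) (a + b) := by
  obtain ⟨u, hu, hu0, hfu⟩ := hf
  obtain ⟨v, hv, hv0, hgv⟩ := hg
  refine ⟨fun y => u y * v y, hu.fun_mul hv, mul_ne_zero hu0 hv0, ?_⟩
  filter_upwards [hfu, hgv] with y hy hy'
  simp only [hy, hy', Pi.add_apply, pow_add, Finset.prod_mul_distrib]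
  ring

theorem prod {J : Type*} (s : Finset J) {f : J → (ι → ℂ) → ℂ} {a : J → ι → ℕ}
    (h : ∀ k ∈ s, HasMonomialGerm (f k) (a k)) :
    HasMonomialGerm (fun y => ∏ k ∈ s, f k y) (∑ k ∈ s, a k) := by
  classical
  induction s using Finset.induction_on with
  | empty => simpa using of_ne_zero (ι := ι) (f := fun _ => 1) analyticAt_const one_ne_zero
  | insert k s hk ih =>
    simp only [Finset.prod_insert hk, Finset.sum_insert hk]
    exact (h k (Finset.mem_insert_self _ _)).mul
      (ih fun k' hk' => h k' (Finset.mem_insert_of_mem hk'))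

theorem pow (hf : HasMonomialGerm f a) (m : ℕ) : HasMonomialGerm (fun y => f y ^ m) (m • a) := by
  simpa using prod (Finset.range m) (f := fun _ => f) (a := fun _ => a) fun _ _ => hf

theorem comp {φ : (κ → ℂ) → ι → ℂ} {T : Matrix ι κ ℕ} (hf : HasMonomialGerm f a)
    (hφ : AnalyticAt ℂ φ 0) (h0 : φ 0 = 0) (hT : ∀ j, HasMonomialGerm (fun y => φ y j) (T j)) :
    HasMonomialGerm (fun y => f (φ y)) (a ᵥ* T) := by
  obtain ⟨u, hu, hu0, he⟩ := hf
  have h_monomial : HasMonomialGerm (fun y => ∏ j, φ y j ^ a j) (a ᵥ* T) := by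
    rw [Matrix.vecMul_eq_sum]
    exact prod _ fun j _ => (hT j).pow (a j)
  have h_unit : HasMonomialGerm (fun y => u (φ y)) 0 :=
    of_ne_zero (AnalyticAt.fun_comp (g := u) (by rwa [h0]) hφ) (by rwa [h0])
  have ht : Tendsto φ (𝓝 0) (𝓝 0) := by simpa [h0] using hφ.continuousAt.tendsto
  have h_mul := h_monomial.mul h_unit
  rw [add_zero] at h_mul
  exact h_mul.congr (ht.eventually he)

theorem not_eventuallyEq_zero (h : HasMonomialGerm f a) : ¬ f =ᶠ[𝓝 0] 0 := by
  obtain ⟨u, hu, hu0, he⟩ := h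
  intro hz
  have h_monomial : ∀ᶠ y in 𝓝 (0 : ι → ℂ), ∏ i, y i ^ a i = 0 := by
    filter_upwards [he, hz, hu.continuousAt.eventually_ne hu0] with y hfy hzy huy
    exact (mul_eq_zero.1 (hfy.symm.trans hzy)).resolve_right huy
  have h_diag : Tendsto (fun t : ℂ => (fun _ : ι => t)) (𝓝 0) (𝓝 0) :=
    (by fun_prop : Continuous fun t : ℂ => (fun _ : ι => t)).tendsto 0
  obtain ⟨t, ht, ht0⟩ :=
    (((h_diag.eventually h_monomial).filter_mono nhdsWithin_le_nhds).and
      (self_mem_nhdsWithin (s := {0}ᶜ))).exists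
  exact Finset.prod_ne_zero_iff.2 (fun i _ => pow_ne_zero _ ht0) ht

theorem apply_zero_eq_zero_iff (h : HasMonomialGerm f a) : f 0 = 0 ↔ a ≠ 0 := by
  obtain ⟨u, -, hu0, he⟩ := h
  rw [he.self_of_nhds, mul_eq_zero, or_iff_left hu0, Finset.prod_eq_zero_iff, Function.ne_iff]
  simp

theorem exists_eq_mul (hf : HasMonomialGerm f a) (hg : HasMonomialGerm g b) (hab : a ≤ b) :
    ∃ q : (ι → ℂ) → ℂ, HasMonomialGerm q (b - a) ∧ ∀ᶠ y in 𝓝 0, g y = f y * q y := by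
  obtain ⟨u, hu, hu0, hfu⟩ := hf
  obtain ⟨v, hv, hv0, hgv⟩ := hg
  refine ⟨fun y => (∏ i, y i ^ (b - a) i) * (v y / u y),
    ⟨fun y => v y / u y, hv.fun_div hu hu0, div_ne_zero hv0 hu0, .of_forall fun y => rfl⟩, ?_⟩
  filter_upwards [hfu, hgv, hu.continuousAt.eventually_ne hu0] with y hfy hgy huy
  have : ∏ i, y i ^ b i = (∏ i, y i ^ a i) * ∏ i, y i ^ (b - a) i := by
    rw [← Finset.prod_mul_distrib]
    refine Finset.prod_congr rfl fun i _ => ?_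
    rw [← pow_add, Pi.sub_apply, Nat.add_sub_cancel' (hab i)]
  rw [hfy, hgy, this]
  field_simp

end HasMonomialGerm

end MonomialGerms

section ExponentMatrices

variable {ι κ : Type*}

theorem matrix_one_row [DecidableEq ι] (i : ι) : (1 : Matrix ι ι ℕ) i = Pi.single i 1 :=
  funext fun _ => Matrix.one_eq_pi_single

variable [Fintype ι]

theorem vecMul_mono (T : Matrix ι κ ℕ) : Monotone fun a : ι → ℕ => a ᵥ* T := fun _ _ h k =>
  Finset.sum_le_sum fun j _ => Nat.mul_le_mul_right (T j k) (h j)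

theorem vecMul_updateRow_one [DecidableEq ι] (a : ι → ℕ) (i : ι) (r : ι → ℕ) :
    a ᵥ* (1 : Matrix ι ι ℕ).updateRow i r = Function.update a i 0 + a i • r := by
  ext k
  simp only [Matrix.vecMul, dotProduct, Pi.add_apply, Pi.smul_apply, smul_eq_mul]
  rw [← Finset.add_sum_erase _ _ (Finset.mem_univ i), Matrix.updateRow_self, add_comm]
  congr 1
  trans ∑ j ∈ Finset.univ.erase i, if j = k then a j else 0
  · refine Finset.sum_congr rfl fun j hj => ?_
    rw [Matrix.updateRow_ne (Finset.ne_of_mem_erase hj), Matrix.one_apply, mul_ite, mul_one,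
      mul_zero]
  · rcases eq_or_ne k i with rfl | hk <;> simp [*]

end ExponentMatrices

section Lifts

/-- The family of points `x`, which tends to `0` along `l`, lifts through the germ at `0` of the
analytic map `φ` to a family `y` which tends to `0` as well. -/
structure IsGermLift {I E F : Type*} [NormedAddCommGroup E] [NormedSpace ℂ E]
    [NormedAddCommGroup F] [NormedSpace ℂ F] (l : Filter I) (x : I → E) (φ : F → E) (y : I → F) :
    Prop where
  analyticAt : AnalyticAt ℂ φ 0
  map_zero : φ 0 = 0
  tendsto : Tendsto y l (𝓝 0)
  eventually_eq : ∀ᶠ i in l, φ (y i) = x i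

namespace IsGermLift

variable {I E F G : Type*} [NormedAddCommGroup E] [NormedSpace ℂ E] [NormedAddCommGroup F]
  [NormedSpace ℂ F] [NormedAddCommGroup G] [NormedSpace ℂ G] {l : Filter I}
  {x : I → E} {y : I → F} {z : I → G} {φ : F → E} {ψ : G → F}

theorem tendsto_map (h : IsGermLift l x φ y) : Tendsto φ (𝓝 0) (𝓝 0) := by
  simpa [h.map_zero] using h.analyticAt.continuousAt.tendsto

theorem comp (h : IsGermLift l x φ y) (h' : IsGermLift l y ψ z) :
    IsGermLift l x (fun p => φ (ψ p)) z where
  analyticAt := AnalyticAt.fun_comp (by rw [h'.map_zero]; exact h.analyticAt) h'.analyticAt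
  map_zero := by rw [h'.map_zero, h.map_zero]
  tendsto := h'.tendsto
  eventually_eq := by
    filter_upwards [h.eventually_eq, h'.eventually_eq] with i hi hi'
    rw [hi', hi]

theorem refl (h : Tendsto x l (𝓝 0)) : IsGermLift l x (fun p => p) x :=
  ⟨analyticAt_id, rfl, h, .of_forall fun _ => rfl⟩

theorem analyticAt_comp {f : E → G} (h : IsGermLift l x φ y) (hf : AnalyticAt ℂ f 0) :
    AnalyticAt ℂ (fun p => f (φ p)) 0 :=
  AnalyticAt.fun_comp (by rwa [h.map_zero]) h.analyticAt

end IsGermLift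

/-- A lift through a map germ whose `j`-th component is a monomial, with exponent the `j`-th row of
`T`, times a unit. -/
structure IsMonomialLift {I ι κ : Type*} [Fintype ι] [Fintype κ] (l : Filter I) (x : I → ι → ℂ)
    (φ : (κ → ℂ) → ι → ℂ) (T : Matrix ι κ ℕ) (y : I → κ → ℂ) : Prop extends
    IsGermLift l x φ y where
  hasMonomialGerm : ∀ j, HasMonomialGerm (fun p => φ p j) (T j)

section MonomialLifts

variable {I ι κ τ : Type*} [Fintype ι] [Fintype κ] [Fintype τ]

theorem HasMonomialGerm.comp_lift {l : Filter I} {f : (ι → ℂ) → ℂ} {a : ι → ℕ}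
    {φ : (κ → ℂ) → ι → ℂ} {T : Matrix ι κ ℕ} {x : I → ι → ℂ} {y : I → κ → ℂ}
    (hf : HasMonomialGerm f a) (h : IsMonomialLift l x φ T y) :
    HasMonomialGerm (fun p => f (φ p)) (a ᵥ* T) :=
  hf.comp h.analyticAt h.map_zero h.hasMonomialGerm

theorem IsMonomialLift.comp {l : Filter I} {φ : (κ → ℂ) → ι → ℂ} {ψ : (τ → ℂ) → κ → ℂ}
    {T : Matrix ι κ ℕ} {S : Matrix κ τ ℕ} {x : I → ι → ℂ} {y : I → κ → ℂ} {z : I → τ → ℂ}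
    (h : IsMonomialLift l x φ T y) (h' : IsMonomialLift l y ψ S z) :
    IsMonomialLift l x (fun p => φ (ψ p)) (T * S) z :=
  ⟨h.toIsGermLift.comp h'.toIsGermLift, fun j => (h.hasMonomialGerm j).comp_lift h'⟩

theorem IsMonomialLift.refl [DecidableEq ι] {l : Filter I} {x : I → ι → ℂ}
    (h : Tendsto x l (𝓝 0)) : IsMonomialLift l x (fun p => p) 1 x :=
  ⟨.refl h, fun j => (matrix_one_row j).symm ▸ .eval j⟩

end MonomialLifts

theorem exists_tendsto_ultrafilter_of_eventually_norm_le {I E : Type*} [NormedAddCommGroup E]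
    [ProperSpace E] {l : Ultrafilter I} {c : I → E} {C : ℝ}
    (h : ∀ᶠ i in (l : Filter I), ‖c i‖ ≤ C) : ∃ z, Tendsto c l (𝓝 z) := by
  obtain ⟨z, -, hz⟩ := (isCompact_closedBall (0 : E) C).ultrafilter_le_nhds (l.map c)
    (le_principal_iff.2 (h.mono fun i hi => by simpa using hi))
  exact ⟨z, hz⟩

variable {I ι : Type*} [DecidableEq ι]

/-- The chart of the blow-up of `y i = y j = 0` centred at the point of the exceptional divisor
where `y i / y j = c`. -/
def blowUpChart (i j : ι) (c : ℂ) (y : ι → ℂ) : ι → ℂ :=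
  Function.update y i (y j * (y i + c))

theorem blowUpChart_apply_of_ne {i k : ι} (hk : k ≠ i) (j : ι) (c : ℂ) (y : ι → ℂ) :
    blowUpChart i j c y k = y k := Function.update_of_ne hk _ _

theorem blowUpChart_apply_self (i j : ι) (c : ℂ) (y : ι → ℂ) :
    blowUpChart i j c y i = y j * (y i + c) := Function.update_self _ _ _

variable [Fintype ι]

theorem analyticAt_blowUpChart (i j : ι) (c : ℂ) (p : ι → ℂ) :
    AnalyticAt ℂ (blowUpChart i j c) p := by
  rw [analyticAt_pi_iff]
  intro k
  rcases eq_or_ne k i with rfl | hk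
  · simp only [blowUpChart_apply_self]
    exact (analyticAt_eval j p).fun_mul ((analyticAt_eval k p).fun_add analyticAt_const)
  · simp only [blowUpChart_apply_of_ne hk]
    exact analyticAt_eval k p

theorem isGermLift_blowUpChart {l : Filter I} {x : I → ι → ℂ} (hx : Tendsto x l (𝓝 0)) {i j : ι}
    (hij : i ≠ j) (hle : ∀ᶠ s in l, ‖x s i‖ ≤ ‖x s j‖) {c : ℂ}
    (hc : Tendsto (fun s => x s i / x s j) l (𝓝 c)) :
    IsGermLift l x (blowUpChart i j c)
      fun s => Function.update (x s) i (x s i / x s j - c) where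
  analyticAt := analyticAt_blowUpChart i j c 0
  map_zero := by simp [blowUpChart]
  tendsto := by
    refine tendsto_pi_nhds.2 fun k => ?_
    rcases eq_or_ne k i with rfl | hk
    · simpa using hc.sub_const c
    · simpa [hk] using tendsto_pi_nhds.1 hx k
  eventually_eq := by
    filter_upwards [hle] with s hs
    have hji : x s j * (x s i / x s j) = x s i := by
      refine mul_div_cancel_of_imp' fun h0 => ?_
      rwa [h0, norm_zero, norm_le_zero_iff] at hs
    simp [blowUpChart, hij.symm, hji]

theorem hasMonomialGerm_blowUpChart (i j : ι) (c : ℂ) (k : ι) :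
    HasMonomialGerm (fun y => blowUpChart i j c y k) ((1 : Matrix ι ι ℕ).updateRow i
      (if c = 0 then Pi.single i 1 + Pi.single j 1 else Pi.single j 1) k) := by
  rcases eq_or_ne k i with rfl | hk
  · simp only [blowUpChart_apply_self, Matrix.updateRow_self]
    split_ifs with hc
    · simpa [hc, add_comm] using (HasMonomialGerm.eval j).mul (HasMonomialGerm.eval k)
    · simpa using (HasMonomialGerm.eval j).mul (HasMonomialGerm.of_ne_zero
        (f := fun p : ι → ℂ => p k + c) ((analyticAt_eval k 0).fun_add analyticAt_const)
        (by simpa using hc))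
  · simp only [blowUpChart_apply_of_ne hk, Matrix.updateRow_ne hk]
    exact (matrix_one_row k).symm ▸ .eval k

theorem exists_isMonomialLift_updateRow {l : Ultrafilter I} {x : I → ι → ℂ}
    (hx : Tendsto x l (𝓝 0)) {i j : ι} (hij : i ≠ j)
    (hle : ∀ᶠ s in (l : Filter I), ‖x s i‖ ≤ ‖x s j‖) :
    ∃ φ r y, IsMonomialLift l x φ ((1 : Matrix ι ι ℕ).updateRow i r) y ∧
      (r = Pi.single j 1 ∨ r = Pi.single i 1 + Pi.single j 1) := by
  obtain ⟨c, hc⟩ : ∃ c, Tendsto (fun s => x s i / x s j) l (𝓝 c) := by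
    refine exists_tendsto_ultrafilter_of_eventually_norm_le (C := 1) (hle.mono fun s hs => ?_)
    rw [norm_div]
    exact div_le_one_of_le₀ hs (norm_nonneg _)
  refine ⟨_, _, _, ⟨isGermLift_blowUpChart hx hij hle hc,
    hasMonomialGerm_blowUpChart i j c⟩, ?_⟩
  split_ifs <;> simp

end Lifts

/-! ### Toric blow-ups and ramification -/

section Toric

variable {I ι : Type*} [Fintype ι] {l : Ultrafilter I} {a b : ι → ℕ} {M N : ℕ}

/-- The coordinates where `a - b`, with values in `[-N, M]`, takes one of these two
extreme values. -/
def extremalCoords (a b : ι → ℕ) (M N : ℕ) : Finset ι :=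
  {k | a k = b k + M ∨ b k = a k + N}

theorem extremalCoords_symm (a b : ι → ℕ) (M N : ℕ) :
    extremalCoords b a N M = extremalCoords a b M N := by
  simp only [extremalCoords, or_comm]

theorem vecMul_blowUp_bounds [DecidableEq ι] (hM0 : 0 < M) (hN0 : 0 < N) (hM : ∀ k, a k ≤ b k + M)
    (hN : ∀ k, b k ≤ a k + N) {i j : ι} (hi : a i = b i + M) (hj : b j = a j + N) {r : ι → ℕ}
    (hr : r = Pi.single j 1 ∨ r = Pi.single i 1 + Pi.single j 1) {a' b' : ι → ℕ}
    (ha' : a' = a ᵥ* (1 : Matrix ι ι ℕ).updateRow i r)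
    (hb' : b' = b ᵥ* (1 : Matrix ι ι ℕ).updateRow i r) (k : ι) :
    a' k ≤ b' k + M ∧ b' k ≤ a' k + N ∧
      (a' k = b' k + M ∨ b' k = a' k + N → k ≠ j ∧ (a k = b k + M ∨ b k = a k + N)) := by
  have hij : i ≠ j := by rintro rfl; omega
  have hMk := hM k
  have hNk := hN k
  rw [ha', hb', vecMul_updateRow_one, vecMul_updateRow_one]
  rcases eq_or_ne k i with rfl | hki
  · rcases hr with rfl | rfl <;> simp [hij] <;> omega
  rcases eq_or_ne k j with rfl | hkj
  · rcases hr with rfl | rfl <;> simp [hki] <;> omega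
  · rcases hr with rfl | rfl <;> simp [hki, hkj] <;> omega

theorem exists_isMonomialLift_card_extremalCoords_lt {x : I → ι → ℂ} (hx : Tendsto x l (𝓝 0))
    (hM0 : 0 < M) (hN0 : 0 < N) (hM : ∀ k, a k ≤ b k + M) (hN : ∀ k, b k ≤ a k + N) {i j : ι}
    (hi : a i = b i + M) (hj : b j = a j + N) :
    ∃ φ T y, IsMonomialLift l x φ (T : Matrix ι ι ℕ) y ∧
      (∀ k, (a ᵥ* T) k ≤ (b ᵥ* T) k + M) ∧ (∀ k, (b ᵥ* T) k ≤ (a ᵥ* T) k + N) ∧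
      (extremalCoords (a ᵥ* T) (b ᵥ* T) M N).card < (extremalCoords a b M N).card := by
  classical
  have hij : i ≠ j := by rintro rfl; omega
  wlog hle : ∀ᶠ s in (l : Filter I), ‖x s i‖ ≤ ‖x s j‖ generalizing a b M N i j
  · have hle' : ∀ᶠ s in (l : Filter I), ‖x s j‖ ≤ ‖x s i‖ :=
      (Ultrafilter.eventually_not.2 hle).mono fun s hs => (not_le.1 hs).le
    obtain ⟨φ, T, y, hT, hN', hM', hlt⟩ := this hN0 hM0 hN hM hj hi hij.symm hle'
    exact ⟨φ, T, y, hT, hM', hN', by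
      rwa [extremalCoords_symm a b, extremalCoords_symm (a ᵥ* T)] at hlt⟩
  obtain ⟨φ, r, y, hT, hr⟩ := exists_isMonomialLift_updateRow hx hij hle
  have hbounds := vecMul_blowUp_bounds hM0 hN0 hM hN hi hj hr rfl rfl
  refine ⟨φ, _, y, hT, fun k => (hbounds k).1, fun k => (hbounds k).2.1, Finset.card_lt_card ?_⟩
  rw [Finset.ssubset_iff_of_subset]
  · refine ⟨j, by simp [extremalCoords, hj], fun hmem => ?_⟩
    exact ((hbounds j).2.2 (Finset.mem_filter.1 hmem).2).1 rfl
  · intro k hk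
    exact Finset.mem_filter.2
      ⟨Finset.mem_univ k, ((hbounds k).2.2 (Finset.mem_filter.1 hk).2).2⟩

theorem exists_isMonomialLift_bound_lt {x : I → ι → ℂ} (hx : Tendsto x l (𝓝 0)) (hM0 : 0 < M)
    (hN0 : 0 < N) (hM : ∀ k, a k ≤ b k + M) (hN : ∀ k, b k ≤ a k + N) :
    ∃ φ T y, IsMonomialLift l x φ (T : Matrix ι ι ℕ) y ∧
      (∀ k, (a ᵥ* T) k ≤ (b ᵥ* T) k + M) ∧ (∀ k, (b ᵥ* T) k ≤ (a ᵥ* T) k + N) ∧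
      ((∀ k, (a ᵥ* T) k ≠ (b ᵥ* T) k + M) ∨ ∀ k, (b ᵥ* T) k ≠ (a ᵥ* T) k + N) := by
  classical
  induction hw : (extremalCoords a b M N).card using Nat.strong_induction_on generalizing a b x with
  | _ w ih =>
  by_cases hex : (∀ k, a k ≠ b k + M) ∨ ∀ k, b k ≠ a k + N
  · exact ⟨_, 1, x, .refl hx, by simpa using ⟨hM, hN, hex⟩⟩
  push Not at hex
  obtain ⟨⟨i, hi⟩, j, hj⟩ := hex
  obtain ⟨φ, T, y, hT, hM', hN', hlt⟩ :=
    exists_isMonomialLift_card_extremalCoords_lt hx hM0 hN0 hM hN hi hj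
  obtain ⟨ψ, S, z, hS, hS'⟩ := ih _ (hw ▸ hlt) hT.tendsto hM' hN' rfl
  exact ⟨_, _, _, hT.comp hS, by simpa only [Matrix.vecMul_vecMul] using hS'⟩

theorem exists_isMonomialLift_le_or_le_of_bounds {x : I → ι → ℂ} (hx : Tendsto x l (𝓝 0))
    (hM : ∀ k, a k ≤ b k + M) (hN : ∀ k, b k ≤ a k + N) :
    ∃ φ T y, IsMonomialLift l x φ (T : Matrix ι ι ℕ) y ∧
      (a ᵥ* T ≤ b ᵥ* T ∨ b ᵥ* T ≤ a ᵥ* T) := by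
  classical
  induction hw : M + N generalizing a b x M N with
  | zero =>
    obtain rfl : M = 0 := by omega
    exact ⟨_, _, _, .refl hx, .inl (vecMul_mono _ hM)⟩
  | succ w ih =>
  rcases Nat.eq_zero_or_pos M with rfl | hM0
  · exact ⟨_, _, _, .refl hx, .inl (vecMul_mono _ hM)⟩
  rcases Nat.eq_zero_or_pos N with rfl | hN0
  · exact ⟨_, _, _, .refl hx, .inr (vecMul_mono _ hN)⟩
  obtain ⟨φ, T, y, hT, hM', hN', hlt⟩ := exists_isMonomialLift_bound_lt hx hM0 hN0 hM hN
  obtain ⟨ψ, S, z, hS, hS'⟩ : ∃ ψ S z, IsMonomialLift l y ψ (S : Matrix ι ι ℕ) z ∧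
      (a ᵥ* T ᵥ* S ≤ b ᵥ* T ᵥ* S ∨ b ᵥ* T ᵥ* S ≤ a ᵥ* T ᵥ* S) := by
    rcases hlt with hlt | hlt
    · exact ih (M := M - 1) (N := N) hT.tendsto (fun k => by have := hM' k; have := hlt k; omega)
        hN' (by omega)
    · exact ih (M := M) (N := N - 1) hT.tendsto hM'
        (fun k => by have := hN' k; have := hlt k; omega) (by omega)
  exact ⟨_, _, _, hT.comp hS, by simpa only [Matrix.vecMul_vecMul] using hS'⟩

theorem exists_isMonomialLift_le_or_le (a b : ι → ℕ) {x : I → ι → ℂ} (hx : Tendsto x l (𝓝 0)) :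
    ∃ φ T y, IsMonomialLift l x φ (T : Matrix ι ι ℕ) y ∧
      (a ᵥ* T ≤ b ᵥ* T ∨ b ᵥ* T ≤ a ᵥ* T) := by
  have hle (c d : ι → ℕ) (k : ι) : c k ≤ d k + ∑ i, c i :=
    (Finset.single_le_sum_of_canonicallyOrdered (Finset.mem_univ k)).trans le_add_self
  exact exists_isMonomialLift_le_or_le_of_bounds hx (hle a b) (hle b a)

theorem exists_isMonomialLift_forall_le {J : Type*} {s : Finset J} (hs : s.Nonempty)
    (b : J → ι → ℕ) {x : I → ι → ℂ} (hx : Tendsto x l (𝓝 0)) :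
    ∃ φ T y, IsMonomialLift l x φ (T : Matrix ι ι ℕ) y ∧
      ∃ k₀ ∈ s, ∀ k ∈ s, b k₀ ᵥ* T ≤ b k ᵥ* T := by
  classical
  induction hs using Finset.Nonempty.cons_induction with
  | singleton k => exact ⟨_, _, _, .refl hx, k, by simp⟩
  | cons k s _ _ ih =>
    obtain ⟨φ, T, y, hT, k₀, hk₀, hmin⟩ := ih
    obtain ⟨ψ, S, z, hS, hle⟩ := exists_isMonomialLift_le_or_le (b k₀ ᵥ* T) (b k ᵥ* T) hT.tendsto
    refine ⟨_, _, _, hT.comp hS, ?_⟩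
    simp only [← Matrix.vecMul_vecMul, Finset.mem_cons, exists_eq_or_imp, forall_eq_or_imp]
    have hmin' (k') (hk' : k' ∈ s) := vecMul_mono S (hmin k' hk')
    exact hle.symm.imp (fun h => ⟨le_rfl, fun k' hk' => h.trans (hmin' k' hk')⟩)
      fun h => ⟨k₀, hk₀, h, hmin'⟩

theorem exists_isMonomialLift_smul_one [DecidableEq ι] {l : Filter I} (hM : M ≠ 0) {x : I → ι → ℂ}
    (hx : Tendsto x l (𝓝 0)) :
    ∃ φ y, IsMonomialLift l x φ (M • (1 : Matrix ι ι ℕ)) y := by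
  choose r hr using fun z : ℂ => IsAlgClosed.exists_pow_nat_eq z (Nat.pos_of_ne_zero hM)
  have hr_tendsto : Tendsto r (𝓝 0) (𝓝 0) := by
    have hpow : Tendsto (fun z => ‖r z‖ ^ M) (𝓝 0) (𝓝 0) := by
      simpa [← norm_pow, hr] using (continuous_norm (E := ℂ)).tendsto 0
    have hroot := hpow.rpow_const (p := (M : ℝ)⁻¹) (.inr (by positivity))
    rw [Real.zero_rpow (by positivity)] at hroot
    refine tendsto_zero_iff_norm_tendsto_zero.2 (hroot.congr fun z => ?_)
    exact Real.pow_rpow_inv_natCast (norm_nonneg _) hM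
  refine ⟨fun p j => p j ^ M, fun s j => r (x s j), ⟨?_, ?_, ?_, ?_⟩, fun j => ?_⟩
  · exact analyticAt_pi_iff.2 fun j => (analyticAt_eval j 0).fun_pow M
  · ext j; simp [hM]
  · exact tendsto_pi_nhds.2 fun j => hr_tendsto.comp (tendsto_pi_nhds.1 hx j)
  · exact .of_forall fun s => funext fun j => hr _
  · change HasMonomialGerm _ (M • (1 : Matrix ι ι ℕ) j)
    rw [matrix_one_row]
    exact (HasMonomialGerm.eval j).pow M

end Toric

/-! ### Factors of monomial germs -/

section Germs

section Domain

variable {E : Type*} [NormedAddCommGroup E] [NormedSpace ℂ E] {x : E}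

theorem eventuallyEq_zero_or_eventuallyEq_zero_of_mul {f g : E → ℂ} (hf : AnalyticAt ℂ f x)
    (hg : AnalyticAt ℂ g x) (h : ∀ᶠ y in 𝓝 x, f y * g y = 0) : f =ᶠ[𝓝 x] 0 ∨ g =ᶠ[𝓝 x] 0 := by
  by_contra! hne
  obtain ⟨r, hr, hball⟩ := Metric.eventually_nhds_iff_ball.1
    ((hf.eventually_analyticAt.and hg.eventually_analyticAt).and h)
  obtain ⟨p, hp, hfp⟩ : ∃ p ∈ ball x r, f p ≠ 0 := by
    by_contra! hcon
    exact hne.1 (Filter.mem_of_superset (ball_mem_nhds x hr) hcon)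
  have hgp : g =ᶠ[𝓝 p] 0 := by
    filter_upwards [isOpen_ball.mem_nhds hp, (hball p hp).1.1.continuousAt.eventually_ne hfp]
      with y hy hy0
    exact (mul_eq_zero.1 (hball y hy).2).resolve_left hy0
  have hg_ball := AnalyticOnNhd.eqOn_zero_of_preconnected_of_eventuallyEq_zero (𝕜 := ℂ)
    (f := g) (U := ball x r) (fun y hy => (hball y hy).1.2) (convex_ball x r).isPreconnected hp hgp
  exact hne.2 (Filter.mem_of_superset (ball_mem_nhds x hr) hg_ball)

theorem exists_eventuallyEq_zero_of_prod {J : Type*} {s : Finset J} {f : J → E → ℂ}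
    (hf : ∀ k ∈ s, AnalyticAt ℂ (f k) x) (h : ∀ᶠ y in 𝓝 x, ∏ k ∈ s, f k y = 0) :
    ∃ k ∈ s, f k =ᶠ[𝓝 x] 0 := by
  classical
  induction s using Finset.induction_on with
  | empty => simpa using h.self_of_nhds
  | insert k s hk ih =>
    simp only [Finset.prod_insert hk] at h
    simp only [Finset.mem_insert, forall_eq_or_imp, exists_eq_or_imp] at hf ⊢
    exact (eventuallyEq_zero_or_eventuallyEq_zero_of_mul hf.1
      (Finset.analyticAt_fun_prod s hf.2) h).imp_right (ih hf.2)

end Domain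

theorem single_one_le_of_ne_zero {ι : Type*} [DecidableEq ι] {a : ι → ℕ} {i : ι}
    (hi : a i ≠ 0) : Pi.single i 1 ≤ a := fun k => by
  rcases eq_or_ne k i with rfl | hk
  · simpa using Nat.one_le_iff_ne_zero.2 hi
  · simp [hk]

variable {ι : Type*} [Fintype ι]

theorem analyticAt_update_zero [DecidableEq ι] (i : ι) (p : ι → ℂ) :
    AnalyticAt ℂ (fun y : ι → ℂ => Function.update y i 0) p := by
  rw [analyticAt_pi_iff]
  intro k
  rcases eq_or_ne k i with rfl | hk
  · simpa using analyticAt_const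
  · simpa only [Function.update_of_ne hk] using analyticAt_eval k p

theorem exists_analyticAt_eq_eval_mul [DecidableEq ι] {f : (ι → ℂ) → ℂ}
    (hf : AnalyticAt ℂ f 0) {i : ι} (h : ∀ᶠ y in 𝓝 0, f (Function.update y i 0) = 0) :
    ∃ u, AnalyticAt ℂ u 0 ∧ ∀ᶠ y in 𝓝 0, f y = y i * u y := by
  obtain ⟨H, hH, hfH⟩ := exists_analyticAt_add_smul_sub_eq_smul hf (Pi.single i 1)
  have hφ : AnalyticAt ℂ (fun y : ι → ℂ => (Function.update y i 0, y i)) 0 :=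
    (analyticAt_update_zero i 0).prod (analyticAt_eval i 0)
  have hφ0 : (Function.update (0 : ι → ℂ) i 0, (0 : ι → ℂ) i) = (0, 0) := by simp
  have hφt : Tendsto (fun y : ι → ℂ => (Function.update y i 0, y i)) (𝓝 0) (𝓝 (0, 0)) := by
    simpa only [hφ0] using hφ.continuousAt.tendsto
  refine ⟨fun y => H (Function.update y i 0, y i), AnalyticAt.fun_comp (by rwa [hφ0]) hφ, ?_⟩
  filter_upwards [hφt.eventually hfH, h] with y hy hy0
  have hsplit : Function.update y i 0 + y i • Pi.single i 1 = y := by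
    ext k
    rcases eq_or_ne k i with rfl | hk <;> simp [*]
  rwa [hsplit, hy0, sub_zero] at hy

namespace HasMonomialGerm

theorem eventually_update_eq_zero [DecidableEq ι] {f : (ι → ℂ) → ℂ} {a : ι → ℕ}
    (h : HasMonomialGerm f a) {i : ι} (hi : a i ≠ 0) :
    ∀ᶠ y in 𝓝 0, f (Function.update y i 0) = 0 := by
  obtain ⟨u, -, -, he⟩ := h
  have ht : Tendsto (fun y : ι → ℂ => Function.update y i 0) (𝓝 0) (𝓝 0) := by
    simpa using (analyticAt_update_zero i 0).continuousAt.tendsto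
  filter_upwards [ht.eventually he] with y hy
  rw [hy, Finset.prod_eq_zero (Finset.mem_univ i) (by simp [hi]), zero_mul]

theorem cancel_eval [DecidableEq ι] {f g : (ι → ℂ) → ℂ} {a : ι → ℕ} {i : ι}
    (hf : AnalyticAt ℂ f 0) (h : HasMonomialGerm g a) (hi : a i ≠ 0)
    (hgf : ∀ᶠ y in 𝓝 0, g y = y i * f y) :
    HasMonomialGerm f (a - Pi.single i 1) := by
  obtain ⟨q, hq, hgq⟩ :=
    (HasMonomialGerm.eval i).exists_eq_mul h (single_one_le_of_ne_zero hi)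
  have hmul : ∀ᶠ y in 𝓝 0, y i * (f y - q y) = 0 := by
    filter_upwards [hgf, hgq] with y hy hy'
    rw [mul_sub, ← hy, ← hy', sub_self]
  have hfq := (eventuallyEq_zero_or_eventuallyEq_zero_of_mul (analyticAt_eval i 0)
    (hf.fun_sub hq.analyticAt) hmul).resolve_left (HasMonomialGerm.eval i).not_eventuallyEq_zero
  exact hq.congr (hfq.mono fun y hy => sub_eq_zero.1 hy)

theorem exists_of_mul {f g : (ι → ℂ) → ℂ} {a : ι → ℕ} (hf : AnalyticAt ℂ f 0)
    (hg : AnalyticAt ℂ g 0) (h : HasMonomialGerm (fun y => f y * g y) a) :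
    ∃ b, HasMonomialGerm f b := by
  classical
  induction hw : ∑ i, a i generalizing f g a with
  | zero =>
    obtain rfl : a = 0 := by simpa [funext_iff] using hw
    have h0 : f 0 * g 0 ≠ 0 := fun h0 => h.apply_zero_eq_zero_iff.1 h0 rfl
    exact ⟨0, of_ne_zero hf (left_ne_zero_of_mul h0)⟩
  | succ w ih =>
    obtain ⟨i, -, hi⟩ : ∃ i ∈ Finset.univ, a i ≠ 0 :=
      Finset.exists_ne_zero_of_sum_ne_zero (hw.trans_ne w.succ_ne_zero)
    have hsum : ∑ k, (a - (Pi.single i 1 : ι → ℕ)) k = w := by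
      have hadd : ∑ k, (a - (Pi.single i 1 : ι → ℕ)) k + ∑ k, (Pi.single i 1 : ι → ℕ) k =
          ∑ k, a k := by
        rw [← Finset.sum_add_distrib]
        exact Finset.sum_congr rfl fun k _ =>
          Nat.sub_add_cancel (single_one_le_of_ne_zero hi k)
      rw [Finset.sum_pi_single' i 1 Finset.univ, if_pos (Finset.mem_univ i)] at hadd
      omega
    have h_update : AnalyticAt ℂ (fun y => f (Function.update y i 0)) 0 ∧
        AnalyticAt ℂ (fun y => g (Function.update y i 0)) 0 :=
      ⟨.fun_comp (by simpa) (analyticAt_update_zero i 0),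
        .fun_comp (by simpa) (analyticAt_update_zero i 0)⟩
    rcases eventuallyEq_zero_or_eventuallyEq_zero_of_mul h_update.1 h_update.2
      (h.eventually_update_eq_zero hi) with hz | hz
    · obtain ⟨u, hu, hfu⟩ := exists_analyticAt_eq_eval_mul hf hz
      obtain ⟨b, hb⟩ := ih hu hg (h.cancel_eval (hu.fun_mul hg) hi
        (hfu.mono fun y hy => by rw [hy, mul_assoc])) hsum
      exact ⟨_, ((HasMonomialGerm.eval i).mul hb).congr hfu⟩
    · obtain ⟨u, hu, hgu⟩ := exists_analyticAt_eq_eval_mul hg hz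
      exact ih hf hu (h.cancel_eval (hf.fun_mul hu) hi
        (hgu.mono fun y hy => by rw [hy]; ring)) hsum

theorem exists_of_prod {J : Type*} {s : Finset J} {f : J → (ι → ℂ) → ℂ} {a : ι → ℕ}
    (hf : ∀ k ∈ s, AnalyticAt ℂ (f k) 0) (h : HasMonomialGerm (fun y => ∏ k ∈ s, f k y) a)
    {k : J} (hk : k ∈ s) : ∃ b, HasMonomialGerm (f k) b := by
  classical
  have hmul : HasMonomialGerm (fun y => f k y * ∏ k' ∈ s.erase k, f k' y) a :=
    h.congr (.of_forall fun y => Finset.mul_prod_erase s (fun k => f k y) hk)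
  exact hmul.exists_of_mul (hf k hk)
    (Finset.analyticAt_fun_prod _ fun k' hk' => hf k' (Finset.mem_of_mem_erase hk'))

end HasMonomialGerm

end Germs

/-! ### Division by powers of a coordinate and Tschirnhaus form -/

section Weierstrass

theorem iteratedDeriv_eq_of_eventually_eq_sum_add_pow_mul {m i : ℕ} {q v : ℂ → ℂ} {c : ℕ → ℂ}
    (hv : AnalyticAt ℂ v 0) (hi : i < m)
    (hq : ∀ᶠ t in 𝓝 0, q t = ∑ k ∈ Finset.range m, c k * t ^ k + t ^ m * v t) :
    iteratedDeriv i q 0 = i.factorial * c i := by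
  have hrem : iteratedDeriv i (fun t => t ^ m * v t) 0 = 0 := by
    refine (natCast_le_analyticOrderAt_iff_iteratedDeriv_eq_zero (by fun_prop)).1 ?_ i hi
    exact (natCast_le_analyticOrderAt (by fun_prop)).2 ⟨v, hv, .of_forall fun t => by simp⟩
  have hsum : iteratedDeriv i (fun t => ∑ k ∈ Finset.range m, c k * t ^ k) 0 =
      i.factorial * c i := by
    rw [iteratedDeriv_fun_sum fun k _ => by fun_prop]
    simp only [iteratedDeriv_const_mul_field, iteratedDeriv_fun_pow_zero]
    simp [hi, mul_comm]
  rw [EventuallyEq.iteratedDeriv_eq i hq, iteratedDeriv_fun_add (by fun_prop)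
    (AnalyticAt.contDiffAt (by fun_prop)), hrem, hsum, add_zero]

variable {E : Type*} [NormedAddCommGroup E] [NormedSpace ℂ E]

theorem exists_analyticAt_implicit [CompleteSpace E] {D : E × ℂ → ℂ} (hD : AnalyticAt ℂ D 0)
    (h0 : D 0 = 0) (hderiv : deriv (fun t : ℂ => D (0, t)) 0 ≠ 0) :
    ∃ h : E → ℂ, AnalyticAt ℂ h 0 ∧ h 0 = 0 ∧ ∀ᶠ x in 𝓝 0, D (x, h x) = 0 := by
  have hDc : ContDiffAt ℂ ⊤ D (0, 0) := hD.contDiffAt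
  have hpartial : (fderiv ℂ D (0, 0) ∘L .inr ℂ E ℂ) 1 = deriv (fun t : ℂ => D (0, t)) 0 :=
    (hD.differentiableAt.hasFDerivAt.comp_hasDerivAt (0 : ℂ)
      ((hasDerivAt_const _ (0 : E)).prodMk (hasDerivAt_id 0))).deriv.symm
  rw [← hpartial] at hderiv
  have hinv : (fderiv ℂ D (0, 0) ∘L .inr ℂ E ℂ).IsInvertible :=
    ⟨ContinuousLinearEquiv.unitsEquivAut ℂ (Units.mk0 _ hderiv), by ext; simp⟩
  exact ⟨hDc.implicitFunction (by simp) hinv,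
    (hDc.contDiffAt_implicitFunction (by simp) hinv).analyticAt,
    hDc.implicitFunction_apply_self (by simp) hinv,
    (hDc.eventually_apply_implicitFunction (by simp) hinv).mono fun x hx => hx.trans h0⟩

variable [FiniteDimensional ℂ E]

theorem exists_analyticAt_eq_add_snd_mul {f : E × ℂ → ℂ} (hf : AnalyticAt ℂ f 0) :
    ∃ u, AnalyticAt ℂ u 0 ∧ ∀ᶠ p in 𝓝 0, f p = f (p.1, 0) + p.2 * u p := by
  obtain ⟨H, hH, hfH⟩ := exists_analyticAt_add_smul_sub_eq_smul hf (0, 1)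
  have hφ : AnalyticAt ℂ (fun p : E × ℂ => ((p.1, (0 : ℂ)), p.2)) 0 :=
    (analyticAt_fst.prod analyticAt_const).prod analyticAt_snd
  refine ⟨fun p => H ((p.1, 0), p.2), AnalyticAt.fun_comp hH hφ, ?_⟩
  filter_upwards [hφ.continuousAt.eventually hfH] with p hp
  simpa [sub_eq_iff_eq_add'] using hp

theorem exists_analyticAt_eq_sum_add_snd_pow_mul {m : ℕ} {f : E × ℂ → ℂ} (hf : AnalyticAt ℂ f 0)
    (ho : analyticOrderAt (fun t : ℂ => f (0, t)) 0 = m) :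
    ∃ (c : ℕ → E → ℂ) (u : E × ℂ → ℂ), (∀ k, AnalyticAt ℂ (c k) 0) ∧ (∀ k < m, c k 0 = 0) ∧
      AnalyticAt ℂ u 0 ∧ u 0 ≠ 0 ∧
      ∀ᶠ p in 𝓝 0, f p = ∑ k ∈ Finset.range m, c k p.1 * p.2 ^ k + p.2 ^ m * u p := by
  have hline {g : E × ℂ → ℂ} (hg : AnalyticAt ℂ g 0) : AnalyticAt ℂ (fun t : ℂ => g (0, t)) 0 :=
    AnalyticAt.fun_comp (g := g) hg (by fun_prop)
  induction m generalizing f with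
  | zero =>
    rw [Nat.cast_zero, (hline hf).analyticOrderAt_eq_zero] at ho
    exact ⟨0, f, fun _ => analyticAt_const, by simp, hf, ho, by simp⟩
  | succ m ih =>
    obtain ⟨f₁, hf₁, hdiv⟩ := exists_analyticAt_eq_add_snd_mul hf
    have hf0 : f 0 = 0 :=
      apply_eq_zero_of_analyticOrderAt_ne_zero (f := fun t : ℂ => f (0, t)) (by simp [ho])
    have ho₁ : analyticOrderAt (fun t : ℂ => f₁ (0, t)) 0 = m := by
      have hmul : (fun t : ℂ => f (0, t)) =ᶠ[𝓝 0] (id * fun t : ℂ => f₁ (0, t)) := by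
        filter_upwards [(Continuous.prodMk_right (0 : E)).continuousAt.eventually hdiv] with t ht
        simpa [← Prod.zero_eq_mk, hf0] using ht
      rw [analyticOrderAt_congr hmul, analyticOrderAt_mul analyticAt_id (hline hf₁),
        analyticOrderAt_id, Nat.cast_succ, add_comm] at ho
      exact ENat.add_left_injective_of_ne_top (by simp) ho
    obtain ⟨c, u, hc, hc0, hu, hu0, hsum⟩ := ih hf₁ ho₁
    let c' : ℕ → E → ℂ := fun k => Nat.casesOn k (fun x => f (x, 0)) c
    have hc' : AnalyticAt ℂ (c' 0) 0 := AnalyticAt.fun_comp (g := f) hf (by fun_prop)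
    refine ⟨c', u, Nat.rec hc' fun k _ => hc k, Nat.rec (fun _ => hf0) fun k _ hk => hc0 k
      (by omega), hu, hu0, ?_⟩
    filter_upwards [hdiv, hsum] with p hp hp'
    have hsum' : p.2 * ∑ k ∈ Finset.range m, c k p.1 * p.2 ^ k =
        ∑ k ∈ Finset.range m, c' (k + 1) p.1 * p.2 ^ (k + 1) := by
      rw [Finset.mul_sum]
      exact Finset.sum_congr rfl fun k _ => by ring
    rw [hp, hp', mul_add, hsum', Finset.sum_range_succ', show c' 0 p.1 = f (p.1, 0) from rfl]
    ring

theorem iteratedDeriv_comp_prodMk_add {f : E × ℂ → ℂ} {p : E × ℂ} (hf : AnalyticAt ℂ f p) (j : ℕ) :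
    iteratedDeriv j (fun t => f (p.1, t + p.2)) 0 = iteratedFDeriv ℂ j f p fun _ => (0, 1) := by
  have h := iteratedDeriv_comp_add_smul (g := f) (x := p) (v := (0, 1)) (s := 0) j
    (by simpa using hf.eventually_analyticAt.mono fun _ h => h.differentiableAt)
  simpa [Prod.add_def, add_comm] using h

theorem exists_shift_iteratedFDeriv_eq_zero {j : ℕ} {f : E × ℂ → ℂ} (hf : AnalyticAt ℂ f 0)
    (ho : analyticOrderAt (fun t : ℂ => f (0, t)) 0 = (j + 1 : ℕ)) :
    ∃ h : E → ℂ, AnalyticAt ℂ h 0 ∧ h 0 = 0 ∧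
      ∀ᶠ x in 𝓝 0, iteratedFDeriv ℂ j f (x, h x) (fun _ => (0, 1)) = 0 := by
  have hline : AnalyticAt ℂ (fun t : ℂ => f (0, t)) 0 :=
    AnalyticAt.fun_comp (g := f) hf (by fun_prop)
  obtain ⟨r, hr, hball⟩ := hf.exists_ball_analyticOnNhd
  have hD : AnalyticAt ℂ (fun p => iteratedFDeriv ℂ j f p fun _ => (0, 1)) 0 :=
    (ContinuousMultilinearMap.apply ℂ (fun _ : Fin j => E × ℂ) ℂ fun _ => (0, 1)).analyticAt _
      |>.comp (hball.iteratedFDeriv j 0 (mem_ball_self hr))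
  have hvert : ∀ᶠ s in 𝓝 (0 : ℂ), iteratedFDeriv ℂ j f (0, s) (fun _ => (0, 1)) =
      iteratedDeriv j (fun t => f (0, t)) s := by
    filter_upwards [(Continuous.prodMk_right (0 : E)).continuousAt.eventually
      hf.eventually_analyticAt] with s hs
    rw [← iteratedDeriv_comp_prodMk_add hs, iteratedDeriv_comp_add_const (f := fun t => f (0, t))]
    simp
  obtain ⟨hlow, htop⟩ := (analyticOrderAt_eq_nat_iff_iteratedDeriv_eq_zero hline).1 ho
  have : CompleteSpace E := FiniteDimensional.complete ℂ E
  refine exists_analyticAt_implicit hD (hvert.self_of_nhds.trans (hlow j j.lt_succ_self)) ?_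
  rwa [Filter.EventuallyEq.deriv_eq hvert, ← iteratedDeriv_succ]

theorem exists_tschirnhaus {j : ℕ} {f : E × ℂ → ℂ} (hf : AnalyticAt ℂ f 0)
    (ho : analyticOrderAt (fun t : ℂ => f (0, t)) 0 = (j + 1 : ℕ)) :
    ∃ (h : E → ℂ) (c : ℕ → E → ℂ) (u : E × ℂ → ℂ), AnalyticAt ℂ h 0 ∧ h 0 = 0 ∧
      (∀ k, AnalyticAt ℂ (c k) 0) ∧ (∀ k < j, c k 0 = 0) ∧ AnalyticAt ℂ u 0 ∧ u 0 ≠ 0 ∧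
      ∀ᶠ p in 𝓝 0, f (p.1, p.2 + h p.1) =
        ∑ k ∈ Finset.range j, c k p.1 * p.2 ^ k + p.2 ^ (j + 1) * u p := by
  obtain ⟨h, hh, hh0, hvanish⟩ := exists_shift_iteratedFDeriv_eq_zero hf ho
  have hshift : AnalyticAt ℂ (fun p : E × ℂ => f (p.1, p.2 + h p.1)) 0 :=
    AnalyticAt.fun_comp (g := f) (by simpa [hh0, ← Prod.zero_eq_mk] using hf) (analyticAt_fst.prod
      (analyticAt_snd.fun_add (AnalyticAt.fun_comp (g := h) hh analyticAt_fst)))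
  obtain ⟨c, u, hc, hc0, hu, hu0, hsum⟩ :=
    exists_analyticAt_eq_sum_add_snd_pow_mul (m := j + 1) hshift (by simpa [hh0] using ho)
  have hgraph : ContinuousAt (fun x => (x, h x)) 0 := continuousAt_id.prodMk hh.continuousAt
  have hcj : ∀ᶠ x in 𝓝 0, c j x = 0 := by
    have hslice : ∀ᶠ x in 𝓝 (0 : E), ∀ᶠ t in 𝓝 (0 : ℂ), (f (x, t + h x) =
        ∑ k ∈ Finset.range (j + 1), c k x * t ^ k + t ^ (j + 1) * u (x, t)) ∧
        AnalyticAt ℂ u (x, t) := by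
      have hprod := hsum.and hu.eventually_analyticAt
      rw [Prod.zero_eq_mk, nhds_prod_eq] at hprod
      exact hprod.curry
    filter_upwards [hvanish, hslice, hgraph.eventually (by
      simpa [hh0, ← Prod.zero_eq_mk] using hf.eventually_analyticAt)] with x hx hsx hfx
    have hcoeff := iteratedDeriv_eq_of_eventually_eq_sum_add_pow_mul (v := fun t => u (x, t))
      (AnalyticAt.fun_comp (g := u) hsx.self_of_nhds.2 (analyticAt_const.prod analyticAt_id))
      j.lt_succ_self (hsx.mono fun t ht => ht.1)
    rw [iteratedDeriv_comp_prodMk_add (p := (x, h x)) hfx, hx, zero_eq_mul] at hcoeff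
    exact hcoeff.resolve_left (Nat.cast_ne_zero.2 j.factorial_ne_zero)
  refine ⟨h, c, u, hh, hh0, hc, fun k hk => hc0 k (by omega), hu, hu0, ?_⟩
  filter_upwards [hsum, continuousAt_fst.eventually hcj] with p hp hcp
  rw [hp, Finset.sum_range_succ, hcp, zero_mul, add_zero]

end Weierstrass

/-! ### Local uniformization: preparation of the coefficients -/

section Uniformization

variable {I E F κ : Type*} [NormedAddCommGroup E] [NormedSpace ℂ E] [NormedAddCommGroup F]
  [NormedSpace ℂ F] [Fintype κ]

/-- The family of points `x` lifts through an analytic map germ which makes `f` a monomial times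
a unit. -/
def IsUniformizableAlong (κ : Type*) [Fintype κ] (l : Filter I) (x : I → E) (f : E → ℂ) : Prop :=
  ∃ (φ : (κ → ℂ) → E) (y : I → κ → ℂ) (a : κ → ℕ),
    IsGermLift l x φ y ∧ HasMonomialGerm (fun p => f (φ p)) a

/-- Local uniformization in dimension `n` along the filter `l`. -/
def UniformizesGerms (l : Filter I) (n : ℕ) : Prop :=
  ∀ f : (Fin n → ℂ) → ℂ, AnalyticAt ℂ f 0 → ¬ f =ᶠ[𝓝 0] 0 →
    ∀ x : I → Fin n → ℂ, Tendsto x l (𝓝 0) → IsUniformizableAlong (Fin n) l x f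

variable {l : Filter I}

theorem IsUniformizableAlong.congr {x : I → E} {f g : E → ℂ} (h : IsUniformizableAlong κ l x f)
    (hfg : g =ᶠ[𝓝 0] f) : IsUniformizableAlong κ l x g := by
  obtain ⟨φ, y, a, hφ, ha⟩ := h
  exact ⟨φ, y, a, hφ, ha.congr (hφ.tendsto_map.eventually hfg)⟩

theorem IsGermLift.isUniformizableAlong {x : I → E} {φ : F → E} {y : I → F} {f : E → ℂ}
    (h : IsGermLift l x φ y) (hf : IsUniformizableAlong κ l y fun p => f (φ p)) :
    IsUniformizableAlong κ l x f := by
  obtain ⟨ψ, z, a, hψ, ha⟩ := hf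
  exact ⟨_, z, a, h.comp hψ, ha⟩

theorem isUniformizableAlong_of_ne_zero {x : I → κ → ℂ} {f : (κ → ℂ) → ℂ}
    (hx : Tendsto x l (𝓝 0)) (hf : AnalyticAt ℂ f 0) (h0 : f 0 ≠ 0) :
    IsUniformizableAlong κ l x f :=
  ⟨_, _, 0, .refl hx, .of_ne_zero hf h0⟩

theorem isGermLift_continuousLinearEquiv {x : I → E} (hx : Tendsto x l (𝓝 0)) (A : F ≃L[ℂ] E) :
    IsGermLift l x A fun i => A.symm (x i) where
  analyticAt := A.analyticAt 0
  map_zero := map_zero A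
  tendsto := by simpa [Function.comp_def] using (A.symm.continuous.tendsto 0).comp hx
  eventually_eq := .of_forall fun i => A.apply_symm_apply _

theorem analyticAt_comp_fst_zero {G : Type*} [NormedAddCommGroup G] [NormedSpace ℂ G] {g : E → G}
    (hg : AnalyticAt ℂ g 0) : AnalyticAt ℂ (fun p : E × F => g p.1) 0 :=
  AnalyticAt.fun_comp (f := Prod.fst) hg analyticAt_fst

theorem IsGermLift.prodMap_id {G : Type*} [NormedAddCommGroup G] [NormedSpace ℂ G]
    {x : I → E × G} {ψ : F → E} {y : I → F} (hx : Tendsto x l (𝓝 0))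
    (h : IsGermLift l (fun i => (x i).1) ψ y) :
    IsGermLift l x (fun p : F × G => (ψ p.1, p.2)) fun i => (y i, (x i).2) where
  analyticAt := (analyticAt_comp_fst_zero h.analyticAt).prod analyticAt_snd
  map_zero := by simp [h.map_zero]
  tendsto := h.tendsto.prodMk_nhds hx.snd_nhds
  eventually_eq := h.eventually_eq.mono fun i hi => Prod.ext hi rfl

/-- The splitting of `ℂⁿ⁺¹` into the last `n` coordinates and the first one. -/
noncomputable def tailHeadEquiv (n : ℕ) : (Fin (n + 1) → ℂ) ≃L[ℂ] (Fin n → ℂ) × ℂ :=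
  (Fin.consEquivL ℂ fun _ => ℂ).symm.trans (.prodComm ℂ ℂ (Fin n → ℂ))

theorem tailHeadEquiv_apply {n : ℕ} (p : Fin (n + 1) → ℂ) :
    tailHeadEquiv n p = (Fin.tail p, p 0) := rfl

variable {n : ℕ}

theorem HasMonomialGerm.comp_tail {g : (Fin n → ℂ) → ℂ} {a : Fin n → ℕ}
    (hg : HasMonomialGerm g a) :
    HasMonomialGerm (fun p => g (tailHeadEquiv n p).1) (Fin.cons 0 a : Fin (n + 1) → ℕ) := by
  have h_tail : AnalyticAt ℂ (fun p : Fin (n + 1) → ℂ => Fin.tail p) 0 :=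
    analyticAt_pi_iff.2 fun j => analyticAt_eval j.succ 0
  have h := hg.comp h_tail rfl fun j => HasMonomialGerm.eval j.succ
  have ha : (a ᵥ* fun j : Fin n => Pi.single j.succ 1) = (Fin.cons 0 a : Fin (n + 1) → ℕ) := by
    ext k
    refine Fin.cases ?_ (fun k => ?_) k <;> simp [Matrix.vecMul, dotProduct, Pi.single_apply]
  simpa only [ha, tailHeadEquiv_apply] using h

theorem UniformizesGerms.isUniformizableAlong_mul_snd_pow (hl : UniformizesGerms l n)
    {g : (Fin n → ℂ) → ℂ} (hg : AnalyticAt ℂ g 0) (hg0 : ¬ g =ᶠ[𝓝 0] 0)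
    {u : (Fin n → ℂ) × ℂ → ℂ} (hu : AnalyticAt ℂ u 0) (hu0 : u 0 ≠ 0)
    {x : I → (Fin n → ℂ) × ℂ} (hx : Tendsto x l (𝓝 0)) (m : ℕ) :
    IsUniformizableAlong (Fin (n + 1)) l x fun p => g p.1 * (p.2 ^ m * u p) := by
  obtain ⟨ψ, y, a, hψ, ha⟩ := hl g hg hg0 _ hx.fst_nhds
  have hlift := hψ.prodMap_id hx
  have hlift' := hlift.comp (isGermLift_continuousLinearEquiv hlift.tendsto (tailHeadEquiv n))
  refine ⟨_, _, _, hlift', ha.comp_tail.mul (((HasMonomialGerm.eval 0).pow m).mul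
    (.of_ne_zero (hlift'.analyticAt_comp hu) ?_))⟩
  simpa only [hlift'.map_zero] using hu0

theorem exists_isMonomialLift_smul_le {ι J : Type*} [Fintype ι] {l : Ultrafilter I}
    {s : Finset J} (hs : s.Nonempty) {w : J → ℕ} (hw : ∀ k ∈ s, w k ≠ 0) (b : J → ι → ℕ)
    {x : I → ι → ℂ} (hx : Tendsto x l (𝓝 0)) :
    ∃ φ T y, IsMonomialLift l x φ (T : Matrix ι ι ℕ) y ∧
      ∃ γ : ι → ℕ, (∀ k ∈ s, w k • γ ≤ b k ᵥ* T) ∧ ∃ k₀ ∈ s, b k₀ ᵥ* T = w k₀ • γ := by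
  classical
  set N := ∏ k ∈ s, w k
  obtain ⟨φ, T, y, hφ, k₀, hk₀, hmin⟩ :=
    exists_isMonomialLift_forall_le hs (fun k => (N / w k) • b k) hx
  obtain ⟨ρ, z, hρ⟩ :=
    exists_isMonomialLift_smul_one (Finset.prod_ne_zero_iff.2 hw : N ≠ 0) hφ.tendsto
  have hscale : ∀ k ∈ s, b k ᵥ* (T * N • (1 : Matrix ι ι ℕ)) = w k • ((N / w k) • b k) ᵥ* T := by
    intro k hk
    rw [Matrix.mul_smul, mul_one, Matrix.vecMul_smul, Matrix.smul_vecMul, smul_smul,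
      Nat.mul_div_cancel' (Finset.dvd_prod_of_mem w hk)]
  exact ⟨_, _, _, hφ.comp hρ, ((N / w k₀) • b k₀) ᵥ* T,
    fun k hk => hscale k hk ▸ smul_le_smul_of_nonneg_left (hmin k hk) (Nat.zero_le _),
    k₀, hk₀, hscale k₀ hk₀⟩

theorem UniformizesGerms.exists_isGermLift_mul_prod {J : Type*} (hl : UniformizesGerms l n)
    {g : (Fin n → ℂ) → ℂ} (hg : AnalyticAt ℂ g 0) (hg0 : ¬ g =ᶠ[𝓝 0] 0) {s : Finset J}
    {c : J → (Fin n → ℂ) → ℂ} (hc : ∀ k ∈ s, AnalyticAt ℂ (c k) 0)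
    (hc0 : ∀ k ∈ s, ¬ c k =ᶠ[𝓝 0] 0) {x : I → Fin n → ℂ} (hx : Tendsto x l (𝓝 0)) :
    ∃ (ψ : (Fin n → ℂ) → Fin n → ℂ) (y : I → Fin n → ℂ), IsGermLift l x ψ y ∧
      (∃ e, HasMonomialGerm (fun p => g (ψ p)) e) ∧
      ∀ k ∈ s, ∃ b, HasMonomialGerm (fun p => c k (ψ p)) b := by
  have hprod : AnalyticAt ℂ (fun p => ∏ k ∈ s, c k p) 0 := s.analyticAt_fun_prod hc
  obtain ⟨ψ, y, a, hψ, ha⟩ := hl (fun p => g p * ∏ k ∈ s, c k p) (hg.fun_mul hprod) (fun h => by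
    rcases eventuallyEq_zero_or_eventuallyEq_zero_of_mul hg hprod h with h | h
    · exact hg0 h
    · obtain ⟨k, hk, hk0⟩ := exists_eventuallyEq_zero_of_prod hc h
      exact hc0 k hk hk0) x hx
  have hgψ := hψ.analyticAt_comp hg
  have hprodψ := hψ.analyticAt_comp hprod
  obtain ⟨b, hb⟩ := HasMonomialGerm.exists_of_mul hprodψ hgψ (by simpa only [mul_comm] using ha)
  exact ⟨ψ, y, hψ, HasMonomialGerm.exists_of_mul hgψ hprodψ ha, fun k hk =>
    hb.exists_of_prod (fun k hk => hψ.analyticAt_comp (hc k hk)) hk⟩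

/-- The exponent `γ` is the minimum of `ord (c k) / (j + 1 - k)`, made integral by ramification. -/
theorem UniformizesGerms.exists_isGermLift_eq_monomial_pow_mul {l : Ultrafilter I}
    (hl : UniformizesGerms (l : Filter I) n) {g : (Fin n → ℂ) → ℂ} (hg : AnalyticAt ℂ g 0)
    (hg0 : ¬ g =ᶠ[𝓝 0] 0) {j : ℕ} {c : ℕ → (Fin n → ℂ) → ℂ} (hc : ∀ k, AnalyticAt ℂ (c k) 0)
    (hc0 : ∀ k < j, c k 0 = 0) (hcz : ∃ k < j, ¬ c k =ᶠ[𝓝 0] 0) {x : I → Fin n → ℂ}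
    (hx : Tendsto x l (𝓝 0)) :
    ∃ (ψ : (Fin n → ℂ) → Fin n → ℂ) (y : I → Fin n → ℂ), IsGermLift l x ψ y ∧
      (∃ e, HasMonomialGerm (fun p => g (ψ p)) e) ∧
      ∃ (γ : Fin n → ℕ) (C : ℕ → (Fin n → ℂ) → ℂ), γ ≠ 0 ∧ (∀ k, AnalyticAt ℂ (C k) 0) ∧
        (∃ k < j, C k 0 ≠ 0) ∧
        ∀ k < j, ∀ᶠ p in 𝓝 0, c k (ψ p) = (∏ i, p i ^ γ i) ^ (j + 1 - k) * C k p := by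
  classical
  set K := (Finset.range j).filter fun k => ¬ c k =ᶠ[𝓝 0] 0
  have hKj {k : ℕ} (hk : k ∈ K) : k < j := Finset.mem_range.1 (Finset.mem_filter.1 hk).1
  have hK : K.Nonempty := let ⟨k, hk, hk0⟩ := hcz; ⟨k, by simp [K, hk, hk0]⟩
  obtain ⟨ψ, y, hψ, ⟨e, he⟩, hb⟩ := hl.exists_isGermLift_mul_prod hg hg0 (s := K)
    (fun k _ => hc k) (fun k hk => (Finset.mem_filter.1 hk).2) hx
  choose! b hb using hb
  obtain ⟨φ, T, z, hφ, γ, hγ, k₀, hk₀, hγk₀⟩ := exists_isMonomialLift_smul_le hK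
    (w := fun k => j + 1 - k) (fun k hk => by have := hKj hk; omega) b hψ.tendsto
  have hψφ := hψ.comp hφ.toIsGermLift
  have hmon (k : ℕ) : HasMonomialGerm (fun p : Fin n → ℂ => (∏ i, p i ^ γ i) ^ (j + 1 - k))
      ((j + 1 - k) • γ) :=
    .pow ⟨1, analyticAt_const, one_ne_zero, by simp⟩ _
  have hdiv (k : ℕ) : ∃ C : (Fin n → ℂ) → ℂ, AnalyticAt ℂ C 0 ∧ (k = k₀ → C 0 ≠ 0) ∧ (k < j →
      ∀ᶠ p in 𝓝 0, c k (ψ (φ p)) = (∏ i, p i ^ γ i) ^ (j + 1 - k) * C p) := by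
    by_cases hk : k ∈ K
    · obtain ⟨C, hC, hCe⟩ := (hmon k).exists_eq_mul ((hb k hk).comp_lift hφ) (hγ k hk)
      refine ⟨C, hC.analyticAt, ?_, fun _ => hCe⟩
      rintro rfl
      rw [Ne, hC.apply_zero_eq_zero_iff, hγk₀, tsub_self, not_not]
    · refine ⟨0, analyticAt_const, fun h => absurd (h ▸ hk₀) hk, fun hkj => ?_⟩
      have hzero : c k =ᶠ[𝓝 0] 0 := by simpa [K, hkj] using hk
      simpa using hψφ.tendsto_map.eventually hzero
  choose C hC hCk₀ hCe using hdiv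
  refine ⟨_, z, hψφ, ⟨_, he.comp_lift hφ⟩, γ, C, ?_, hC, ⟨k₀, hKj hk₀, hCk₀ k₀ rfl⟩, hCe⟩
  rintro rfl
  have hvanish : c k₀ (ψ (φ 0)) = 0 := by rw [hψφ.map_zero, hc0 k₀ (hKj hk₀)]
  exact ((hb k₀ hk₀).comp_lift hφ).apply_zero_eq_zero_iff.1 hvanish (by simpa using hγk₀)

end Uniformization

/-! ### Local uniformization: descent on the order -/

theorem exists_analyticOrderAt_lt_of_tschirnhaus {j k₀ : ℕ} (hk₀ : k₀ < j) {c : ℕ → ℂ}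
    (hc : c k₀ ≠ 0) {u ζ : ℂ} (hu : u ≠ 0) {q : ℂ → ℂ} (hq : AnalyticAt ℂ q 0)
    (he : ∀ t, q t = ∑ k ∈ Finset.range j, c k * (t + ζ) ^ k + (t + ζ) ^ (j + 1) * u) :
    ∃ m < j + 1, analyticOrderAt q 0 = m := by
  by_contra! hcon
  have hle : ((j + 1 : ℕ) : ℕ∞) ≤ analyticOrderAt q 0 := by
    by_contra! hlt
    obtain ⟨m, hm⟩ := ENat.ne_top_iff_exists.1 (ne_top_of_lt hlt)
    rw [← hm] at hlt
    exact hcon m (by exact_mod_cast hlt) hm.symm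
  have hderiv := (natCast_le_analyticOrderAt_iff_iteratedDeriv_eq_zero hq).1 hle
  -- The coefficient of `t ^ j` in `q` is `(j + 1) * ζ * u`.
  have hζ : ζ = 0 := by
    have hpow (k : ℕ) : iteratedDeriv j (fun t => (t + ζ) ^ k) 0 =
        k.descFactorial j * ζ ^ (k - j) := by
      simp [iteratedDeriv_comp_add_const (f := fun t : ℂ => t ^ k), iteratedDeriv_pow]
    have hlow : ∑ k ∈ Finset.range j, c k * (k.descFactorial j * ζ ^ (k - j)) = 0 :=
      Finset.sum_eq_zero fun k hk => by
        simp [Nat.descFactorial_eq_zero_iff_lt.2 (Finset.mem_range.1 hk)]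
    have hj := hderiv j j.lt_succ_self
    rw [funext he, iteratedDeriv_fun_add (by fun_prop) (by fun_prop),
      iteratedDeriv_fun_sum fun k _ => by fun_prop] at hj
    simpa [iteratedDeriv_const_mul_field, iteratedDeriv_mul_const_field, hpow, hlow, hu,
      Nat.descFactorial_eq_zero_iff_lt] using hj
  refine mul_ne_zero (Nat.cast_ne_zero.2 k₀.factorial_ne_zero) hc ?_
  rw [← iteratedDeriv_eq_of_eventually_eq_sum_add_pow_mul (m := j) (c := c) (q := q)
    (v := fun t => t * u) (by fun_prop) hk₀, hderiv k₀ (by omega)]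
  refine .of_forall fun t => ?_
  simp only [he, hζ, add_zero]
  rw [pow_succ, mul_assoc]

section Descent

variable {I ι : Type*} [Fintype ι]

/-- The function `F` is a polynomial of Tschirnhaus form in the last coordinate `z`, up to a unit
in its leading coefficient, and the coefficient of `z ^ k` is divisible by `t ^ ((j + 1 - k) • γ)`:
all of them lie above the edge of the Newton polygon which `γ` describes. -/
structure IsPrepared (j : ℕ) (γ : ι → ℕ) (C : ℕ → (ι → ℂ) → ℂ) (u F : (ι → ℂ) × ℂ → ℂ) :
    Prop where
  analyticAt_coeff (k : ℕ) : AnalyticAt ℂ (C k) 0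
  analyticAt_unit : AnalyticAt ℂ u 0
  unit_ne_zero : u 0 ≠ 0
  eventually_eq : ∀ᶠ p in 𝓝 0, F p = ∑ k ∈ Finset.range j,
    (∏ i, p.1 i ^ γ i) ^ (j + 1 - k) * C k p.1 * p.2 ^ k + p.2 ^ (j + 1) * u p

/-- The chart `z = t ^ γ * (z' + ζ)` of the weighted blow-up which lowers the order. -/
def weightedBlowUpChart (γ : ι → ℕ) (ζ : ℂ) (p : (ι → ℂ) × ℂ) : (ι → ℂ) × ℂ :=
  (p.1, (∏ i, p.1 i ^ γ i) * (p.2 + ζ))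

theorem analyticAt_snd_add_const {E : Type*} [NormedAddCommGroup E] [NormedSpace ℂ E] (ζ : ℂ)
    (p : E × ℂ) : AnalyticAt ℂ (fun q : E × ℂ => q.2 + ζ) p :=
  analyticAt_snd.fun_add analyticAt_const

theorem weightedBlowUpChart_zero_left {γ : ι → ℕ} (hγ : γ ≠ 0) (ζ t : ℂ) :
    weightedBlowUpChart γ ζ (0, t) = 0 := by
  obtain ⟨i, hi⟩ := Function.ne_iff.1 hγ
  have hprod : ∏ i, (0 : ι → ℂ) i ^ γ i = 0 :=
    Finset.prod_eq_zero (Finset.mem_univ i) (by simpa using hi)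
  simp only [weightedBlowUpChart, hprod, zero_mul, Prod.mk_zero_zero]

theorem exists_isGermLift_weightedBlowUpChart {l : Ultrafilter I} {γ : ι → ℕ} (hγ : γ ≠ 0)
    {y : I → (ι → ℂ) × ℂ} (hy : Tendsto y l (𝓝 0)) {B : ℝ}
    (hB : ∀ᶠ i in (l : Filter I), ‖(y i).2‖ ≤ B * ‖∏ k, (y i).1 k ^ γ k‖) :
    ∃ ζ z, IsGermLift l y (weightedBlowUpChart γ ζ) z := by
  set τ : I → ℂ := fun i => ∏ k, (y i).1 k ^ γ k
  obtain ⟨ζ, hζ⟩ : ∃ ζ, Tendsto (fun i => (y i).2 / τ i) l (𝓝 ζ) := by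
    refine exists_tendsto_ultrafilter_of_eventually_norm_le (C := max B 0) (hB.mono fun i hi => ?_)
    rw [norm_div]
    exact div_le_of_le_mul₀ (norm_nonneg _) (le_max_right _ _)
      (hi.trans (mul_le_mul_of_nonneg_right (le_max_left _ _) (norm_nonneg _)))
  refine ⟨ζ, fun i => ((y i).1, (y i).2 / τ i - ζ), ?_, weightedBlowUpChart_zero_left hγ ζ 0,
    hy.fst_nhds.prodMk_nhds (by simpa using hζ.sub_const ζ), ?_⟩
  · exact analyticAt_fst.prod (((analyticAt_monomial γ _).comp analyticAt_fst).fun_mul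
      (analyticAt_snd_add_const ζ _))
  · filter_upwards [hB] with i hi
    refine Prod.ext rfl ?_
    change τ i * ((y i).2 / τ i - ζ + ζ) = (y i).2
    rw [sub_add_cancel]
    refine mul_div_cancel_of_imp' fun h0 => ?_
    rwa [show ∏ k, (y i).1 k ^ γ k = 0 from h0, norm_zero, mul_zero, norm_le_zero_iff] at hi

theorem IsPrepared.exists_comp_weightedBlowUpChart {l : Filter I} {j : ℕ} {γ : ι → ℕ}
    (hγ : γ ≠ 0) {C : ℕ → (ι → ℂ) → ℂ} {u F : (ι → ℂ) × ℂ → ℂ} (hF : IsPrepared j γ C u F)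
    (hC : ∃ k < j, C k 0 ≠ 0) {ζ : ℂ} {y z : I → (ι → ℂ) × ℂ}
    (hφ : IsGermLift l y (weightedBlowUpChart γ ζ) z) :
    ∃ f : (ι → ℂ) × ℂ → ℂ, AnalyticAt ℂ f 0 ∧
      (∃ m < j + 1, analyticOrderAt (fun t : ℂ => f (0, t)) 0 = m) ∧
      ∀ᶠ p in 𝓝 0, F (weightedBlowUpChart γ ζ p) = (∏ i, p.1 i ^ γ i) ^ (j + 1) * f p := by
  have hf : AnalyticAt ℂ (fun p : (ι → ℂ) × ℂ => ∑ k ∈ Finset.range j, C k p.1 * (p.2 + ζ) ^ k +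
      (p.2 + ζ) ^ (j + 1) * u (weightedBlowUpChart γ ζ p)) 0 :=
    (Finset.analyticAt_fun_sum _ fun k _ =>
      (analyticAt_comp_fst_zero (hF.analyticAt_coeff k)).fun_mul
        ((analyticAt_snd_add_const ζ 0).fun_pow k)).fun_add
      (((analyticAt_snd_add_const ζ 0).fun_pow _).fun_mul (hφ.analyticAt_comp hF.analyticAt_unit))
  refine ⟨_, hf, ?_, ?_⟩
  · obtain ⟨k₀, hk₀, hCk₀⟩ := hC
    refine exists_analyticOrderAt_lt_of_tschirnhaus (c := fun k => C k 0) hk₀ hCk₀ (u := u 0)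
      (ζ := ζ) hF.unit_ne_zero (AnalyticAt.fun_comp (f := fun t => (0, t)) hf (by fun_prop))
      fun t => ?_
    simp only [weightedBlowUpChart_zero_left hγ]
  · filter_upwards [hφ.tendsto_map.eventually hF.eventually_eq] with p hp
    rw [hp]
    simp only [weightedBlowUpChart, mul_add _ (Finset.sum _ _), Finset.mul_sum, mul_pow]
    congr 1
    · refine Finset.sum_congr rfl fun k hk => ?_
      rw [← pow_sub_mul_pow _ (show k ≤ j + 1 by have := Finset.mem_range.1 hk; omega)]
      ring
    · rw [mul_assoc]

variable {n : ℕ}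

theorem exists_isGermLift_monomial_eq_snd_mul {l : Ultrafilter I} {γ : Fin n → ℕ}
    {y : I → (Fin n → ℂ) × ℂ} (hy : Tendsto y l (𝓝 0))
    (hB : ∀ B : ℝ, ¬ ∀ᶠ i in (l : Filter I), ‖(y i).2‖ ≤ B * ‖∏ k, (y i).1 k ^ γ k‖) :
    ∃ φ T z, IsMonomialLift l (fun i => (tailHeadEquiv n).symm (y i)) φ
      (T : Matrix (Fin (n + 1)) (Fin (n + 1)) ℕ) z ∧
      ∃ ρ : (Fin (n + 1) → ℂ) → ℂ, AnalyticAt ℂ ρ 0 ∧ ρ 0 = 0 ∧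
        ∀ᶠ p in 𝓝 0, ∏ i, (tailHeadEquiv n (φ p)).1 i ^ γ i = (tailHeadEquiv n (φ p)).2 * ρ p := by
  have hS := isGermLift_continuousLinearEquiv hy (tailHeadEquiv n)
  have ht : HasMonomialGerm (fun p : Fin n → ℂ => ∏ i, p i ^ γ i) γ :=
    ⟨1, analyticAt_const, one_ne_zero, by simp⟩
  obtain ⟨φ, T, z, hφ, hle⟩ :=
    exists_isMonomialLift_le_or_le (Pi.single 0 1) (Fin.cons 0 γ) hS.tendsto
  have hz := (HasMonomialGerm.eval (0 : Fin (n + 1))).comp_lift hφ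
  have htφ := ht.comp_tail.comp_lift hφ
  have hndvd : ¬ ∃ ρ : (Fin (n + 1) → ℂ) → ℂ, AnalyticAt ℂ ρ 0 ∧ ∀ᶠ p in 𝓝 0,
      (tailHeadEquiv n (φ p)).2 = (∏ i, (tailHeadEquiv n (φ p)).1 i ^ γ i) * ρ p := by
    rintro ⟨ρ, hρ, hρe⟩
    have hbound := hρ.continuousAt.norm.eventually_lt_const (lt_add_one _)
    refine hB (‖ρ 0‖ + 1) ?_
    filter_upwards [hφ.tendsto.eventually (hρe.and hbound),
      (hS.comp hφ.toIsGermLift).eventually_eq] with i hi hyi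
    rw [← hyi, hi.1, norm_mul, mul_comm]
    exact mul_le_mul_of_nonneg_right hi.2.le (norm_nonneg _)
  rcases hle with hle | hle
  · obtain ⟨ρ, hρ, hρe⟩ := hz.exists_eq_mul htφ hle
    refine ⟨φ, T, z, hφ, ρ, hρ.analyticAt, not_ne_iff.1 fun hne => hndvd ?_, hρe⟩
    refine ⟨fun p => (ρ p)⁻¹, hρ.analyticAt.fun_inv hne, ?_⟩
    filter_upwards [hρe, hρ.analyticAt.continuousAt.eventually_ne hne] with p hp hp0
    exact (eq_mul_inv_iff_mul_eq₀ hp0).2 hp.symm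
  · obtain ⟨ρ, hρ, hρe⟩ := htφ.exists_eq_mul hz hle
    exact absurd ⟨ρ, hρ.analyticAt, hρe⟩ hndvd

theorem IsPrepared.isUniformizableAlong_of_not_bounded {l : Ultrafilter I} {j : ℕ} {γ : Fin n → ℕ}
    {C : ℕ → (Fin n → ℂ) → ℂ} {u F : (Fin n → ℂ) × ℂ → ℂ} (hF : IsPrepared j γ C u F)
    {g : (Fin n → ℂ) → ℂ} {e : Fin n → ℕ} (hg : HasMonomialGerm g e)
    {y : I → (Fin n → ℂ) × ℂ} (hy : Tendsto y l (𝓝 0))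
    (hB : ∀ B : ℝ, ¬ ∀ᶠ i in (l : Filter I), ‖(y i).2‖ ≤ B * ‖∏ k, (y i).1 k ^ γ k‖) :
    IsUniformizableAlong (Fin (n + 1)) l y fun p => g p.1 * F p := by
  obtain ⟨φ, T, z, hφ, ρ, hρ, hρ0, hρe⟩ := exists_isGermLift_monomial_eq_snd_mul hy hB
  have hlift := (isGermLift_continuousLinearEquiv hy (tailHeadEquiv n)).comp hφ.toIsGermLift
  let v : (Fin (n + 1) → ℂ) → ℂ := fun p =>
    ∑ k ∈ Finset.range j, ρ p ^ (j + 1 - k) * C k (tailHeadEquiv n (φ p)).1 +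
      u (tailHeadEquiv n (φ p))
  have hv : AnalyticAt ℂ v 0 := (Finset.analyticAt_fun_sum _ fun k _ => (hρ.fun_pow _).fun_mul
    (hlift.analyticAt_comp (f := fun q => C k q.1)
      (analyticAt_comp_fst_zero (hF.analyticAt_coeff k)))).fun_add
    (hlift.analyticAt_comp hF.analyticAt_unit)
  have hv0 : v 0 ≠ 0 := by
    have hsum : ∑ k ∈ Finset.range j, ρ 0 ^ (j + 1 - k) * C k (tailHeadEquiv n (φ 0)).1 = 0 :=
      Finset.sum_eq_zero fun k hk => by
        rw [hρ0, zero_pow (by have := Finset.mem_range.1 hk; omega), zero_mul]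
    simp only [v, hsum, zero_add]
    rw [hlift.map_zero]
    exact hF.unit_ne_zero
  refine ⟨_, z, _, hlift, ((hg.comp_tail.comp_lift hφ).mul
    ((((HasMonomialGerm.eval 0).comp_lift hφ).pow (j + 1)).mul (.of_ne_zero hv hv0))).congr ?_⟩
  filter_upwards [hρe, hlift.tendsto_map.eventually hF.eventually_eq] with p hp hFp
  change _ = g (tailHeadEquiv n (φ p)).1 * ((tailHeadEquiv n (φ p)).2 ^ (j + 1) * v p)
  rw [hFp, hp]
  congr 1
  simp only [v, mul_add _ (Finset.sum _ _), Finset.mul_sum]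
  congr 1
  refine Finset.sum_congr rfl fun k hk => ?_
  rw [← pow_sub_mul_pow _ (show k ≤ j + 1 by have := Finset.mem_range.1 hk; omega)]
  ring

theorem isGermLift_shear {E : Type*} [NormedAddCommGroup E] [NormedSpace ℂ E] {l : Filter I}
    {h : E → ℂ} (hh : AnalyticAt ℂ h 0) (hh0 : h 0 = 0) {x : I → E × ℂ} (hx : Tendsto x l (𝓝 0)) :
    IsGermLift l x (fun p => (p.1, p.2 + h p.1)) fun i => ((x i).1, (x i).2 - h (x i).1) where
  analyticAt := analyticAt_fst.prod (analyticAt_snd.fun_add (analyticAt_comp_fst_zero hh))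
  map_zero := by simp [hh0]
  tendsto := by
    have hhx : Tendsto (fun i => h (x i).1) l (𝓝 0) :=
      hh0 ▸ hh.continuousAt.tendsto.comp hx.fst_nhds
    exact hx.fst_nhds.prodMk_nhds (by simpa using hx.snd_nhds.sub hhx)
  eventually_eq := .of_forall fun i => by simp

theorem eventually_eq_pow_mul_of_forall_eventuallyEq_zero {E : Type*} [TopologicalSpace E]
    [Zero E] {j : ℕ} {c : ℕ → E → ℂ} {u F : E × ℂ → ℂ} (hc : ∀ k < j, c k =ᶠ[𝓝 0] 0)
    (hF : ∀ᶠ p in 𝓝 0, F p = ∑ k ∈ Finset.range j, c k p.1 * p.2 ^ k + p.2 ^ (j + 1) * u p) :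
    ∀ᶠ p in 𝓝 0, F p = p.2 ^ (j + 1) * u p := by
  have hc' : ∀ᶠ x in 𝓝 (0 : E), ∀ k ∈ Finset.range j, c k x = 0 :=
    (Finset.eventually_all _).2 fun k hk => hc k (Finset.mem_range.1 hk)
  filter_upwards [hF, (continuousAt_fst (p := (0 : E × ℂ))).eventually hc'] with p hp hcp
  rw [hp, Finset.sum_eq_zero fun k hk => by rw [hcp k hk, zero_mul], zero_add]

theorem IsGermLift.isPrepared {E : Type*} [NormedAddCommGroup E] [NormedSpace ℂ E]
    {l : Filter I} {x : I → E × ℂ} {ψ : (ι → ℂ) → E} {y : I → (ι → ℂ) × ℂ}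
    (hψ : IsGermLift l x (fun p => (ψ p.1, p.2)) y) {j : ℕ} {c : ℕ → E → ℂ} {u F : E × ℂ → ℂ}
    (hu : AnalyticAt ℂ u 0) (hu0 : u 0 ≠ 0)
    (hF : ∀ᶠ p in 𝓝 0, F p = ∑ k ∈ Finset.range j, c k p.1 * p.2 ^ k + p.2 ^ (j + 1) * u p)
    {γ : ι → ℕ} {C : ℕ → (ι → ℂ) → ℂ} (hC : ∀ k, AnalyticAt ℂ (C k) 0)
    (hcC : ∀ k < j, ∀ᶠ p in 𝓝 0, c k (ψ p) = (∏ i, p i ^ γ i) ^ (j + 1 - k) * C k p) :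
    IsPrepared j γ C (fun p => u (ψ p.1, p.2)) fun p => F (ψ p.1, p.2) where
  analyticAt_coeff := hC
  analyticAt_unit := hψ.analyticAt_comp hu
  unit_ne_zero := by simpa only [hψ.map_zero] using hu0
  eventually_eq := by
    have hcC' : ∀ᶠ t in 𝓝 (0 : ι → ℂ), ∀ k ∈ Finset.range j,
        c k (ψ t) = (∏ i, t i ^ γ i) ^ (j + 1 - k) * C k t :=
      (Finset.eventually_all _).2 fun k hk => hcC k (Finset.mem_range.1 hk)
    filter_upwards [hψ.tendsto_map.eventually hF,
      (continuousAt_fst (p := (0 : (ι → ℂ) × ℂ))).eventually hcC'] with p hp hcp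
    rw [hp, Finset.sum_congr rfl fun k hk => by rw [hcp k hk]]

/-- Uniformization of `g * f` by induction on the order `m` of `f` in the last coordinate; the
factor `g` absorbs the monomials split off on the way. -/
theorem UniformizesGerms.isUniformizableAlong_mul {l : Ultrafilter I}
    (hl : UniformizesGerms (l : Filter I) n) {m : ℕ} {g : (Fin n → ℂ) → ℂ} (hg : AnalyticAt ℂ g 0)
    (hg0 : ¬ g =ᶠ[𝓝 0] 0) {f : (Fin n → ℂ) × ℂ → ℂ} (hf : AnalyticAt ℂ f 0)
    (ho : analyticOrderAt (fun t : ℂ => f (0, t)) 0 = m) {x : I → (Fin n → ℂ) × ℂ}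
    (hx : Tendsto x l (𝓝 0)) :
    IsUniformizableAlong (Fin (n + 1)) l x fun p => g p.1 * f p := by
  induction m using Nat.strong_induction_on generalizing g f x with
  | _ m ih =>
  cases m with
  | zero =>
    rw [Nat.cast_zero, AnalyticAt.analyticOrderAt_eq_zero
      (AnalyticAt.fun_comp (f := fun t => (0, t)) hf (by fun_prop))] at ho
    simpa using hl.isUniformizableAlong_mul_snd_pow hg hg0 hf ho hx 0
  | succ j =>
    obtain ⟨h, c, u, hh, hh0, hc, hc0, hu, hu0, he⟩ := exists_tschirnhaus hf ho
    have hσ := isGermLift_shear hh hh0 hx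
    refine hσ.isUniformizableAlong ?_
    by_cases hcz : ∃ k < j, ¬ c k =ᶠ[𝓝 0] 0
    swap
    · push Not at hcz
      refine (hl.isUniformizableAlong_mul_snd_pow hg hg0 hu hu0 hσ.tendsto (j + 1)).congr ?_
      filter_upwards [eventually_eq_pow_mul_of_forall_eventuallyEq_zero hcz he] with p hp
      rw [hp]
    obtain ⟨ψ, y, hψ, ⟨e, hge⟩, γ, C, hγ, hC, hC0, hcC⟩ :=
      hl.exists_isGermLift_eq_monomial_pow_mul hg hg0 hc hc0 hcz hσ.tendsto.fst_nhds
    have hlift := hψ.prodMap_id hσ.tendsto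
    refine hlift.isUniformizableAlong ?_
    have hprep := hlift.isPrepared hu hu0 he hC hcC
    by_cases hB : ∃ B : ℝ, ∀ᶠ i in (l : Filter I),
        ‖(x i).2 - h (x i).1‖ ≤ B * ‖∏ k, y i k ^ γ k‖
    · obtain ⟨B, hB⟩ := hB
      obtain ⟨ζ, z, hφ⟩ := exists_isGermLift_weightedBlowUpChart hγ hlift.tendsto hB
      obtain ⟨f₁, hf₁, ⟨m, hm, ho₁⟩, hf₁e⟩ := hprep.exists_comp_weightedBlowUpChart hγ hC0 hφ
      have hg₁ := hge.mul (.pow (⟨1, analyticAt_const, one_ne_zero, by simp⟩ :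
        HasMonomialGerm (fun t : Fin n → ℂ => ∏ i, t i ^ γ i) γ) (j + 1))
      refine hφ.isUniformizableAlong ((ih m hm hg₁.analyticAt hg₁.not_eventuallyEq_zero hf₁ ho₁
        hφ.tendsto).congr ?_)
      filter_upwards [hf₁e] with p hp
      simp only [weightedBlowUpChart] at hp ⊢
      rw [hp, mul_assoc]
    · exact hprep.isUniformizableAlong_of_not_bounded hge hlift.tendsto (not_exists.1 hB)

theorem uniformizesGerms_zero (l : Filter I) : UniformizesGerms l 0 := fun _ hf hf0 _ hx =>
  isUniformizableAlong_of_ne_zero hx hf fun h0 =>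
    hf0 (.of_forall fun p => by rwa [Subsingleton.elim p 0])

theorem exists_analyticOrderAt_smul_ne_top {E : Type*} [NormedAddCommGroup E] [NormedSpace ℂ E]
    {f : E → ℂ} (hf : AnalyticAt ℂ f 0) (h0 : f 0 = 0) (hf0 : ¬ f =ᶠ[𝓝 0] 0) :
    ∃ v ≠ 0, analyticOrderAt (fun t : ℂ => f (t • v)) 0 ≠ ⊤ := by
  obtain ⟨r, hr, hball⟩ := Metric.eventually_nhds_iff_ball.1 hf.eventually_analyticAt
  obtain ⟨v, hv, hfv⟩ : ∃ v ∈ ball (0 : E) r, f v ≠ 0 := by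
    by_contra! hcon
    exact hf0 (mem_of_superset (ball_mem_nhds 0 hr) hcon)
  refine ⟨v, fun hv0 => hfv (hv0 ▸ h0), fun htop => hfv ?_⟩
  have hconvex : Convex ℝ ((fun t : ℂ => t • v) ⁻¹' ball 0 r) :=
    (convex_ball 0 r).is_linear_preimage
      ((LinearMap.toSpanSingleton ℂ E v).restrictScalars ℝ).isLinear
  have hanalytic : AnalyticOnNhd ℂ (fun t : ℂ => f (t • v)) ((fun t : ℂ => t • v) ⁻¹' ball 0 r) :=
    fun t ht => AnalyticAt.fun_comp (g := f) (hball _ ht) (by fun_prop)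
  simpa using hanalytic.eqOn_zero_of_preconnected_of_eventuallyEq_zero hconvex.isPreconnected
    (show (0 : ℂ) • v ∈ ball 0 r by simpa using hr) (analyticOrderAt_eq_top.1 htop)
    (show (1 : ℂ) • v ∈ ball 0 r by simpa using hv)

theorem UniformizesGerms.succ {l : Ultrafilter I} (hl : UniformizesGerms (l : Filter I) n) :
    UniformizesGerms (l : Filter I) (n + 1) := by
  intro f hf hf0 x hx
  by_cases h0 : f 0 = 0
  swap
  · exact isUniformizableAlong_of_ne_zero hx hf h0
  obtain ⟨v, hv, hord⟩ := exists_analyticOrderAt_smul_ne_top hf h0 hf0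
  have haxis : (tailHeadEquiv n).symm (0, 1) ≠ 0 :=
    (map_ne_zero_iff _ (tailHeadEquiv n).symm.injective).2 (by simp)
  obtain ⟨A, hA⟩ := SeparatingDual.exists_continuousLinearEquiv_apply_eq (R := ℂ) haxis hv
  have hlift := isGermLift_continuousLinearEquiv hx ((tailHeadEquiv n).symm.trans A)
  have hA' (t : ℂ) : ((tailHeadEquiv n).symm.trans A) (0, t) = t • v := by
    rw [show ((0 : Fin n → ℂ), t) = t • (0, 1) by simp, map_smul]
    exact congrArg (t • ·) hA
  obtain ⟨m, hm⟩ := ENat.ne_top_iff_exists.1 hord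
  refine hlift.isUniformizableAlong ((hl.isUniformizableAlong_mul (g := 1) analyticAt_const
    (fun h => one_ne_zero h.self_of_nhds) (hlift.analyticAt_comp hf) (m := m) ?_
    hlift.tendsto).congr ?_)
  · simp only [hA', hm]
  · exact .of_forall fun p => (one_mul _).symm

theorem uniformizesGerms (l : Ultrafilter I) (n : ℕ) : UniformizesGerms (l : Filter I) n := by
  induction n with
  | zero => exact uniformizesGerms_zero _
  | succ n ih => exact ih.succ

end Descent

/-! ### Estimates of Łojasiewicz type -/

section Lojasiewicz

open Asymptotics

theorem fderiv_monomial_apply_self {ι : Type*} [Fintype ι] (a : ι → ℕ) (y : ι → ℂ) :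
    fderiv ℂ (fun p : ι → ℂ => ∏ i, p i ^ a i) y y = (∑ i, a i : ℕ) * ∏ i, y i ^ a i := by
  have hline : HasDerivAt (fun t : ℂ => t • y) y 1 := by
    simpa using (hasDerivAt_id (1 : ℂ)).smul_const y
  have hcomp := (analyticAt_monomial a ((1 : ℂ) • y)).differentiableAt.hasFDerivAt.comp_hasDerivAt
    (1 : ℂ) hline
  have hpow := (hasDerivAt_pow (∑ i, a i) (1 : ℂ)).mul_const (∏ i, y i ^ a i)
  rw [one_smul] at hcomp
  refine hcomp.unique ((hpow.congr_of_eventuallyEq (.of_forall fun t => ?_)).congr_deriv ?_)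
  · simp [mul_pow, Finset.prod_mul_distrib, Finset.prod_pow_eq_pow_sum]
  · simp

theorem HasMonomialGerm.isLittleO_fderiv_apply_self {ι : Type*} [Fintype ι] {f : (ι → ℂ) → ℂ}
    {a : ι → ℕ} (hf : HasMonomialGerm f a) :
    (fun y => fderiv ℂ f y y - (∑ i, a i : ℕ) * f y) =o[𝓝 0] f := by
  obtain ⟨u, hu, hu0, he⟩ := hf
  have hdu : (fun y => fderiv ℂ u y y) =o[𝓝 0] u := by
    refine ((isLittleO_one_iff ℂ).2 ?_).trans_isBigO
      (isBigO_const_left_iff_pos_le_norm one_ne_zero |>.2 ⟨‖u 0‖ / 2, by positivity, ?_⟩)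
    · simpa using (hu.fderiv.continuousAt.clm_apply continuousAt_id).tendsto
    · exact (hu.continuousAt.norm.eventually_const_lt (half_lt_self (by positivity))).mono
        fun y hy => hy.le
  have hfu : f =ᶠ[𝓝 0] fun y => (∏ i, y i ^ a i) * u y := he
  refine ((isBigO_refl (fun y : ι → ℂ => ∏ i, y i ^ a i) _).mul_isLittleO hdu).congr' ?_ hfu.symm
  filter_upwards [hfu.eventuallyEq_nhds, hu.eventually_analyticAt] with y hy huy
  rw [hy.fderiv_eq, hy.self_of_nhds,
    fderiv_fun_mul (analyticAt_monomial a y).differentiableAt huy.differentiableAt]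
  simp only [add_apply, smul_apply, smul_eq_mul,
    fderiv_monomial_apply_self]
  ring

theorem isLittleO_fderiv_apply_self_sub_smul {ι κ : Type*} [Fintype ι] [Fintype κ]
    {Φ : (κ → ℂ) → ι → ℂ} {a : ι → κ → ℕ} (hΦ : ∀ j, HasMonomialGerm (fun p => Φ p j) (a j))
    {j₀ : ι} (hmin : ∀ j, a j₀ ≤ a j) :
    (fun p => fderiv ℂ Φ p p - ((∑ i, a j₀ i : ℕ) : ℂ) • Φ p) =o[𝓝 0] Φ := by
  have hΦj (j : ι) : (fun p => Φ p j) =O[𝓝 0] Φ :=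
    .of_bound' (.of_forall fun p => norm_le_pi_norm (Φ p) j)
  have hcoord (j : ι) : (fun p => fderiv ℂ (fun p => Φ p j) p p - (∑ i, a j₀ i : ℕ) * Φ p j)
      =o[𝓝 0] Φ := by
    have heuler := (hΦ j).isLittleO_fderiv_apply_self
    by_cases hj : a j = a j₀
    · exact hj ▸ heuler.trans_isBigO (hΦj j)
    obtain ⟨ρ, hρ, he⟩ := (hΦ j₀).exists_eq_mul (hΦ j) (hmin j)
    have hρ0 : ρ 0 = 0 := hρ.apply_zero_eq_zero_iff.2 fun h0 =>
      hj (le_antisymm (tsub_eq_zero_iff_le.1 h0) (hmin j))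
    have hsmall : (fun p => Φ p j) =o[𝓝 0] Φ := by
      have hρsmall : ρ =o[𝓝 0] fun _ => (1 : ℝ) :=
        (isLittleO_one_iff ℝ).2 (hρ0 ▸ hρ.analyticAt.continuousAt.tendsto)
      refine isLittleO_norm_right.1 ((hρsmall.mul_isBigO (hΦj j₀).norm_right).congr' ?_ (by simp))
      filter_upwards [he] with p hp
      rw [hp, mul_comm]
    refine ((heuler.trans hsmall).add
      (hsmall.const_mul_left ((∑ i, a j i : ℕ) - (∑ i, a j₀ i : ℕ) : ℂ))).congr_left fun p => ?_
    ring
  refine isLittleO_pi.2 fun j => (hcoord j).congr' ?_ .rfl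
  filter_upwards [(analyticAt_pi_iff.2 fun j => (hΦ j).analyticAt).eventually_analyticAt] with p hp
  rw [fderiv_apply hp.differentiableAt]
  rfl

/-- Vectors `w` asymptotic to `x - p` on which the derivative of `f` is asymptotic to `q • f`. -/
structure IsEulerFamily {I E : Type*} [NormedAddCommGroup E] [NormedSpace ℂ E] (l : Filter I)
    (f : E → ℂ) (p : E) (x w : I → E) (q : ℝ) : Prop where
  pos : 0 < q
  isLittleO_sub : (fun i => w i - (x i - p)) =o[l] fun i => x i - p
  isLittleO_fderiv : (fun i => fderiv ℂ f (x i) (w i) - q * f (x i)) =o[l] fun i => f (x i)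

theorem exists_isGermLift_hasMonomialGerm_coord {I : Type*} {l : Ultrafilter I} {n : ℕ}
    [Nonempty (Fin n)] {f : (Fin n → ℂ) → ℂ} (hf : AnalyticAt ℂ f 0) (hfz : ¬ f =ᶠ[𝓝 0] 0)
    {x : I → Fin n → ℂ} (hx : Tendsto x l (𝓝 0)) :
    ∃ (Φ : (Fin n → ℂ) → Fin n → ℂ) (y : I → Fin n → ℂ), IsGermLift l x Φ y ∧
      (∃ b, HasMonomialGerm (fun p => f (Φ p)) b) ∧ ∃ (a : Fin n → Fin n → ℕ) (j₀ : Fin n),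
        (∀ j, HasMonomialGerm (fun p => Φ p j) (a j)) ∧ ∀ j, a j₀ ≤ a j := by
  obtain ⟨φ, y, hφ, ⟨b, hb⟩, hd⟩ := (uniformizesGerms l n).exists_isGermLift_mul_prod hf hfz
    (s := Finset.univ) (fun j _ => analyticAt_eval j 0)
    (fun j _ => (HasMonomialGerm.eval j).not_eventuallyEq_zero) hx
  choose! d hd using hd
  obtain ⟨ψ, T, z, hψ, j₀, -, hmin⟩ :=
    exists_isMonomialLift_forall_le Finset.univ_nonempty d hφ.tendsto
  exact ⟨_, z, hφ.comp hψ.toIsGermLift, ⟨_, hb.comp_lift hψ⟩, fun j => d j ᵥ* T, j₀,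
    fun j => (hd j (Finset.mem_univ j)).comp_lift hψ, fun j => hmin j (Finset.mem_univ j)⟩

theorem HasMonomialGerm.sum_pos {ι : Type*} [Fintype ι] {f : (ι → ℂ) → ℂ} {a : ι → ℕ}
    (hf : HasMonomialGerm f a) (h0 : f 0 = 0) : 0 < ∑ i, a i := by
  obtain ⟨i, hi⟩ := Function.ne_iff.1 (hf.apply_zero_eq_zero_iff.1 h0)
  exact Finset.sum_pos' (fun _ _ => Nat.zero_le _) ⟨i, Finset.mem_univ i, Nat.pos_of_ne_zero hi⟩

/-- Write `x = Φ y` with `f ∘ Φ` and the coordinates of `Φ` monomial, and take for `w` a multiple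
of the image under `dΦ` of the Euler vector `y`. -/
theorem exists_isEulerFamily_pi {I : Type*} {l : Ultrafilter I} {n : ℕ} {f : (Fin n → ℂ) → ℂ}
    (hf : AnalyticAt ℂ f 0) (hf0 : f 0 = 0) (hfz : ¬ f =ᶠ[𝓝 0] 0) {x : I → Fin n → ℂ}
    (hx : Tendsto x l (𝓝 0)) : ∃ w q, IsEulerFamily (l : Filter I) f 0 x w q := by
  have : Nonempty (Fin n) := by
    by_contra! hn
    exact hfz (.of_forall fun p => by rwa [Subsingleton.elim p 0])
  obtain ⟨Φ, y, hΦ, ⟨b, hb⟩, a, j₀, ha, hmin⟩ := exists_isGermLift_hasMonomialGerm_coord hf hfz hx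
  set N := ∑ i, a j₀ i
  have hN : 0 < N := (ha j₀).sum_pos (congrFun hΦ.map_zero j₀)
  have hB : 0 < ∑ i, b i := hb.sum_pos (by rw [hΦ.map_zero, hf0])
  have hNc : (N : ℂ) ≠ 0 := Nat.cast_ne_zero.2 hN.ne'
  refine ⟨fun i => (N : ℂ)⁻¹ • fderiv ℂ Φ (y i) (y i), (∑ i, b i : ℕ) / N, by positivity, ?_, ?_⟩
  · refine (((isLittleO_fderiv_apply_self_sub_smul ha hmin).comp_tendsto
      hΦ.tendsto).const_smul_left (N : ℂ)⁻¹).congr' ?_ ?_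
    · filter_upwards [hΦ.eventually_eq] with i hi
      change (N : ℂ)⁻¹ • (fderiv ℂ Φ (y i) (y i) - (N : ℂ) • Φ (y i)) = _
      rw [smul_sub, inv_smul_smul₀ hNc, hi, sub_zero]
    · filter_upwards [hΦ.eventually_eq] with i hi
      simp [hi]
  · refine ((hb.isLittleO_fderiv_apply_self.comp_tendsto hΦ.tendsto).const_mul_left
      (N : ℂ)⁻¹).congr' ?_ ?_
    · filter_upwards [hΦ.eventually_eq, hΦ.tendsto.eventually hΦ.analyticAt.eventually_analyticAt,
        hΦ.tendsto.eventually (hΦ.tendsto_map.eventually hf.eventually_analyticAt)]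
        with i hi hΦi hfi
      have hchain : fderiv ℂ (fun p => f (Φ p)) (y i) = fderiv ℂ f (Φ (y i)) ∘L fderiv ℂ Φ (y i) :=
        fderiv_comp (y i) hfi.differentiableAt hΦi.differentiableAt
      simp only [Function.comp_apply, hchain, ContinuousLinearMap.comp_apply, hi, map_smul,
        smul_eq_mul, mul_sub]
      push_cast
      ring
    · filter_upwards [hΦ.eventually_eq] with i hi
      simp [hi]

variable {E : Type*} [NormedAddCommGroup E] [NormedSpace ℂ E] {f : E → ℂ} {p : E}

theorem exists_isEulerFamily [FiniteDimensional ℂ E] {I : Type*} {l : Ultrafilter I}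
    (hf : AnalyticAt ℂ f p) (hfp : f p = 0) (hfz : ¬ f =ᶠ[𝓝 p] 0) {x : I → E}
    (hx : Tendsto x l (𝓝 p)) :
    ∃ w q, IsEulerFamily (l : Filter I) f p x w q := by
  obtain ⟨L⟩ : Nonempty (E ≃L[ℂ] (Fin (Module.finrank ℂ E) → ℂ)) :=
    ⟨.ofFinrankEq (Module.finrank_fin_fun ℂ).symm⟩
  have hsub : Tendsto (fun y => L (y - p)) (𝓝 p) (𝓝 0) := by
    simpa using (show Continuous fun y => L (y - p) by fun_prop).tendsto p
  have hg : AnalyticAt ℂ (fun z => f (p + L.symm z)) 0 :=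
    AnalyticAt.fun_comp (g := f) (by simpa using hf)
      (analyticAt_const.fun_add (L.symm.analyticAt 0))
  obtain ⟨w, q, hq, hw, hfw⟩ := exists_isEulerFamily_pi hg (by simpa using hfp)
    (fun h => hfz ((hsub.eventually h).mono fun y hy => by simpa using hy)) (hsub.comp hx)
  refine ⟨fun i => L.symm (w i), q, hq, ?_, ?_⟩
  · have hLsymm := (L.symm : (Fin _ → ℂ) →L[ℂ] E).isBigO_comp
      (fun i => w i - L (x i - p)) (l : Filter I)
    have hL := (L : E →L[ℂ] (Fin (Module.finrank ℂ E) → ℂ)).isBigO_comp (fun i => x i - p)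
      (l : Filter I)
    simpa using hLsymm.trans_isLittleO (IsLittleO.trans_isBigO (by simpa using hw) hL)
  · have hchain (z) : fderiv ℂ (fun z => f (p + L.symm z)) z =
        fderiv ℂ f (p + L.symm z) ∘L (L.symm : (Fin _ → ℂ) →L[ℂ] E) := by
      rw [← fderiv_comp_add_left]
      exact L.symm.comp_right_fderiv (f := fun y => f (p + y))
    simpa [hchain] using hfw

theorem IsEulerFamily.isBigO {I : Type*} {l : Filter I} {x w : I → E} {q : ℝ}
    (h : IsEulerFamily l f p x w q) :
    (fun i => f (x i)) =O[l] fun i => ‖x i - p‖ * ‖fderiv ℂ f (x i)‖ := by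
  have hw : w =O[l] fun i => x i - p :=
    (h.isLittleO_sub.isBigO.add (isBigO_refl (fun i => x i - p) l)).congr_left fun i => by simp
  have hdfw : (fun i => fderiv ℂ f (x i) (w i)) =O[l] fun i => ‖fderiv ℂ f (x i)‖ * ‖x i - p‖ :=
    (IsBigO.of_norm_le fun i => (fderiv ℂ f (x i)).le_opNorm (w i)).trans
      ((isBigO_refl _ _).mul hw.norm_norm)
  have hq : (q : ℂ) ≠ 0 := Complex.ofReal_ne_zero.2 h.pos.ne'
  have hqf := (h.isLittleO_fderiv.trans_isBigO (isBigO_self_const_mul hq _ _)).right_isBigO_add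
  simp only [sub_add_cancel] at hqf
  exact (isBigO_self_const_mul hq _ _).trans (hqf.trans (by simpa only [mul_comm] using hdfw))

theorem isLittleO_iff_forall_ultrafilter {α F G : Type*} [Norm F] [Norm G] {l : Filter α}
    {f : α → F} {g : α → G} : f =o[l] g ↔ ∀ u : Ultrafilter α, ↑u ≤ l → f =o[(u : Filter α)] g := by
  simp only [isLittleO_iff]
  exact ⟨fun h u hu c hc => hu (h hc), fun h c hc => mem_iff_ultrafilter.2 fun u hu => h u hu hc⟩

theorem isLittleO_fderiv_of_apply_eq_zero [FiniteDimensional ℂ E] (hf : AnalyticAt ℂ f p)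
    (hfp : f p = 0) (hfz : ¬ f =ᶠ[𝓝 p] 0) : f =o[𝓝 p] fderiv ℂ f := by
  refine isLittleO_iff_forall_ultrafilter.2 fun u hu => ?_
  obtain ⟨w, q, h⟩ := exists_isEulerFamily hf hfp hfz (tendsto_id'.2 hu)
  have hnorm : (fun x => ‖x - p‖) =o[(u : Filter E)] fun _ => (1 : ℝ) :=
    (isLittleO_one_iff ℝ).2 (by simpa using ((tendsto_id'.2 hu).sub_const p).norm)
  refine h.isBigO.trans_isLittleO (isLittleO_norm_right.1 ?_)
  simpa using hnorm.mul_isBigO (isBigO_refl (fun x => ‖fderiv ℂ f x‖) (u : Filter E))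

/-- Near a zero of `f` the gradient of `arg f` is nearly orthogonal to the radial direction. -/
theorem isLittleO_im_fderiv_div [FiniteDimensional ℂ E] (hf : AnalyticAt ℂ f p) (hfp : f p = 0)
    (hfz : ¬ f =ᶠ[𝓝 p] 0) :
    (fun x => (fderiv ℂ f x (x - p) / f x).im) =o[𝓝 p]
      fun x => ‖x - p‖ * (‖fderiv ℂ f x‖ / ‖f x‖) := by
  refine isLittleO_iff_forall_ultrafilter.2 fun u hu => ?_
  obtain ⟨w, q, h⟩ := exists_isEulerFamily hf hfp hfz (tendsto_id'.2 hu)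
  -- At `f x = 0` both sides vanish by division by zero.
  have hsplit (x : E) : (fderiv ℂ f x (x - p) / f x).im =
      ((fderiv ℂ f x (w x) - q * f x) / f x - fderiv ℂ f x (w x - (x - p)) / f x).im := by
    rcases eq_or_ne (f x) 0 with hx | hx
    · simp [hx]
    rw [(fderiv ℂ f x).map_sub (w x), sub_div _ (q * f x), sub_div, mul_div_cancel_right₀ _ hx]
    simp
  have hinv := isBigO_refl (fun x => (f x)⁻¹) (u : Filter E)
  have hfirst : (fun x => (fderiv ℂ f x (w x) - q * f x) * (f x)⁻¹) =o[(u : Filter E)]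
      fun x => ‖x - p‖ * ‖fderiv ℂ f x‖ * ‖(f x)⁻¹‖ :=
    (h.isLittleO_fderiv.trans_isBigO h.isBigO).mul_isBigO hinv.norm_right
  have hsecond : (fun x => fderiv ℂ f x (w x - (x - p)) * (f x)⁻¹) =o[(u : Filter E)]
      fun x => ‖x - p‖ * ‖fderiv ℂ f x‖ * ‖(f x)⁻¹‖ := by
    have hop : (fun x => fderiv ℂ f x (w x - (x - p))) =O[(u : Filter E)]
        fun x => ‖fderiv ℂ f x‖ * ‖w x - (x - p)‖ :=
      .of_norm_le fun x => (fderiv ℂ f x).le_opNorm _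
    refine IsLittleO.mul_isBigO ?_ hinv.norm_right
    simpa only [mul_comm, id] using hop.trans_isLittleO
      ((isBigO_refl _ _).mul_isLittleO h.isLittleO_sub.norm_norm)
  refine IsBigO.trans_isLittleO (.of_bound' (.of_forall fun x => ?_))
    ((hfirst.sub hsecond).congr_right fun x => ?_)
  · rw [hsplit, div_eq_mul_inv, div_eq_mul_inv]
    exact Complex.abs_im_le_norm _
  · rw [norm_inv, mul_assoc, div_eq_mul_inv]

end Lojasiewicz

/-! ### Flows of tame vector fields -/

section Flow

theorem norm_le_mul_exp_of_hasDerivWithinAt {G : Type*} [NormedAddCommGroup G] [NormedSpace ℝ G]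
    {s : Set ℝ} (hs : s.OrdConnected) {h h' : ℝ → G} {K : ℝ}
    (hd : ∀ t ∈ s, HasDerivWithinAt h (h' t) s t) (hK : ∀ t ∈ s, ‖h' t‖ ≤ K * ‖h t‖) {a b : ℝ}
    (ha : a ∈ s) (hb : b ∈ s) : ‖h b‖ ≤ ‖h a‖ * Real.exp (K * |b - a|) := by
  wlog hab : a ≤ b generalizing s h h' a b
  · have hneg : MapsTo (fun t : ℝ => -t) (-s) s := fun t ht => ht
    have hrev := this (s := -s) (h := fun t => h (-t)) (h' := fun t => -h' (-t))
      (hs.preimage_anti fun _ _ => neg_le_neg)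
      (fun t ht => by
        simpa [Function.comp_def] using
          (hd (-t) ht).scomp t (hasDerivAt_neg t).hasDerivWithinAt hneg)
      (fun t ht => by simpa using hK (-t) ht) (a := -a) (b := -b) (by simpa) (by simpa)
      (by linarith)
    simpa [neg_add_eq_sub, abs_sub_comm] using hrev
  have hsub : Icc a b ⊆ s := hs.out ha hb
  have hgronwall := norm_le_gronwallBound_of_norm_deriv_right_le (δ := ‖h a‖) (K := K) (ε := 0)
    (fun t ht => (hd t (hsub ht)).continuousWithinAt.mono hsub)
    (fun t ht => ((hd t (hsub (Ico_subset_Icc_self ht))).mono hsub).mono_of_mem_nhdsWithin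
      (Icc_mem_nhdsGE_of_mem ht)) le_rfl
    (fun t ht => by simpa using hK t (hsub (Ico_subset_Icc_self ht))) b ⟨hab, le_rfl⟩
  rwa [gronwallBound_ε0, ← abs_of_nonneg (sub_nonneg.2 hab)] at hgronwall

theorem norm_sub_le_of_isIntegralCurveOn {E : Type*} [NormedAddCommGroup E] [NormedSpace ℝ E]
    {v : E → E} {A : Set E} {K : NNReal} (hv : LipschitzOnWith K v A) {s : Set ℝ}
    (hs : s.OrdConnected) {γ γ' : ℝ → E} (hγ : IsIntegralCurveOn γ (fun _ => v) s)
    (hγ' : IsIntegralCurveOn γ' (fun _ => v) s) (hA : MapsTo γ s A) (hA' : MapsTo γ' s A) {a b : ℝ}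
    (ha : a ∈ s) (hb : b ∈ s) : ‖γ b - γ' b‖ ≤ ‖γ a - γ' a‖ * Real.exp (K * |b - a|) :=
  norm_le_mul_exp_of_hasDerivWithinAt (h := fun t => γ t - γ' t) hs
    (fun t ht => (hγ t ht).sub (hγ' t ht)) (fun _ ht => hv.norm_sub_le (hA ht) (hA' ht)) ha hb

theorem exists_isIntegralCurveOn_Ioo_of_lipschitzWith {E : Type*} [NormedAddCommGroup E]
    [NormedSpace ℝ E] [CompleteSpace E] {v : E → E} {K : NNReal} (hv : LipschitzWith K v) {M : ℝ}
    (hM : ∀ x, ‖v x‖ ≤ M) {T : ℝ} (hT : 0 < T) (x : E) :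
    ∃ γ, γ 0 = x ∧ IsIntegralCurveOn γ (fun _ => v) (Ioo (-T) T) := by
  have hM0 : 0 ≤ M := (norm_nonneg _).trans (hM x)
  have hPL : IsPicardLindelof (fun _ => v) (tmin := -T) (tmax := T)
      ⟨0, by linarith, hT.le⟩ x ⟨M * T, by positivity⟩ 0 ⟨M, hM0⟩ K := by
    refine .of_time_independent (fun y _ => hM y) hv.lipschitzOnWith ?_
    change M * max (T - 0) (0 - -T) ≤ M * T - 0
    simp
  obtain ⟨γ, h0, hγ⟩ := hPL.exists_eq_forall_mem_Icc_hasDerivWithinAt₀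
  exact ⟨γ, h0, IsIntegralCurveOn.mono hγ Ioo_subset_Icc_self⟩

theorem exists_isIntegralCurve_of_forall_Ioo {E : Type*} [NormedAddCommGroup E] [NormedSpace ℝ E]
    {v : E → E} {x : E}
    (hex : ∀ T > 0, ∃ γ, γ 0 = x ∧ IsIntegralCurveOn γ (fun _ => v) (Ioo (-T) T))
    (huniq : ∀ ⦃T γ γ'⦄, IsIntegralCurveOn γ (fun _ => v) (Ioo (-T) T) →
      IsIntegralCurveOn γ' (fun _ => v) (Ioo (-T) T) → γ 0 = x → γ' 0 = x →
        EqOn γ γ' (Ioo (-T) T)) :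
    ∃ γ, γ 0 = x ∧ IsIntegralCurve γ fun _ => v := by
  choose! γ h0 hγ using hex
  refine ⟨fun t => γ (|t| + 1) t, h0 _ (by simp), fun t => ?_⟩
  have hT : 0 < |t| + 1 := by positivity
  have hmem : Ioo (-(|t| + 1)) (|t| + 1) ∈ 𝓝 t :=
    Ioo_mem_nhds (by linarith [neg_abs_le t]) (by linarith [le_abs_self t])
  refine ((hγ _ hT t (mem_of_mem_nhds hmem)).hasDerivAt hmem).congr_of_eventuallyEq ?_
  filter_upwards [hmem] with u hu
  rcases le_total (|u| + 1) (|t| + 1) with hle | hle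
  · exact huniq (hγ _ (by positivity)) ((hγ _ hT).mono (Ioo_subset_Ioo (by linarith) hle))
      (h0 _ (by positivity)) (h0 _ hT) (abs_lt.1 (lt_add_one _))
  · exact huniq ((hγ _ (by positivity)).mono (Ioo_subset_Ioo (by linarith) hle)) (hγ _ hT)
      (h0 _ (by positivity)) (h0 _ hT) hu

variable {E : Type*} [NormedAddCommGroup E] [InnerProductSpace ℝ E] {R : ℝ} {f : E → ℂ}
  {v : E → E}

/-- A vector field `v`, tangent to spheres, along which `log f` varies at speed at most `2` in
`closedBall 0 R`. -/
structure IsSlowField (R : ℝ) (f : E → ℂ) (v : E → E) : Prop where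
  inner_eq_zero : ∀ x, inner ℝ x (v x) = 0
  differentiableAt : ∀ x ∈ closedBall 0 R, DifferentiableAt ℝ f x
  norm_fderiv_le : ∀ x ∈ closedBall 0 R, ‖fderiv ℝ f x (v x)‖ ≤ 2 * ‖f x‖

/-- A slow field rotating the phase of `f` at unit speed, which vanishes on the zero set of `f`, is
small near it, and has bounded Lipschitz cutoffs away from it. It need not be Lipschitz up to the
zero set, so its flow is obtained from those of the cutoffs. -/
structure IsTameField (R : ℝ) (f : E → ℂ) (v : E → E) : Prop extends IsSlowField R f v where
  eq_zero : ∀ x, f x = 0 → v x = 0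
  im_fderiv_div : ∀ x ∈ closedBall 0 R, f x ≠ 0 → (fderiv ℝ f x (v x) / f x).im = 1
  exists_cutoff : ∀ δ > 0, ∃ c : E → ℝ, (∀ x, c x ∈ Icc 0 1) ∧
    (∃ K, LipschitzWith K fun x => c x • v x) ∧ (∃ M, ∀ x, ‖c x • v x‖ ≤ M) ∧
      ∀ x ∈ closedBall 0 R, δ ≤ ‖f x‖ → c x = 1
  exists_norm_le : ∀ η > 0, ∃ c > 0, ∀ x ∈ closedBall 0 R, ‖f x‖ < c → ‖v x‖ ≤ η

namespace IsSlowField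

theorem smul (hv : IsSlowField R f v) {c : E → ℝ} (hc : ∀ x, c x ∈ Icc 0 1) :
    IsSlowField R f fun x => c x • v x where
  inner_eq_zero x := by rw [inner_smul_right, hv.inner_eq_zero, mul_zero]
  differentiableAt := hv.differentiableAt
  norm_fderiv_le x hx := by
    rw [map_smul, norm_smul, Real.norm_of_nonneg (hc x).1]
    exact (mul_le_of_le_one_left (norm_nonneg _) (hc x).2).trans (hv.norm_fderiv_le x hx)

variable {s : Set ℝ} {γ : ℝ → E} {a b : ℝ}

theorem norm_eq (hv : IsSlowField R f v) (hs : s.OrdConnected)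
    (hγ : IsIntegralCurveOn γ (fun _ => v) s) (ha : a ∈ s) (hb : b ∈ s) : ‖γ b‖ = ‖γ a‖ := by
  have hconst := hs.convex.norm_image_sub_le_of_norm_hasDerivWithin_le
    (f := fun t => ‖γ t‖ ^ 2) (C := 0) (fun t ht => (hγ t ht).norm_sq)
    (fun t _ => by simp [hv.inner_eq_zero]) ha hb
  rw [zero_mul, norm_le_zero_iff, sub_eq_zero] at hconst
  exact (sq_eq_sq₀ (norm_nonneg _) (norm_nonneg _)).1 hconst

variable (hv : IsSlowField R f v) (hs : s.OrdConnected) (hγ : IsIntegralCurveOn γ (fun _ => v) s)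
  (ha : a ∈ s) (hR : γ a ∈ closedBall 0 R)

include hv hs hγ ha hR

theorem mapsTo_closedBall : MapsTo γ s (closedBall 0 R) := fun t ht => by
  rw [mem_closedBall_zero_iff] at hR ⊢
  rwa [hv.norm_eq hs hγ ha ht]

theorem hasDerivWithinAt_comp (hb : b ∈ s) :
    HasDerivWithinAt (fun t => f (γ t)) (fderiv ℝ f (γ b) (v (γ b))) s b :=
  (hv.differentiableAt _ (hv.mapsTo_closedBall hs hγ ha hR hb)).hasFDerivAt.comp_hasDerivWithinAt b
    (hγ b hb)

theorem norm_apply_le_mul_exp (hb : b ∈ s) {t : ℝ} (ht : t ∈ s) :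
    ‖f (γ t)‖ ≤ ‖f (γ b)‖ * Real.exp (2 * |t - b|) :=
  norm_le_mul_exp_of_hasDerivWithinAt hs
    (fun _ hu => hv.hasDerivWithinAt_comp hs hγ ha hR hu)
    (fun _ hu => hv.norm_fderiv_le _ (hv.mapsTo_closedBall hs hγ ha hR hu)) hb ht

theorem exp_mul_norm_apply_le (hb : b ∈ s) {T : ℝ} (hT : |b - a| ≤ T) :
    Real.exp (-(2 * T)) * ‖f (γ a)‖ ≤ ‖f (γ b)‖ := by
  rw [Real.exp_neg, inv_mul_le_iff₀ (Real.exp_pos _), mul_comm]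
  refine (hv.norm_apply_le_mul_exp hs hγ ha hR hb ha).trans ?_
  rw [abs_sub_comm]
  gcongr

end IsSlowField

namespace IsTameField

theorem exists_lipschitzOnWith (hv : IsTameField R f v) {δ : ℝ} (hδ : 0 < δ) :
    ∃ K, LipschitzOnWith K v {x ∈ closedBall 0 R | δ ≤ ‖f x‖} := by
  obtain ⟨c, -, ⟨K, hK⟩, -, hc⟩ := hv.exists_cutoff δ hδ
  exact ⟨K, fun x hx y hy => by
    simpa [hc x hx.1 hx.2, hc y hy.1 hy.2] using hK.edist_le_mul x y⟩

theorem eqOn_const (hv : IsTameField R f v) {s : Set ℝ} (hs : s.OrdConnected) {γ : ℝ → E}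
    (hγ : IsIntegralCurveOn γ (fun _ => v) s) {a : ℝ} (ha : a ∈ s) (hR : γ a ∈ closedBall 0 R)
    (hf : f (γ a) = 0) : EqOn γ (fun _ => γ a) s := fun t ht => by
  have hzero (u) (hu : u ∈ s) : f (γ u) = 0 := by
    simpa [hf] using hv.norm_apply_le_mul_exp hs hγ ha hR ha hu
  have hconst := hs.convex.norm_image_sub_le_of_norm_hasDerivWithin_le (C := 0) hγ
    (fun u hu => by simp [hv.eq_zero _ (hzero u hu)]) ha ht
  rwa [zero_mul, norm_le_zero_iff, sub_eq_zero] at hconst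

theorem eqOn_of_isIntegralCurveOn (hv : IsTameField R f v) {s : Set ℝ} (hs : s.OrdConnected)
    {γ γ' : ℝ → E} (hγ : IsIntegralCurveOn γ (fun _ => v) s)
    (hγ' : IsIntegralCurveOn γ' (fun _ => v) s) {a : ℝ} (ha : a ∈ s) (hR : γ a ∈ closedBall 0 R)
    (heq : γ a = γ' a) : EqOn γ γ' s := fun t ht => by
  by_cases hfa : f (γ a) = 0
  · rw [hv.eqOn_const hs hγ ha hR hfa ht, hv.eqOn_const hs hγ' ha (heq ▸ hR) (heq ▸ hfa) ht]
    exact heq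
  have hsub : uIcc a t ⊆ s := hs.uIcc_subset ha ht
  obtain ⟨K, hK⟩ := hv.exists_lipschitzOnWith
    (mul_pos (Real.exp_pos (-(2 * |t - a|))) (norm_pos_iff.2 hfa))
  have hmaps {γ : ℝ → E} (hγ : IsIntegralCurveOn γ (fun _ => v) s) (hR : γ a ∈ closedBall 0 R) :
      MapsTo γ (uIcc a t)
        {x ∈ closedBall 0 R | Real.exp (-(2 * |t - a|)) * ‖f (γ a)‖ ≤ ‖f x‖} := fun u hu =>
    ⟨hv.mapsTo_closedBall hs hγ ha hR (hsub hu),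
      hv.exp_mul_norm_apply_le hs hγ ha hR (hsub hu) (abs_sub_left_of_mem_uIcc hu)⟩
  have hdist := norm_sub_le_of_isIntegralCurveOn hK ordConnected_uIcc (hγ.mono hsub)
    (hγ'.mono hsub) (hmaps hγ hR) (by simpa only [heq] using hmaps hγ' (heq ▸ hR))
    left_mem_uIcc right_mem_uIcc
  rwa [heq, sub_self, norm_zero, zero_mul, norm_le_zero_iff, sub_eq_zero] at hdist

/-- An integral curve of the field cut off below `‖f‖ = exp (-(2 * T)) * ‖f x‖` does not reach the
region where the cutoff is felt during `(-T, T)`. -/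
theorem exists_isIntegralCurveOn_Ioo [CompleteSpace E] (hv : IsTameField R f v) {x : E}
    (hx : x ∈ closedBall 0 R) {T : ℝ} (hT : 0 < T) :
    ∃ γ, γ 0 = x ∧ IsIntegralCurveOn γ (fun _ => v) (Ioo (-T) T) := by
  by_cases hfx : f x = 0
  · exact ⟨fun _ => x, rfl,
      (isIntegralCurve_const fun _ => hv.eq_zero x hfx).isIntegralCurveOn _⟩
  obtain ⟨c, hc, ⟨K, hK⟩, ⟨M, hM⟩, hc1⟩ := hv.exists_cutoff _
    (mul_pos (Real.exp_pos (-(2 * T))) (norm_pos_iff.2 hfx))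
  obtain ⟨γ, h0, hγ⟩ := exists_isIntegralCurveOn_Ioo_of_lipschitzWith hK hM hT x
  have hslow := hv.toIsSlowField.smul hc
  have hzero : (0 : ℝ) ∈ Ioo (-T) T := by simp [hT]
  rw [← h0] at hx hc1
  refine ⟨γ, h0, fun t ht => (hγ t ht).congr_deriv ?_⟩
  have hcutoff : c (γ t) = 1 := hc1 _ (hslow.mapsTo_closedBall ordConnected_Ioo hγ hzero hx ht)
    (hslow.exp_mul_norm_apply_le ordConnected_Ioo hγ hzero hx ht
      (by simpa using (abs_lt.2 ht).le))
  simp only [hcutoff, one_smul]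

theorem exists_isIntegralCurve [CompleteSpace E] (hv : IsTameField R f v) {x : E}
    (hx : x ∈ closedBall 0 R) : ∃ γ, γ 0 = x ∧ IsIntegralCurve γ fun _ => v :=
  exists_isIntegralCurve_of_forall_Ioo (fun _ hT => hv.exists_isIntegralCurveOn_Ioo hx hT)
    fun _ _ _ hγ hγ' h0 h0' t ht => hv.eqOn_of_isIntegralCurveOn ordConnected_Ioo hγ hγ'
      (show (0 : ℝ) ∈ _ from by simpa using neg_lt_self_iff.1 (ht.1.trans ht.2)) (h0 ▸ hx)
      (h0.trans h0'.symm) ht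

theorem fderiv_apply_eq (hv : IsTameField R f v) {x : E} (hx : x ∈ closedBall 0 R) :
    fderiv ℝ f x (v x) = ((fderiv ℝ f x (v x) / f x).re + Complex.I) * f x := by
  by_cases hfx : f x = 0
  · simp [hfx, hv.eq_zero x hfx]
  have hdiv := Complex.re_add_im (fderiv ℝ f x (v x) / f x)
  rw [hv.im_fderiv_div x hx hfx, Complex.ofReal_one, one_mul] at hdiv
  rw [hdiv, div_mul_cancel₀ _ hfx]

theorem im_apply_mul_exp_eq_zero (hv : IsTameField R f v) {γ : ℝ → E}
    (hγ : IsIntegralCurve γ fun _ => v) (hR : γ 0 ∈ closedBall 0 R) {w : ℂ}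
    (hw : (f (γ 0) * w).im = 0) (t : ℝ) :
    (f (γ t) * (Complex.exp (-(t * Complex.I)) * w)).im = 0 := by
  set a : ℝ → ℝ := fun s => (fderiv ℝ f (γ s) (v (γ s)) / f (γ s)).re
  set k : ℝ → ℂ := fun s => f (γ s) * (Complex.exp (-(s * Complex.I)) * w)
  have hmem (s) : γ s ∈ closedBall 0 R :=
    hv.mapsTo_closedBall ordConnected_univ (hγ.isIntegralCurveOn _) (mem_univ 0) hR (mem_univ s)
  have hk (s) : HasDerivAt k (a s * k s) s := by
    have hexp : HasDerivAt (fun s : ℝ => Complex.exp (-(s * Complex.I)) * w)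
        (Complex.exp (-(s * Complex.I)) * -(1 * Complex.I) * w) s :=
      ((hasDerivAt_id s).ofReal_comp.mul_const Complex.I).neg.cexp.mul_const w
    refine (((hv.differentiableAt _ (hmem s)).hasFDerivAt.comp_hasDerivAt s (hγ s)).mul
      hexp).congr_deriv ?_
    rw [hv.fderiv_apply_eq (hmem s)]
    simp only [a, k, Function.comp_apply]
    ring
  have ha (s) : |a s| ≤ 2 := (Complex.abs_re_le_norm _).trans <| by
    rw [norm_div]
    exact div_le_of_le_mul₀ (norm_nonneg _) zero_le_two (hv.norm_fderiv_le _ (hmem s))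
  have him := norm_le_mul_exp_of_hasDerivWithinAt (h := fun s => (k s).im)
    (h' := fun s => a s * (k s).im) (K := 2) ordConnected_univ
    (fun s _ => by
      simpa [Function.comp_def] using
        Complex.imCLM.hasFDerivAt.comp_hasDerivAt s (hk s))
    (fun s _ => by rw [norm_mul]; gcongr; exact ha s) (mem_univ 0) (mem_univ t)
  simpa [k, hw] using him

end IsTameField

/-- `φ x` is the integral curve of `v` through `x`, for every `x` in `closedBall 0 R`. -/
structure IsFlowOn (R : ℝ) (v : E → E) (φ : E → ℝ → E) : Prop where
  apply_zero : ∀ x ∈ closedBall 0 R, φ x 0 = x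
  isIntegralCurve : ∀ x ∈ closedBall 0 R, IsIntegralCurve (φ x) fun _ => v

theorem IsTameField.exists_isFlowOn [CompleteSpace E] (hv : IsTameField R f v) :
    ∃ φ, IsFlowOn R v φ := by
  choose! φ h0 hφ using fun x hx => hv.exists_isIntegralCurve (x := x) hx
  exact ⟨φ, h0, hφ⟩

namespace IsFlowOn

variable {φ : E → ℝ → E} {x : E}

theorem isIntegralCurveOn (hφ : IsFlowOn R v φ) (hx : x ∈ closedBall 0 R) (s : Set ℝ) :
    IsIntegralCurveOn (φ x) (fun _ => v) s :=
  (hφ.isIntegralCurve x hx).isIntegralCurveOn s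

theorem norm_apply (hφ : IsFlowOn R v φ) (hv : IsTameField R f v) (hx : x ∈ closedBall 0 R)
    (t : ℝ) : ‖φ x t‖ = ‖x‖ := by
  rw [hv.norm_eq ordConnected_univ (hφ.isIntegralCurveOn hx _) (mem_univ 0) (mem_univ t),
    hφ.apply_zero x hx]

theorem apply_mem_closedBall (hφ : IsFlowOn R v φ) (hv : IsTameField R f v) {r : ℝ} (hr : r ≤ R)
    (hx : x ∈ closedBall 0 r) (t : ℝ) : φ x t ∈ closedBall 0 r := by
  rw [mem_closedBall_zero_iff, hφ.norm_apply hv (closedBall_subset_closedBall hr hx)]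
  exact mem_closedBall_zero_iff.1 hx

theorem apply_apply_neg (hφ : IsFlowOn R v φ) (hv : IsTameField R f v) (hx : x ∈ closedBall 0 R)
    (t : ℝ) : φ (φ x t) (-t) = x := by
  have hmem := hφ.apply_mem_closedBall hv le_rfl hx t
  have hshift : IsIntegralCurve (fun u => φ x (u + t)) fun _ => v :=
    (hφ.isIntegralCurve x hx).comp_add t
  have heq := hv.eqOn_of_isIntegralCurveOn ordConnected_univ (hφ.isIntegralCurveOn hmem _)
    (hshift.isIntegralCurveOn _) (mem_univ 0) (by rwa [hφ.apply_zero _ hmem])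
    (by rw [hφ.apply_zero _ hmem, zero_add]) (mem_univ (-t))
  simpa only [neg_add_cancel, hφ.apply_zero x hx] using heq

theorem im_apply_mul_exp_eq_zero (hφ : IsFlowOn R v φ) (hv : IsTameField R f v)
    (hx : x ∈ closedBall 0 R) {w : ℂ} (hw : (f x * w).im = 0) (t : ℝ) :
    (f (φ x t) * (Complex.exp (-(t * Complex.I)) * w)).im = 0 :=
  hv.im_apply_mul_exp_eq_zero (hφ.isIntegralCurve x hx) (by rwa [hφ.apply_zero x hx])
    (by rwa [hφ.apply_zero x hx]) t

theorem tendstoUniformlyOn_of_apply_eq_zero (hφ : IsFlowOn R v φ) (hv : IsTameField R f v)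
    (hx : x ∈ closedBall 0 R) (hfx : f x = 0) {T : ℝ} (hT : 0 < T) :
    TendstoUniformlyOn φ (φ x) (𝓝[closedBall 0 R] x) (Icc (-T) T) := by
  refine Metric.tendstoUniformlyOn_iff.2 fun ε hε => ?_
  obtain ⟨c, hc, hsmall⟩ := hv.exists_norm_le (ε / 2 / T) (by positivity)
  have hnear : ∀ᶠ y in 𝓝 x, ‖f y‖ * Real.exp (2 * T) < c :=
    ((hv.differentiableAt x hx).continuousAt.norm.mul_const _).eventually_lt_const
      (by simpa [hfx] using hc)
  filter_upwards [mem_nhdsWithin_of_mem_nhds hnear,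
    mem_nhdsWithin_of_mem_nhds (ball_mem_nhds x (half_pos hε)), self_mem_nhdsWithin]
    with y hyc hyx hy t ht
  have h0 : (0 : ℝ) ∈ Icc (-T) T := by simp [hT.le]
  have hcurve := hφ.isIntegralCurveOn hy (Icc (-T) T)
  have hR : φ y 0 ∈ closedBall 0 R := by rwa [hφ.apply_zero y hy]
  have hmove : ‖φ y t - φ y 0‖ ≤ ε / 2 / T * ‖t - 0‖ :=
    (convex_Icc (-T) T).norm_image_sub_le_of_norm_hasDerivWithin_le hcurve (fun u hu =>
      hsmall _ (hφ.apply_mem_closedBall hv le_rfl hy u) <| by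
        refine (hv.norm_apply_le_mul_exp ordConnected_Icc hcurve h0 hR h0 hu).trans_lt
          (lt_of_le_of_lt ?_ hyc)
        rw [hφ.apply_zero y hy, sub_zero]
        gcongr
        exact abs_le.2 hu) h0 ht
  have hfix : φ x t = x := by
    rw [hv.eqOn_const ordConnected_univ (hφ.isIntegralCurveOn hx _) (mem_univ 0)
      (by rwa [hφ.apply_zero x hx]) (by rwa [hφ.apply_zero x hx]) (mem_univ t), hφ.apply_zero x hx]
  have hle : ε / 2 / T * ‖t‖ ≤ ε / 2 := by
    rw [div_mul_eq_mul_div, div_le_iff₀ hT]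
    gcongr
    exact abs_le.2 ht
  rw [hφ.apply_zero y hy, sub_zero] at hmove
  calc dist (φ x t) (φ y t) ≤ dist (φ y t) y + dist y x := by
        rw [hfix, dist_comm]
        exact dist_triangle _ _ _
    _ < ε := by
        rw [dist_eq_norm]
        linarith [mem_ball.1 hyx]

theorem tendstoUniformlyOn_of_apply_ne_zero (hφ : IsFlowOn R v φ) (hv : IsTameField R f v)
    (hx : x ∈ closedBall 0 R) (hfx : f x ≠ 0) (T : ℝ) :
    TendstoUniformlyOn φ (φ x) (𝓝[closedBall 0 R] x) (Icc (-T) T) := by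
  refine Metric.tendstoUniformlyOn_iff.2 fun ε hε => ?_
  have hfx' : 0 < ‖f x‖ := norm_pos_iff.2 hfx
  obtain ⟨K, hK⟩ := hv.exists_lipschitzOnWith (mul_pos (Real.exp_pos (-(2 * T))) (half_pos hfx'))
  have hfar : ∀ᶠ y in 𝓝 x, ‖f x‖ / 2 < ‖f y‖ :=
    (hv.differentiableAt x hx).continuousAt.norm.eventually_const_lt (half_lt_self hfx')
  have hclose : ∀ᶠ y in 𝓝 x, ‖x - y‖ * Real.exp (K * T) < ε :=
    (show ContinuousAt (fun y => ‖x - y‖ * Real.exp (K * T)) x by fun_prop).eventually_lt_const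
      (by simpa using hε)
  filter_upwards [mem_nhdsWithin_of_mem_nhds hfar, mem_nhdsWithin_of_mem_nhds hclose,
    self_mem_nhdsWithin] with y hyf hyx hy t ht
  have h0 : (0 : ℝ) ∈ Icc (-T) T := by simpa using neg_le_self_iff.1 (ht.1.trans ht.2)
  have hmaps {z : E} (hz : z ∈ closedBall 0 R) (hfz : ‖f x‖ / 2 ≤ ‖f z‖) :
      MapsTo (φ z) (Icc (-T) T)
        {y ∈ closedBall 0 R | Real.exp (-(2 * T)) * (‖f x‖ / 2) ≤ ‖f y‖} := fun u hu =>
    ⟨hφ.apply_mem_closedBall hv le_rfl hz u, by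
      have hexp := hv.exp_mul_norm_apply_le ordConnected_Icc (hφ.isIntegralCurveOn hz _) h0
        (by rwa [hφ.apply_zero z hz]) hu (by simpa using abs_le.2 hu)
      rw [hφ.apply_zero z hz] at hexp
      exact le_trans (by gcongr) hexp⟩
  have hdist := norm_sub_le_of_isIntegralCurveOn hK ordConnected_Icc (hφ.isIntegralCurveOn hx _)
    (hφ.isIntegralCurveOn hy _) (hmaps hx (half_le_self hfx'.le)) (hmaps hy hyf.le) h0 ht
  rw [hφ.apply_zero x hx, hφ.apply_zero y hy, sub_zero] at hdist
  rw [dist_eq_norm]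
  refine hdist.trans_lt (lt_of_le_of_lt ?_ hyx)
  gcongr
  exact abs_le.2 ht

theorem continuousOn (hφ : IsFlowOn R v φ) (hv : IsTameField R f v) :
    ContinuousOn (fun p : E × ℝ => φ p.1 p.2) (closedBall 0 R ×ˢ univ) := by
  rintro ⟨x, s⟩ ⟨hx, -⟩
  have hT : 0 < |s| + 1 := by positivity
  have hunif : TendstoUniformlyOn φ (φ x) (𝓝[closedBall 0 R] x) (Icc (-(|s| + 1)) (|s| + 1)) := by
    by_cases hfx : f x = 0
    · exact hφ.tendstoUniformlyOn_of_apply_eq_zero hv hx hfx hT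
    · exact hφ.tendstoUniformlyOn_of_apply_ne_zero hv hx hfx _
  have hfst : Tendsto Prod.fst (𝓝[closedBall (0 : E) R ×ˢ univ] (x, s)) (𝓝[closedBall 0 R] x) :=
    tendsto_fst.mono_left (nhdsWithin_prod_eq x s _ _).le
  refine tendsto_comp_of_locally_uniform_limit (hφ.isIntegralCurve x hx).continuous.continuousAt
    (continuous_snd.continuousAt.mono_left nhdsWithin_le_nhds) fun u hu =>
      ⟨_, Icc_mem_nhds ?_ ?_, hfst.eventually (hunif u hu)⟩
  · linarith [neg_abs_le s]
  · linarith [le_abs_self s]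

end IsFlowOn

end Flow

/-! ### The rotating vector field -/

section Field

theorem tendsto_principal_inf_comap_of_isCompact {X Y Z : Type*} [TopologicalSpace X]
    [TopologicalSpace Y] [T2Space Y] {K : Set X} (hK : IsCompact K) {f : X → Y}
    (hf : ContinuousOn f K) {y : Y} {g : X → Z} {l : Filter Z}
    (hg : ∀ p ∈ K, f p = y → Tendsto g (𝓝[K] p) l) : Tendsto g (𝓟 K ⊓ comap f (𝓝 y)) l := by
  refine (tendsto_iff_ultrafilter _ _ _).2 fun u hu => ?_
  have huK : (u : Filter X) ≤ 𝓟 K := hu.trans inf_le_left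
  obtain ⟨p, hp, hup⟩ := hK.ultrafilter_le_nhds u huK
  have huw : (u : Filter X) ≤ 𝓝[K] p := le_inf hup huK
  have hfp : f p = y := tendsto_nhds_unique ((hf p hp).mono_left huw)
    (tendsto_comap.mono_left (hu.trans inf_le_right))
  exact (hg p hp hfp).mono_left huw

open scoped ContDiff Manifold in
theorem exists_contDiff_hasCompactSupport_of_isCompact {E : Type*} [NormedAddCommGroup E]
    [NormedSpace ℝ E] [FiniteDimensional ℝ E] {K Ω : Set E} (hK : IsCompact K) (hΩ : IsOpen Ω)
    (hKΩ : K ⊆ Ω) :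
    ∃ c : E → ℝ, ContDiff ℝ ∞ c ∧ HasCompactSupport c ∧ tsupport c ⊆ Ω ∧
      (∀ x, c x ∈ Icc 0 1) ∧ ∀ x ∈ K, c x = 1 := by
  obtain ⟨L, hL, hKL, hLΩ⟩ := exists_compact_between hK hΩ hKΩ
  obtain ⟨c, hone, hzero, hc⟩ :=
    exists_contMDiffMap_one_nhds_of_subset_interior (n := ⊤) 𝓘(ℝ, E) hK.isClosed hKL
  have hsupp : tsupport c ⊆ L := closure_minimal
    (fun x hx => by_contra fun hxL => hx (hzero x hxL)) hL.isClosed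
  exact ⟨c, c.contMDiff.contDiff, hL.of_isClosed_subset isClosed_closure hsupp, hsupp.trans hLΩ, hc,
    fun x hx => hone.self_of_nhdsSet x hx⟩

theorem exists_lipschitzWith_smul_of_isCompact {E F : Type*} [NormedAddCommGroup E]
    [NormedSpace ℝ E] [FiniteDimensional ℝ E] [NormedAddCommGroup F] [NormedSpace ℝ F]
    {K Ω : Set E} (hK : IsCompact K) (hΩ : IsOpen Ω) (hKΩ : K ⊆ Ω) {v : E → F}
    (hv : ContDiffOn ℝ 1 v Ω) :
    ∃ c : E → ℝ, (∀ x, c x ∈ Icc 0 1) ∧ (∃ C, LipschitzWith C fun x => c x • v x) ∧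
      (∃ M, ∀ x, ‖c x • v x‖ ≤ M) ∧ ∀ x ∈ K, c x = 1 := by
  obtain ⟨c, hc, hcpt, hcΩ, hc01, hone⟩ :=
    exists_contDiff_hasCompactSupport_of_isCompact hK hΩ hKΩ
  have hsmooth : ContDiff ℝ 1 fun x => c x • v x := by
    refine contDiff_iff_contDiffAt.2 fun x => ?_
    by_cases hx : x ∈ tsupport c
    · exact (hc.of_le (by simp)).contDiffAt.smul (hv.contDiffAt (hΩ.mem_nhds (hcΩ hx)))
    · refine contDiffAt_const (c := 0) |>.congr_of_eventuallyEq ?_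
      filter_upwards [notMem_tsupport_iff_eventuallyEq.1 hx] with y hy
      simp [hy]
  have hsupp : HasCompactSupport fun x => c x • v x := hcpt.smul_right
  exact ⟨c, hc01, hsmooth.lipschitzWith_of_hasCompactSupport hsupp (by simp),
    hsmooth.continuous.bounded_above_of_compact_support hsupp, hone⟩

section TangentLift

variable {F : Type*} [NormedAddCommGroup F] [InnerProductSpace ℝ F] {x g : F}

/-- The component of `g` orthogonal to `x`, written so that its dependence on `x` is visibly
smooth. -/
noncomputable def tangentPart (x g : F) : F :=
  g - (inner ℝ g x / ‖x‖ ^ 2) • x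

/-- The smallest vector orthogonal to `x` whose inner product with `g` is `1`, or `0` if `g` is a
multiple of `x`. -/
noncomputable def tangentLift (x g : F) : F :=
  (‖tangentPart x g‖ ^ 2)⁻¹ • tangentPart x g

@[simp] theorem inner_tangentPart : inner ℝ x (tangentPart x g) = 0 := by
  rcases eq_or_ne x 0 with rfl | hx
  · rw [inner_zero_left]
  · have := norm_ne_zero_iff.2 hx
    rw [tangentPart, inner_sub_right, inner_smul_right, real_inner_self_eq_norm_sq,
      real_inner_comm]
    field_simp
    ring

theorem inner_self_tangentPart : inner ℝ g (tangentPart x g) = ‖tangentPart x g‖ ^ 2 := by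
  rw [← real_inner_self_eq_norm_sq]
  conv_rhs => rw [tangentPart, inner_sub_left, inner_smul_left, ← tangentPart, inner_tangentPart]
  simp

theorem norm_le_two_mul_norm_tangentPart (h : |inner ℝ g x| ≤ 1 / 2 * (‖x‖ * ‖g‖)) :
    ‖g‖ ≤ 2 * ‖tangentPart x g‖ := by
  have hproj : ‖(inner ℝ g x / ‖x‖ ^ 2) • x‖ ≤ 1 / 2 * ‖g‖ := by
    rcases eq_or_ne x 0 with rfl | hx
    · simp
    rw [norm_smul, norm_div, Real.norm_eq_abs, norm_pow, norm_norm, sq, div_mul_eq_mul_div,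
      mul_div_mul_right _ _ (norm_ne_zero_iff.2 hx), div_le_iff₀ (norm_pos_iff.2 hx)]
    linarith
  have htri := norm_sub_norm_le g ((inner ℝ g x / ‖x‖ ^ 2) • x)
  rw [← tangentPart] at htri
  linarith

@[simp] theorem inner_tangentLift : inner ℝ x (tangentLift x g) = 0 := by
  rw [tangentLift, inner_smul_right, inner_tangentPart, mul_zero]

theorem inner_self_tangentLift (h : tangentPart x g ≠ 0) : inner ℝ g (tangentLift x g) = 1 := by
  rw [tangentLift, inner_smul_right, inner_self_tangentPart,
    inv_mul_cancel₀ (pow_ne_zero 2 (norm_ne_zero_iff.2 h))]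

@[simp] theorem tangentLift_zero_right : tangentLift x 0 = 0 := by
  simp [tangentLift, tangentPart]

theorem norm_tangentLift_le (h : |inner ℝ g x| ≤ 1 / 2 * (‖x‖ * ‖g‖)) :
    ‖tangentLift x g‖ ≤ 2 / ‖g‖ := by
  rcases eq_or_ne g 0 with rfl | hg
  · simp
  have hle := norm_le_two_mul_norm_tangentPart h
  have hg' : 0 < ‖g‖ := norm_pos_iff.2 hg
  have hpos : 0 < ‖tangentPart x g‖ := by linarith
  rw [tangentLift, norm_smul, norm_inv, norm_pow, norm_norm, le_div_iff₀ hg']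
  calc (‖tangentPart x g‖ ^ 2)⁻¹ * ‖tangentPart x g‖ * ‖g‖ = ‖g‖ / ‖tangentPart x g‖ := by
        field_simp
    _ ≤ 2 := (div_le_iff₀ hpos).2 hle

theorem contDiffAt_tangentLift {G : F → F} {n : WithTop ℕ∞} (hG : ContDiffAt ℝ n G x) (hx : x ≠ 0)
    (h : tangentPart x (G x) ≠ 0) : ContDiffAt ℝ n (fun y => tangentLift y (G y)) x := by
  have hid : ContDiffAt ℝ n (fun y : F => y) x := contDiffAt_id
  have hpart : ContDiffAt ℝ n (fun y => tangentPart y (G y)) x :=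
    hG.sub (((hG.inner ℝ hid).div (hid.norm_sq ℝ)
      (pow_ne_zero 2 (norm_ne_zero_iff.2 hx))).smul hid)
  exact ((hpart.norm_sq ℝ).inv (pow_ne_zero 2 (norm_ne_zero_iff.2 h))).smul hpart

end TangentLift

attribute [local instance] InnerProductSpace.complexToReal

variable {E : Type*} [NormedAddCommGroup E] [InnerProductSpace ℂ E]

section GradArg

variable [CompleteSpace E] {f : E → ℂ} {x : E}

theorem isBoundedLinearMap_toDual_symm :
    IsBoundedLinearMap ℝ (InnerProductSpace.toDual ℂ E).symm :=
  IsLinearMap.with_bound ⟨map_add _, fun c φ => by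
    rw [← Complex.coe_smul, LinearIsometryEquiv.map_smulₛₗ, Complex.conj_ofReal,
      Complex.coe_smul]⟩ 1 fun φ => by simp

/-- The gradient, for the real inner product, of the multivalued argument of `f`. -/
noncomputable def gradArg (f : E → ℂ) (x : E) : E :=
  (Complex.I * (starRingEnd ℂ) (f x)⁻¹) • (InnerProductSpace.toDual ℂ E).symm (fderiv ℂ f x)

theorem inner_gradArg (w : E) : inner ℝ (gradArg f x) w = (fderiv ℂ f x w / f x).im := by
  rw [real_inner_eq_re_inner ℂ, gradArg, inner_smul_left, InnerProductSpace.toDual_symm_apply,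
    div_eq_inv_mul]
  simp [mul_assoc]

theorem norm_gradArg : ‖gradArg f x‖ = ‖fderiv ℂ f x‖ / ‖f x‖ := by
  rw [gradArg, norm_smul, LinearIsometryEquiv.norm_map, norm_mul, Complex.norm_I, one_mul,
    RCLike.norm_conj, norm_inv, inv_mul_eq_div]

theorem contDiffAt_gradArg (hf : AnalyticAt ℂ f x) (hfx : f x ≠ 0) :
    ContDiffAt ℝ 1 (gradArg f) x := by
  have hinv : ContDiffAt ℝ 1 (fun y => Complex.conjCLE (f y)⁻¹) x :=
    Complex.conjCLE.contDiff.contDiffAt.comp x ((hf.contDiffAt.restrict_scalars ℝ).inv hfx)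
  exact (contDiffAt_const.mul hinv).smul
    (isBoundedLinearMap_toDual_symm.contDiff.contDiffAt.comp x
      (hf.fderiv.contDiffAt.restrict_scalars ℝ))

end GradArg

/-- The field, tangent to spheres, along which the argument of `f` varies at unit speed; it is `0`
on the zero set of `f`. -/
noncomputable def rotField [CompleteSpace E] (f : E → ℂ) (x : E) : E :=
  tangentLift x (gradArg f x)

/-- `f` is nearly radial at `x`: the phase of `f` varies in the radial direction at most half as
fast as in the direction of its gradient. -/
def IsNearlyRadialAt (f : E → ℂ) (x : E) : Prop :=
  |(fderiv ℂ f x x / f x).im| ≤ 1 / 2 * (‖x‖ * (‖fderiv ℂ f x‖ / ‖f x‖))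

section RotField

variable [CompleteSpace E] {f : E → ℂ} {x : E}

theorem rotField_eq_zero (hfx : f x = 0) : rotField f x = 0 := by
  simp [rotField, gradArg, hfx]

namespace IsNearlyRadialAt

variable (hx : IsNearlyRadialAt f x)

include hx

theorem abs_inner_gradArg_le :
    |inner ℝ (gradArg f x) x| ≤ 1 / 2 * (‖x‖ * ‖gradArg f x‖) := by
  rw [inner_gradArg, norm_gradArg]
  exact hx

theorem norm_rotField_le : ‖rotField f x‖ ≤ 2 * (‖f x‖ / ‖fderiv ℂ f x‖) := by
  refine (norm_tangentLift_le hx.abs_inner_gradArg_le).trans_eq ?_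
  rw [norm_gradArg, div_div_eq_mul_div, mul_div_assoc]

theorem norm_fderiv_rotField_le : ‖fderiv ℂ f x (rotField f x)‖ ≤ 2 * ‖f x‖ := calc
  ‖fderiv ℂ f x (rotField f x)‖ ≤ ‖fderiv ℂ f x‖ * (2 * (‖f x‖ / ‖fderiv ℂ f x‖)) :=
    (fderiv ℂ f x).le_opNorm_of_le hx.norm_rotField_le
  _ = 2 * ‖f x‖ * (‖fderiv ℂ f x‖ / ‖fderiv ℂ f x‖) := by ring
  _ ≤ 2 * ‖f x‖ := mul_le_of_le_one_right (by positivity) (div_self_le_one _)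

theorem tangentPart_gradArg_ne_zero (hfx : f x ≠ 0) (hd : fderiv ℂ f x ≠ 0) :
    tangentPart x (gradArg f x) ≠ 0 := by
  have hpos : 0 < ‖gradArg f x‖ := by
    rw [norm_gradArg]
    exact div_pos (norm_pos_iff.2 hd) (norm_pos_iff.2 hfx)
  refine norm_pos_iff.1 (pos_of_mul_pos_right ?_ zero_le_two)
  exact hpos.trans_le (norm_le_two_mul_norm_tangentPart hx.abs_inner_gradArg_le)

theorem im_fderiv_rotField_div (hfx : f x ≠ 0) (hd : fderiv ℂ f x ≠ 0) :
    (fderiv ℂ f x (rotField f x) / f x).im = 1 := by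
  rw [← inner_gradArg, rotField, inner_self_tangentLift (hx.tangentPart_gradArg_ne_zero hfx hd)]

theorem contDiffAt_rotField (hf : AnalyticAt ℂ f x) (hx0 : x ≠ 0) (hfx : f x ≠ 0)
    (hd : fderiv ℂ f x ≠ 0) : ContDiffAt ℝ 1 (rotField f) x :=
  contDiffAt_tangentLift (contDiffAt_gradArg hf hfx) hx0 (hx.tangentPart_gradArg_ne_zero hfx hd)

end IsNearlyRadialAt

theorem tendsto_rotField_of_isLittleO_fderiv (hrad : ∀ᶠ y in 𝓝 x, IsNearlyRadialAt f y)
    (hf : f =o[𝓝 x] fderiv ℂ f) : Tendsto (rotField f) (𝓝 x) (𝓝 0) := by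
  refine squeeze_zero_norm' (hrad.mono fun y hy => hy.norm_rotField_le) ?_
  simpa using (hf.norm_norm.tendsto_div_nhds_zero).const_mul 2

theorem isTameField_rotField [FiniteDimensional ℂ E] {r R : ℝ} (hR : R < r)
    (hf : AnalyticOnNhd ℂ f (ball 0 r)) (hf0 : f 0 = 0)
    (hrad : ∀ x ∈ ball 0 r, IsNearlyRadialAt f x)
    (hd : ∀ x ∈ ball 0 r, f x ≠ 0 → fderiv ℂ f x ≠ 0)
    (hlit : ∀ x ∈ ball 0 r, f x = 0 → f =o[𝓝 x] fderiv ℂ f) : IsTameField R f (rotField f) := by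
  have hsub : closedBall (0 : E) R ⊆ ball 0 r := closedBall_subset_ball hR
  have : FiniteDimensional ℝ E := FiniteDimensional.complexToReal E
  have := FiniteDimensional.proper ℂ E
  have hcont : ContinuousOn f (closedBall 0 R) := hf.continuousOn.mono hsub
  have hreal (x) (hx : x ∈ closedBall (0 : E) R) (w : E) : fderiv ℝ f x w = fderiv ℂ f x w := by
    rw [(hf x (hsub hx)).differentiableAt.fderiv_restrictScalars ℝ,
      ContinuousLinearMap.coe_restrictScalars']
  refine ⟨⟨fun x => inner_tangentLift,
    fun x hx => (hf x (hsub hx)).differentiableAt.restrictScalars ℝ, fun x hx => ?_⟩,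
    fun x => rotField_eq_zero, fun x hx hfx => ?_, fun δ hδ => ?_, fun η hη => ?_⟩
  · rw [hreal x hx]
    exact (hrad x (hsub hx)).norm_fderiv_rotField_le
  · rw [hreal x hx]
    exact (hrad x (hsub hx)).im_fderiv_rotField_div hfx (hd x (hsub hx) hfx)
  · obtain ⟨c, hc, hlip, hbdd, hone⟩ := exists_lipschitzWith_smul_of_isCompact (v := rotField f)
      (K := {x ∈ closedBall 0 R | δ ≤ ‖f x‖}) (Ω := ball 0 r ∩ f ⁻¹' {0}ᶜ)
      ((isCompact_closedBall 0 R).of_isClosed_subset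
        (hcont.norm.preimage_isClosed_of_isClosed isClosed_closedBall isClosed_Ici)
        (sep_subset _ _))
      (hf.continuousOn.isOpen_inter_preimage isOpen_ball isOpen_compl_singleton)
      (fun x hx => ⟨hsub hx.1, norm_pos_iff.1 (hδ.trans_le hx.2)⟩)
      fun x hx => ((hrad x hx.1).contDiffAt_rotField (hf x hx.1)
        (fun h0 => hx.2 (h0 ▸ hf0)) hx.2 (hd x hx.1 hx.2)).contDiffWithinAt
    exact ⟨c, hc, hlip, hbdd, fun x hx hfx => hone x ⟨hx, hfx⟩⟩
  · have htend := tendsto_principal_inf_comap_of_isCompact (isCompact_closedBall 0 R) hcont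
      (y := 0) (g := rotField f) fun x hx hfx =>
        (tendsto_rotField_of_isLittleO_fderiv
          (eventually_of_mem (isOpen_ball.mem_nhds (hsub hx)) hrad)
          (hlit x (hsub hx) hfx)).mono_left nhdsWithin_le_nhds
    obtain ⟨c, hc, hsmall⟩ := ((nhds_basis_ball.comap f).principal_inf _).eventually_iff.1
      (htend.norm.eventually_le_const (by simpa using hη))
    exact ⟨c, hc, fun x hx hfx => hsmall ⟨hx, by simpa using hfx⟩⟩

end RotField

end Field

/-! ### The real projective line and the trivialization -/

section Line

/-- The real line in `ℂ` spanned by `exp (θ * I)`. -/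
noncomputable def angleLine (θ : ℝ) : ℙ ℝ ℂ :=
  Projectivization.mk ℝ (Complex.exp (θ * Complex.I)) (Complex.exp_ne_zero _)

theorem mem_submodule_angleLine_iff_exists {θ : ℝ} {z : ℂ} :
    z ∈ (angleLine θ).submodule ↔ ∃ t : ℝ, z = t * Complex.exp (θ * Complex.I) := by
  simp only [angleLine, Projectivization.submodule_mk, Submodule.mem_span_singleton,
    Complex.real_smul, eq_comm]

theorem mem_submodule_angleLine {θ : ℝ} {z : ℂ} :
    z ∈ (angleLine θ).submodule ↔ (z * Complex.exp (-(θ * Complex.I))).im = 0 := by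
  rw [mem_submodule_angleLine_iff_exists, Complex.exp_neg, ← div_eq_mul_inv]
  constructor
  · rintro ⟨t, rfl⟩
    rw [mul_div_cancel_right₀ _ (Complex.exp_ne_zero _), Complex.ofReal_im]
  · intro him
    refine ⟨(z / Complex.exp (θ * Complex.I)).re, ?_⟩
    rw [Complex.conj_eq_iff_re.1 (Complex.conj_eq_iff_im.2 him),
      div_mul_cancel₀ _ (Complex.exp_ne_zero _)]

/-- The square of the phase of the nonzero vectors of a line. -/
noncomputable def lineSqPhase : ℙ ℝ ℂ → ℂ :=
  Projectivization.lift (fun v : {v : ℂ // v ≠ 0} => v.1 / (starRingEnd ℂ) v.1)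
    fun v w t h => by
      have ht : (t : ℂ) ≠ 0 := fun ht => v.2 (by simp [h, Complex.ofReal_eq_zero.1 ht])
      rw [h, Complex.real_smul, map_mul, Complex.conj_ofReal, mul_div_mul_left _ _ ht]

@[simp] theorem lineSqPhase_mk {v : ℂ} (hv : v ≠ 0) :
    lineSqPhase (Projectivization.mk ℝ v hv) = v / (starRingEnd ℂ) v :=
  rfl

theorem lineSqPhase_angleLine (θ : ℝ) :
    lineSqPhase (angleLine θ) = Complex.exp ((2 * θ : ℝ) * Complex.I) := by
  rw [angleLine, lineSqPhase_mk, ← Complex.exp_conj, ← Complex.exp_sub]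
  congr 1
  simp
  ring

theorem continuous_lineSqPhase : Continuous lineSqPhase :=
  Continuous.quotient_lift (Continuous.div (by fun_prop) (by fun_prop)
    fun v => (map_ne_zero _).2 v.2) _

theorem norm_lineSqPhase (ℓ : ℙ ℝ ℂ) : ‖lineSqPhase ℓ‖ = 1 := by
  induction ℓ with
  | h v hv => rw [lineSqPhase_mk, norm_div, RCLike.norm_conj, div_self (norm_ne_zero_iff.2 hv)]

theorem injective_lineSqPhase : Function.Injective lineSqPhase := by
  intro ℓ ℓ' h
  induction ℓ with | h v hv => ?_
  induction ℓ' with | h w hw => ?_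
  have hcw : (starRingEnd ℂ) w ≠ 0 := (map_ne_zero _).2 hw
  rw [lineSqPhase_mk, lineSqPhase_mk, div_eq_div_iff ((map_ne_zero _).2 hv) hcw] at h
  have hreal : (starRingEnd ℂ) (v / w) = v / w := by
    rw [map_div₀, div_eq_div_iff hcw hw, h, mul_comm]
  obtain ⟨a, ha⟩ := Complex.conj_eq_iff_real.1 hreal
  refine (Projectivization.mk_eq_mk_iff' ℝ _ _ hv hw).2 ⟨a, ?_⟩
  rw [Complex.real_smul, ← ha, div_mul_cancel₀ _ hw]

theorem exists_continuousOn_angle (b : ℙ ℝ ℂ) :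
    ∃ (W : Set (ℙ ℝ ℂ)) (τ : ℙ ℝ ℂ → ℝ), IsOpen W ∧ b ∈ W ∧ ContinuousOn τ W ∧
      ∀ ℓ, angleLine (τ ℓ) = ℓ := by
  have hb : lineSqPhase b ≠ 0 := norm_ne_zero_iff.1 (by simp [norm_lineSqPhase])
  have hcont : Continuous fun ℓ => lineSqPhase ℓ / lineSqPhase b :=
    continuous_lineSqPhase.div_const _
  have harg : ContinuousOn (fun ℓ => (lineSqPhase ℓ / lineSqPhase b).arg)
      ((fun ℓ => lineSqPhase ℓ / lineSqPhase b) ⁻¹' Complex.slitPlane) :=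
    ContinuousOn.comp (fun z hz => (Complex.continuousAt_arg hz).continuousWithinAt)
      hcont.continuousOn fun _ hℓ => hℓ
  refine ⟨(fun ℓ => lineSqPhase ℓ / lineSqPhase b) ⁻¹' Complex.slitPlane,
    fun ℓ => ((lineSqPhase b).arg + (lineSqPhase ℓ / lineSqPhase b).arg) / 2,
    Complex.isOpen_slitPlane.preimage hcont, by simp [hb], ?_, fun ℓ => injective_lineSqPhase ?_⟩
  · exact ContinuousOn.div_const (continuousOn_const.add harg) 2
  · have hexp (z : ℂ) (hz : ‖z‖ = 1) : Complex.exp (z.arg * Complex.I) = z := by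
      simpa [hz] using Complex.norm_mul_exp_arg_mul_I z
    rw [lineSqPhase_angleLine, mul_div_cancel₀ _ two_ne_zero, Complex.ofReal_add, add_mul,
      Complex.exp_add, hexp _ (norm_lineSqPhase b), hexp _ (by simp [norm_lineSqPhase]),
      mul_div_cancel₀ _ hb]

end Line

section BlowUp

/-- The part over `s` of the real blow-up of the zero set of `f`. -/
def realBlowUp {X : Type*} (f : X → ℂ) (s : Set X) : Set (X × ℙ ℝ ℂ) :=
  {q | q.1 ∈ s ∧ f q.1 ∈ q.2.submodule}

variable {X : Type} {f : X → ℂ} {s : Set X}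

theorem image_val_preimage_angleLine {U : Set X} (hs : s ⊆ U) (θ : ℝ) :
    Subtype.val '' ((fun q : realBlowUp f s => q.1.2) ⁻¹' {angleLine θ}) =
      (Xset U f θ ∩ s) ×ˢ {angleLine θ} := by
  ext ⟨x, ℓ⟩
  simp only [mem_image, mem_preimage, mem_singleton_iff, mem_prod, mem_inter_iff, Xset,
    mem_ofPred_eq, ← mem_submodule_angleLine_iff_exists]
  constructor
  · rintro ⟨⟨q, hq, hfq⟩, hℓ, rfl⟩
    obtain rfl : ℓ = angleLine θ := hℓ
    exact ⟨⟨⟨hs hq, hfq⟩, hq⟩, rfl⟩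
  · rintro ⟨⟨⟨-, hfx⟩, hx⟩, rfl⟩
    exact ⟨⟨(x, angleLine θ), hx, hfx⟩, rfl, rfl⟩

/-- The fibre over `ℓ` is carried to the fibre over the real axis by running `φ` for minus the
angle of `ℓ`. -/
theorem isLocTrivFib_realBlowUp [TopologicalSpace X] {φ : X → ℝ → X}
    (hmaps : ∀ x ∈ s, ∀ t, φ x t ∈ s) (hinv : ∀ x ∈ s, ∀ t, φ (φ x t) (-t) = x)
    (hrot : ∀ x ∈ s, ∀ θ, f x ∈ (angleLine θ).submodule →
      ∀ t, f (φ x t) ∈ (angleLine (θ + t)).submodule)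
    (hφ : ContinuousOn (fun p : X × ℝ => φ p.1 p.2) (s ×ˢ univ)) :
    IsLocTrivFib fun q : realBlowUp f s => q.1.2 := by
  refine ⟨{x ∈ s | f x ∈ (angleLine 0).submodule}, inferInstance, by fun_prop, fun b => ?_⟩
  obtain ⟨W, τ, hW, hbW, hτ, hangle⟩ := exists_continuousOn_angle b
  have hfwd {x : X} {ℓ : ℙ ℝ ℂ} (hx : x ∈ s) (hfx : f x ∈ ℓ.submodule) :
      f (φ x (-τ ℓ)) ∈ (angleLine 0).submodule := by
    simpa using hrot x hx (τ ℓ) (by rwa [hangle]) (-τ ℓ)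
  have hbwd {x : X} (ℓ : ℙ ℝ ℂ) (hx : x ∈ s) (hfx : f x ∈ (angleLine 0).submodule) :
      f (φ x (τ ℓ)) ∈ ℓ.submodule := by
    simpa [hangle] using hrot x hx 0 hfx (τ ℓ)
  refine ⟨W, hW, hbW,
    { toFun z := (⟨z.1.1.2, z.2⟩, ⟨φ z.1.1.1 (-τ z.1.1.2), hmaps _ z.1.2.1 _,
        hfwd z.1.2.1 z.1.2.2⟩)
      invFun y := ⟨⟨(φ y.2.1 (τ y.1), y.1), hmaps _ y.2.2.1 _, hbwd y.1 y.2.2.1 y.2.2.2⟩, y.1.2⟩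
      left_inv := ?_
      right_inv := ?_
      continuous_toFun := ?_
      continuous_invFun := ?_ }, fun z => rfl⟩
  · rintro ⟨⟨⟨x, ℓ⟩, hx, -⟩, -⟩
    exact Subtype.ext (Subtype.ext (Prod.ext (by simpa using hinv x hx (-τ ℓ)) rfl))
  · rintro ⟨⟨ℓ, -⟩, ⟨x, hx, -⟩⟩
    simpa using hinv x hx (τ ℓ)
  · refine .prodMk (by fun_prop) (.subtype_mk (hφ.comp_continuous (.prodMk (by fun_prop)
      (.neg (hτ.comp_continuous (by fun_prop) fun z => z.2))) fun z => ⟨z.1.2.1, trivial⟩) _)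
  · refine .subtype_mk (.subtype_mk (.prodMk (hφ.comp_continuous (.prodMk (by fun_prop)
      (hτ.comp_continuous (by fun_prop) fun y => y.1.2)) fun y => ⟨y.2.2.1, trivial⟩)
      (by fun_prop)) _) _

end BlowUp

section TameField

theorem IsFlowOn.apply_mem_angleLine {E : Type*} [NormedAddCommGroup E] [InnerProductSpace ℝ E]
    {R : ℝ} {f : E → ℂ} {v : E → E} {φ : E → ℝ → E} (hφ : IsFlowOn R v φ)
    (hv : IsTameField R f v) {x : E} (hx : x ∈ closedBall 0 R) {θ : ℝ}
    (hfx : f x ∈ (angleLine θ).submodule) (t : ℝ) :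
    f (φ x t) ∈ (angleLine (θ + t)).submodule := by
  have him := hφ.im_apply_mul_exp_eq_zero hv hx (mem_submodule_angleLine.1 hfx) t
  rw [← Complex.exp_add] at him
  rw [mem_submodule_angleLine]
  convert him using 4
  push_cast
  ring

theorem IsTameField.isLocTrivFib_realBlowUp {E : Type} [NormedAddCommGroup E]
    [InnerProductSpace ℝ E] [CompleteSpace E] {R r : ℝ} {f : E → ℂ} {v : E → E}
    (hv : IsTameField R f v) (hr : r ≤ R) :
    IsLocTrivFib fun q : realBlowUp f (closedBall 0 r) => q.1.2 := by
  obtain ⟨φ, hφ⟩ := hv.exists_isFlowOn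
  have hsub : closedBall (0 : E) r ⊆ closedBall 0 R := closedBall_subset_closedBall hr
  exact _root_.isLocTrivFib_realBlowUp (fun x hx t => hφ.apply_mem_closedBall hv hr hx t)
    (fun x hx t => hφ.apply_apply_neg hv (hsub hx) t)
    (fun x hx θ hfx t => hφ.apply_mem_angleLine hv (hsub hx) hfx t)
    ((hφ.continuousOn hv).mono (prod_mono_left hsub))

attribute [local instance] InnerProductSpace.complexToReal

variable {E : Type*} [NormedAddCommGroup E] [InnerProductSpace ℂ E] [FiniteDimensional ℂ E]
  [CompleteSpace E] {f : E → ℂ}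

theorem exists_isTameField_rotField (hf : AnalyticAt ℂ f 0) (hf0 : f 0 = 0)
    (hfz : ¬ f =ᶠ[𝓝 0] 0) {U : Set E} (hU : U ∈ 𝓝 0) :
    ∃ R > 0, closedBall 0 R ⊆ U ∧ IsTameField R f (rotField f) := by
  have hrad : ∀ᶠ x in 𝓝 0, IsNearlyRadialAt f x := by
    filter_upwards [(isLittleO_im_fderiv_div hf hf0 hfz).def (half_pos one_pos)] with x hx
    simpa [IsNearlyRadialAt, abs_mul, abs_div] using hx
  have hbound := (isLittleO_fderiv_of_apply_eq_zero hf hf0 hfz).def one_pos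
  obtain ⟨r, hr, hball⟩ := Metric.eventually_nhds_iff_ball.1
    (hf.eventually_analyticAt.and (hrad.and (hbound.and hU)))
  have han : AnalyticOnNhd ℂ f (ball 0 r) := fun x hx => (hball x hx).1
  refine ⟨r / 2, half_pos hr,
    fun x hx => (hball x (closedBall_subset_ball (half_lt_self hr) hx)).2.2.2,
    isTameField_rotField (half_lt_self hr) han hf0 (fun x hx => (hball x hx).2.1)
      (fun x hx hfx hd => hfx ?_) fun x hx hfx =>
        isLittleO_fderiv_of_apply_eq_zero (han x hx) hfx fun hz => hfz ?_⟩
  · simpa [hd] using (hball x hx).2.2.1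
  · exact eventually_of_mem (ball_mem_nhds 0 hr)
      (han.eqOn_zero_of_preconnected_of_eventuallyEq_zero (convex_ball 0 r).isPreconnected hx hz)

end TameField

theorem stmt_7_general {E : Type} [NormedAddCommGroup E] [InnerProductSpace ℂ E]
    [FiniteDimensional ℂ E] {U : Set E} (hU : IsOpen U) (h0U : 0 ∈ U) {f : E → ℂ}
    (hf : DifferentiableOn ℂ f U) (hf0 : f 0 = 0)
    (hfnz : ∀ W ∈ 𝓝 (0 : E), ∃ x ∈ W ∩ U, f x ≠ 0) :
    ∃ ε₀ > (0 : ℝ), closedBall (0 : E) ε₀ ⊆ U ∧ ∀ ε : ℝ, 0 < ε → ε ≤ ε₀ →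
      ∃ Ψ : realBlowUp f (closedBall 0 ε) → ℙ ℝ ℂ, (∀ q, Ψ q = q.1.2) ∧ IsLocTrivFib Ψ ∧
        ∀ θ : ℝ, Subtype.val '' (Ψ ⁻¹' {angleLine θ}) =
          (Xset U f θ ∩ closedBall 0 ε) ×ˢ {angleLine θ} := by
  let _ := InnerProductSpace.complexToReal (G := E)
  have := FiniteDimensional.complete ℂ E
  have hUn : U ∈ 𝓝 0 := hU.mem_nhds h0U
  have han : AnalyticAt ℂ f 0 :=
    analyticAt_of_eventually_differentiableAt (hf.eventually_differentiableAt hUn)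
  have hfz : ¬ f =ᶠ[𝓝 0] 0 := fun hz =>
    let ⟨_, hx, hfx⟩ := hfnz _ hz
    hfx hx.1
  obtain ⟨ε₀, hε₀, hsub, hv⟩ := exists_isTameField_rotField han hf0 hfz hUn
  exact ⟨ε₀, hε₀, hsub, fun ε _ hε => ⟨fun q => q.1.2, fun _ => rfl,
    hv.isLocTrivFib_realBlowUp hε,
    image_val_preimage_angleLine ((closedBall_subset_closedBall hε).trans hsub)⟩⟩

theorem stmt_7 (n : ℕ) (hn : 1 ≤ n)
    (U : Set (EuclideanSpace ℂ (Fin n))) (hU : IsOpen U)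
    (h0U : (0 : EuclideanSpace ℂ (Fin n)) ∈ U)
    (f : EuclideanSpace ℂ (Fin n) → ℂ) (hf : DifferentiableOn ℂ f U) (hf0 : f 0 = 0)
    (hfnz : ∀ W ∈ nhds (0 : EuclideanSpace ℂ (Fin n)), ∃ x ∈ W ∩ U, f x ≠ 0) :
    ∃ ε₀ > (0 : ℝ), Metric.closedBall (0 : EuclideanSpace ℂ (Fin n)) ε₀ ⊆ U ∧
      ∀ ε : ℝ, 0 < ε → ε ≤ ε₀ →
      -- the real blow-up X̃_ε ⊆ B̄(0,ε) × ℝP¹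
      ∃ Ψ : ({q : EuclideanSpace ℂ (Fin n) × ℙ ℝ ℂ |
              q.1 ∈ Metric.closedBall (0 : EuclideanSpace ℂ (Fin n)) ε ∧
              f q.1 ∈ (q.2).submodule} : Set _) → ℙ ℝ ℂ,
        -- Ψ̃ is the second projection
        (∀ q, Ψ q = q.1.2) ∧
        -- Ψ̃ is a locally trivial fibration
        IsLocTrivFib Ψ ∧
        -- its fibre over the line L_θ is (X_θ ∩ B̄(0,ε)) × {L_θ}
        (∀ θ : ℝ,
          Subtype.val ''
              (Ψ ⁻¹' {Projectivization.mk ℝ (Complex.exp (θ * Complex.I)) (Complex.exp_ne_zero _)})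
            = (Xset U f θ ∩ Metric.closedBall (0 : EuclideanSpace ℂ (Fin n)) ε) ×ˢ
              ({Projectivization.mk ℝ (Complex.exp (θ * Complex.I)) (Complex.exp_ne_zero _)} :
                Set (ℙ ℝ ℂ))) :=
  stmt_7_general hU h0U hf hf0 hfnz
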